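/- For every ε₀ with 0 < ε₀ < 1 and every real c ≥ 2 there exists a constant A > 0 such that for every integer N ≥ 3, writing r = ln N, there is a positive integer q₀ with q₀ ≥ r^(2−ε₀) such that for all integers q, l with 0 < q < r^c, 0 < l < q, gcd(q, l) = 1, and q₀ ∤ q, one has |π(N; q, l) − (1/φ(q)) · ∫₂^N dt / ln t| ≤ A · N · r^(−c) / (φ(q) · r). -/

import Mathlib

open Finset

/-- `primesPiMod N q l` is the number of primes `p ≤ N` with `p ≡ l (mod q)`. -/
def primesPiMod (N q l : ℕ) : ℕ :=
  ((Finset.range (N + 1)).filter (fun p => p.Prime ∧ p % q = l % q)).card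

namespace PageProof
open Complex Filter Topology MeasureTheory

/-- Partial sums of a periodic function with vanishing sum over a period are bounded. -/
lemma norm_sum_range_periodic {f : ℕ → ℂ} {q : ℕ} {B : ℝ} (hq : 0 < q)
    (hper : ∀ n, f (q + n) = f n) (hsum : ∑ i ∈ range q, f i = 0) (hB : ∀ n, ‖f n‖ ≤ B) (n : ℕ) :
    ‖∑ i ∈ range n, f i‖ ≤ B * q := by
  have hB0 : 0 ≤ B := (norm_nonneg _).trans (hB 0)
  induction n using Nat.strong_induction_on with
  | _ n ih =>
    rcases lt_or_ge n q with h | h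
    · calc ‖∑ i ∈ range n, f i‖ ≤ ∑ i ∈ range n, ‖f i‖ := norm_sum_le _ _
        _ ≤ ∑ i ∈ range n, B := sum_le_sum fun i _ => hB i
        _ = n * B := by simp
        _ ≤ B * q := by
          rw [mul_comm]; gcongr
    · obtain ⟨m, rfl⟩ := Nat.exists_eq_add_of_le h
      rw [sum_range_add, hsum, zero_add]
      simp_rw [hper]
      exact ih m (by omega)

variable {q : ℕ} [NeZero q]
set_option linter.unusedSectionVars false

/-- mean value of the character -/
noncomputable def kap (χ : DirichletCharacter ℂ q) : ℝ :=
  open Classical in if χ = 1 then (Nat.totient q : ℝ) / q else 0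

lemma kap_nonneg (χ : DirichletCharacter ℂ q) : 0 ≤ kap χ := by
  unfold kap; split_ifs <;> positivity

lemma kap_le_one (χ : DirichletCharacter ℂ q) : kap χ ≤ 1 := by
  unfold kap; split_ifs
  · apply div_le_one_of_le₀ _ (by positivity)
    exact_mod_cast Nat.totient_le q
  · norm_num

lemma sum_range_char (χ : DirichletCharacter ℂ q) :
    ∑ i ∈ range q, (χ (i : ZMod q) - (kap χ : ℂ)) = 0 := by
  have hq : (q : ℂ) ≠ 0 := by exact_mod_cast NeZero.ne q
  have h1 : ∑ i ∈ range q, χ (i : ZMod q) = ∑ a : ZMod q, χ a := by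
    symm
    apply Finset.sum_nbij' (fun a : ZMod q => a.val) (fun i : ℕ => (i : ZMod q))
    · intro a _; simpa using ZMod.val_lt a
    · intro i _; simp
    · intro a _; simp
    · intro i hi; simpa using ZMod.val_cast_of_lt (by simpa using hi)
    · intro a _; simp
  rw [sum_sub_distrib, h1, sum_const, card_range, nsmul_eq_mul]
  unfold kap
  split_ifs with h
  · subst h
    classical
    rw [MulChar.sum_one_eq_card_units, ZMod.card_units_eq_totient]
    push_cast
    field_simp; simp
  · rw [MulChar.sum_eq_zero_of_ne_one h]; simp

lemma norm_char_sub_kap (χ : DirichletCharacter ℂ q) (a : ZMod q) : ‖χ a - (kap χ : ℂ)‖ ≤ 2 := by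
  calc _ ≤ ‖χ a‖ + ‖(kap χ : ℂ)‖ := norm_sub_le _ _
    _ ≤ 1 + 1 := by
      gcongr
      · exact χ.norm_le_one a
      · rw [Complex.norm_real, Real.norm_of_nonneg (kap_nonneg χ)]; exact kap_le_one χ
    _ = 2 := by norm_num

/-- summatory function of the character -/
noncomputable def sumChar (χ : DirichletCharacter ℂ q) (u : ℝ) : ℂ :=
  ∑ k ∈ Finset.Icc 1 ⌊u⌋₊, χ (k : ZMod q)

/-- truncated remainder -/
noncomputable def gfun (χ : DirichletCharacter ℂ q) : ℝ → ℂ :=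
  Set.indicator (Set.Ioi 1) (fun u => sumChar χ u - (kap χ : ℂ) * u)

lemma norm_sumChar_sub_le_left (χ : DirichletCharacter ℂ q) {u : ℝ} (hu : 0 ≤ u) :
    ‖sumChar χ u - (kap χ : ℂ) * u‖ ≤ 3 * u := by
  have h1 : ‖sumChar χ u‖ ≤ u := by
    calc _ ≤ ∑ k ∈ Finset.Icc 1 ⌊u⌋₊, ‖χ (k : ZMod q)‖ := norm_sum_le _ _
      _ ≤ ∑ k ∈ Finset.Icc 1 ⌊u⌋₊, 1 := sum_le_sum fun k _ => χ.norm_le_one k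
      _ = ⌊u⌋₊ := by simp
      _ ≤ u := Nat.floor_le hu
  have h2 : ‖(kap χ : ℂ) * u‖ ≤ u := by
    rw [norm_mul, Complex.norm_real, Complex.norm_real, Real.norm_of_nonneg (kap_nonneg χ),
      Real.norm_of_nonneg hu]
    nlinarith [kap_le_one χ]
  linarith [norm_sub_le (sumChar χ u) ((kap χ : ℂ) * u)]

lemma norm_sumChar_sub_le_right (χ : DirichletCharacter ℂ q) {u : ℝ} (hu : 0 ≤ u) :
    ‖sumChar χ u - (kap χ : ℂ) * u‖ ≤ 5 * q := by
  have hq : 0 < q := NeZero.pos q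
  have hq1 : (1 : ℝ) ≤ q := by exact_mod_cast hq
  set n := ⌊u⌋₊
  have e1 : sumChar χ u = ∑ i ∈ range (n + 1), χ (i : ZMod q) - χ (0 : ZMod q) := by
    unfold sumChar
    rw [Finset.range_eq_Ico, Finset.sum_eq_sum_Ico_succ_bot (by omega)]
    have : Finset.Icc 1 n = Finset.Ico (0 + 1) (n + 1) := by ext; simp
    rw [this]; simp
  have e2 : sumChar χ u - (kap χ : ℂ) * u = ∑ i ∈ range (n + 1), (χ (i : ZMod q) - (kap χ : ℂ))
      - (χ (0 : ZMod q) - kap χ) - (kap χ : ℂ) * ((u : ℂ) - n) := by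
    rw [e1, sum_sub_distrib]; simp; ring
  have b1 := norm_sum_range_periodic (f := fun i : ℕ => χ (i : ZMod q) - (kap χ : ℂ)) hq
    (by intro n; simp) (sum_range_char χ) (fun n => norm_char_sub_kap χ n) (n + 1)
  have b2 := norm_char_sub_kap χ 0
  have b3 : ‖(kap χ : ℂ) * ((u : ℂ) - n)‖ ≤ 1 := by
    have : ((u : ℂ) - n) = ((u - n : ℝ) : ℂ) := by push_cast; rfl
    rw [norm_mul, this, Complex.norm_real, Complex.norm_real, Real.norm_of_nonneg (kap_nonneg χ)]
    have h1 : (n : ℝ) ≤ u := Nat.floor_le hu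
    have h2 : u < n + 1 := Nat.lt_floor_add_one u
    rw [Real.norm_of_nonneg (by linarith)]
    nlinarith [kap_le_one χ, kap_nonneg χ]
  rw [e2]
  calc _ ≤ ‖∑ i ∈ range (n + 1), (χ (i : ZMod q) - (kap χ : ℂ))‖
      + ‖χ (0 : ZMod q) - kap χ‖ + ‖(kap χ : ℂ) * ((u : ℂ) - n)‖ :=
        (norm_sub_le _ _).trans (by gcongr; exact norm_sub_le _ _)
    _ ≤ 2 * q + 2 + 1 := by gcongr
    _ ≤ 5 * q := by linarith

lemma norm_gfun_le (χ : DirichletCharacter ℂ q) {a : ℝ} (ha0 : 0 ≤ a) (ha1 : a ≤ 1) {u : ℝ}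
    (hu : 0 < u) : ‖gfun χ u‖ ≤ 5 * (q : ℝ) ^ a * u ^ (1 - a) := by
  have hq : 0 < q := NeZero.pos q
  have hq0 : (0 : ℝ) < q := by exact_mod_cast hq
  unfold gfun
  by_cases h : u ∈ Set.Ioi 1
  · rw [Set.indicator_of_mem h]
    set X := ‖sumChar χ u - (kap χ : ℂ) * u‖
    have h1 : X ≤ 5 * u := (norm_sumChar_sub_le_left χ hu.le).trans (by linarith)
    have h2 : X ≤ 5 * q := norm_sumChar_sub_le_right χ hu.le
    have hX : 0 ≤ X := norm_nonneg _
    calc X = X ^ a * X ^ (1 - a) := by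
          rw [← Real.rpow_add_of_nonneg hX ha0 (by linarith)]; simp
      _ ≤ (5 * q) ^ a * (5 * u) ^ (1 - a) := by
          gcongr
      _ = 5 * (q : ℝ) ^ a * u ^ (1 - a) := by
          rw [Real.mul_rpow (by norm_num) hq0.le, Real.mul_rpow (by norm_num) hu.le]
          have : (5 : ℝ) ^ a * 5 ^ (1 - a) = 5 := by
            rw [← Real.rpow_add (by norm_num)]; simp
          linear_combination (q : ℝ) ^ a * u ^ (1 - a) * this
  · rw [Set.indicator_of_notMem h]; simp; positivity

lemma measurable_sumChar (χ : DirichletCharacter ℂ q) : Measurable (sumChar χ) := by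
  have : sumChar χ = (fun n : ℕ => ∑ k ∈ Finset.Icc 1 n, χ (k : ZMod q)) ∘ Nat.floor := rfl
  rw [this]
  exact (measurable_from_nat).comp Nat.measurable_floor

lemma measurable_gfun (χ : DirichletCharacter ℂ q) : Measurable (gfun χ) := by
  unfold gfun
  exact ((measurable_sumChar χ).sub (by fun_prop)).indicator measurableSet_Ioi

/-- the regular part of the `L`-function -/
noncomputable def Kfun (χ : DirichletCharacter ℂ q) (s : ℂ) : ℂ := s * mellin (gfun χ) (-s)

lemma norm_gfun_le_const (χ : DirichletCharacter ℂ q) {u : ℝ} (hu : 0 < u) :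
    ‖gfun χ u‖ ≤ 5 * q := by
  simpa using norm_gfun_le χ zero_le_one le_rfl hu

lemma Kfun_differentiableAt (χ : DirichletCharacter ℂ q) {s : ℂ} (hs : 0 < s.re) :
    DifferentiableAt ℂ (Kfun χ) s := by
  unfold Kfun
  refine differentiableAt_id.mul ?_
  have : DifferentiableAt ℂ (mellin (gfun χ)) (-s) := by
    apply mellin_differentiableAt_of_isBigO_rpow (a := 0) (b := -s.re - 1)
    · intro x hx
      refine ⟨Set.Ioo 0 (x + 1), ?_, ?_⟩
      · exact mem_nhdsWithin_of_mem_nhds (Ioo_mem_nhds hx (by linarith))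
      · apply Measure.integrableOn_of_bounded (M := 5 * q) (by simp)
          (measurable_gfun χ).aestronglyMeasurable
        filter_upwards [ae_restrict_mem measurableSet_Ioo] with u hu
        exact norm_gfun_le_const χ hu.1
    · apply Asymptotics.IsBigO.of_bound (5 * q)
      filter_upwards [eventually_gt_atTop 0] with u hu
      simpa using norm_gfun_le_const χ hu
    · simpa using hs
    · apply Asymptotics.IsBigO.of_bound 1
      have : Set.Ioo (0 : ℝ) 1 ∈ 𝓝[>] (0 : ℝ) := Ioo_mem_nhdsGT (by norm_num)
      filter_upwards [this] with u hu
      have : gfun χ u = 0 := by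
        unfold gfun
        rw [Set.indicator_of_notMem]
        simpa using hu.2.le
      rw [this]; simp
    · simp
  exact this.comp s differentiableAt_id.neg

lemma mellin_gfun (χ : DirichletCharacter ℂ q) (s : ℂ) :
    mellin (gfun χ) (-s) = ∫ t in Set.Ioi (1 : ℝ), (t : ℂ) ^ (-(s + 1)) *
      (sumChar χ t - (kap χ : ℂ) * t) := by
  unfold mellin gfun
  have : ∀ t : ℝ, (t : ℂ) ^ (-s - 1) • (Set.Ioi (1 : ℝ)).indicator
      (fun u : ℝ => sumChar χ u - (kap χ : ℂ) * u) t = (Set.Ioi (1 : ℝ)).indicator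
      (fun t : ℝ => (t : ℂ) ^ (-(s + 1)) * (sumChar χ t - (kap χ : ℂ) * t)) t := by
    intro t
    by_cases h : t ∈ Set.Ioi (1 : ℝ)
    · simp only [Set.indicator_of_mem h, smul_eq_mul]; congr 2; ring
    · simp only [Set.indicator_of_notMem h, smul_zero]
  simp_rw [this]
  rw [setIntegral_indicator measurableSet_Ioi]
  congr 2
  ext x; simp

lemma Kfun_norm_le (χ : DirichletCharacter ℂ q) {a : ℝ} (ha0 : 0 ≤ a) (ha1 : a ≤ 1) {s : ℂ}
    (hs : 1 - a < s.re) : ‖Kfun χ s‖ ≤ ‖s‖ * (5 * (q : ℝ) ^ a / (s.re + a - 1)) := by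
  unfold Kfun
  rw [norm_mul]
  gcongr
  rw [mellin_gfun]
  have hIntgr : IntegrableOn (fun t : ℝ => 5 * (q : ℝ) ^ a * t ^ (-s.re - a)) (Set.Ioi 1) :=
    (integrableOn_Ioi_rpow_of_lt (by linarith) one_pos).const_mul _
  calc _ ≤ ∫ t in Set.Ioi (1 : ℝ), 5 * (q : ℝ) ^ a * t ^ (-s.re - a) := by
        apply norm_integral_le_of_norm_le hIntgr
        filter_upwards [ae_restrict_mem measurableSet_Ioi] with t ht
        have ht0 : (0 : ℝ) < t := lt_trans one_pos ht
        have := norm_gfun_le χ ha0 ha1 ht0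
        unfold gfun at this
        rw [Set.indicator_of_mem ht] at this
        rw [norm_mul, norm_cpow_eq_rpow_re_of_pos ht0]
        calc _ ≤ t ^ (-(s + 1)).re * (5 * (q : ℝ) ^ a * t ^ (1 - a)) := by gcongr
          _ = 5 * (q : ℝ) ^ a * (t ^ (-(s + 1)).re * t ^ (1 - a)) := by ring
          _ = _ := by
            rw [← Real.rpow_add ht0]; congr 2; simp; ring
    _ = 5 * (q : ℝ) ^ a / (s.re + a - 1) := by
        rw [integral_const_mul, integral_Ioi_rpow_of_lt (by linarith) one_pos]
        rw [Real.one_rpow, mul_div_assoc, ← neg_div_neg_eq, neg_neg]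
        ring_nf

lemma LSeries_eq_Kfun (χ : DirichletCharacter ℂ q) {s : ℂ} (hs : 1 < s.re) :
    LSeries (fun n => χ n) s = kap χ * s / (s - 1) + Kfun χ s := by
  have hO : (fun n : ℕ => ∑ k ∈ Finset.Icc 1 n, χ (k : ZMod q)) =O[atTop]
      fun n : ℕ => (n : ℝ) ^ (1 : ℝ) := by
    apply Asymptotics.IsBigO.of_bound 1
    filter_upwards with n
    calc _ ≤ ∑ k ∈ Finset.Icc 1 n, ‖χ (k : ZMod q)‖ := norm_sum_le _ _
      _ ≤ ∑ k ∈ Finset.Icc 1 n, 1 := sum_le_sum fun k _ => χ.norm_le_one k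
      _ = _ := by simp
  rw [LSeries_eq_mul_integral _ zero_le_one hs
    (DirichletCharacter.LSeriesSummable_of_one_lt_re χ hs) hO]
  unfold Kfun
  rw [mellin_gfun]
  have hs1 : s - 1 ≠ 0 := by
    intro h; rw [sub_eq_zero] at h; rw [h] at hs; simp at hs
  have i1 : ∫ t in Set.Ioi (1 : ℝ), (kap χ : ℂ) * (t : ℂ) ^ (-s) = kap χ / (s - 1) := by
    rw [integral_const_mul, integral_Ioi_cpow_of_lt (by simpa using hs) one_pos]
    rw [ofReal_one, one_cpow, ← neg_div_neg_eq, neg_neg, mul_one_div]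
    congr 1; ring
  have hint1 : IntegrableOn (fun t : ℝ => (kap χ : ℂ) * (t : ℂ) ^ (-s)) (Set.Ioi 1) :=
    (integrableOn_Ioi_cpow_of_lt (by simpa using hs) one_pos).const_mul _
  have hint2 : IntegrableOn (fun t : ℝ => (t : ℂ) ^ (-(s + 1)) *
      (sumChar χ t - (kap χ : ℂ) * t)) (Set.Ioi 1) := by
    have hIntgr : IntegrableOn (fun t : ℝ => 5 * (q : ℝ) ^ (0 : ℝ) * t ^ (-s.re - 0)) (Set.Ioi 1) :=
      (integrableOn_Ioi_rpow_of_lt (by linarith) one_pos).const_mul _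
    apply Integrable.mono' hIntgr
    · apply Measurable.aestronglyMeasurable
      exact (by fun_prop : Measurable fun t : ℝ => (t : ℂ) ^ (-(s + 1))).mul
        ((measurable_sumChar χ).sub (by fun_prop))
    · filter_upwards [ae_restrict_mem measurableSet_Ioi] with t ht
      have ht0 : (0 : ℝ) < t := lt_trans one_pos ht
      have := norm_gfun_le χ le_rfl zero_le_one ht0
      unfold gfun at this
      rw [Set.indicator_of_mem ht] at this
      rw [norm_mul, norm_cpow_eq_rpow_re_of_pos ht0]
      calc _ ≤ t ^ (-(s + 1)).re * (5 * (q : ℝ) ^ (0 : ℝ) * t ^ (1 - 0 : ℝ)) := by gcongr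
        _ = 5 * (q : ℝ) ^ (0 : ℝ) * (t ^ (-(s + 1)).re * t ^ (1 - 0 : ℝ)) := by ring
        _ = _ := by
          rw [← Real.rpow_add ht0]; congr 2; simp
  have : ∫ t in Set.Ioi (1 : ℝ), (∑ k ∈ Finset.Icc 1 ⌊t⌋₊, χ (k : ZMod q)) * (t : ℂ) ^ (-(s + 1))
      = kap χ / (s - 1) + ∫ t in Set.Ioi (1 : ℝ), (t : ℂ) ^ (-(s + 1)) *
      (sumChar χ t - (kap χ : ℂ) * t) := by
    rw [← i1, ← integral_add hint1 hint2]
    apply setIntegral_congr_fun measurableSet_Ioi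
    intro t ht
    have ht0 : (t : ℂ) ≠ 0 := by
      have : (0 : ℝ) < t := lt_trans one_pos ht
      exact_mod_cast this.ne'
    have : (t : ℂ) ^ (-s) = (t : ℂ) ^ (-(s + 1)) * t := by
      nth_rewrite 3 [← cpow_one (t : ℂ)]
      rw [← cpow_add _ _ ht0]; congr 1; ring
    simp only [this, sumChar]
    ring
  rw [this]
  field_simp

/-- the polar factor -/
noncomputable def pol (χ : DirichletCharacter ℂ q) (s : ℂ) : ℂ :=
  open Classical in if χ = 1 then s - 1 else 1

/-- the entire function attached to `χ` -/
noncomputable def HL (χ : DirichletCharacter ℂ q) (s : ℂ) : ℂ :=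
  open Classical in if χ = 1 then DirichletCharacter.LFunctionTrivChar₁ q s
    else DirichletCharacter.LFunction χ s

lemma HL_differentiable (χ : DirichletCharacter ℂ q) : Differentiable ℂ (HL χ) := by
  by_cases h : χ = 1
  · have : HL χ = DirichletCharacter.LFunctionTrivChar₁ q := by ext s; simp [HL, h]
    rw [this]; exact DirichletCharacter.differentiable_LFunctionTrivChar₁ q
  · have : HL χ = DirichletCharacter.LFunction χ := by ext s; simp [HL, h]
    rw [this]; exact DirichletCharacter.differentiable_LFunction h

lemma HL_eq_pol_mul (χ : DirichletCharacter ℂ q) {s : ℂ} (hs : s ≠ 1) :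
    HL χ s = pol χ s * DirichletCharacter.LFunction χ s := by
  by_cases h : χ = 1
  · subst h
    simp [HL, pol, DirichletCharacter.LFunctionTrivChar₁, Function.update_of_ne hs,
      DirichletCharacter.LFunctionTrivChar]
  · simp [HL, pol, h]

lemma pol_differentiable (χ : DirichletCharacter ℂ q) : Differentiable ℂ (pol χ) := by
  by_cases h : χ = 1
  · have : pol χ = fun s => s - 1 := by ext s; simp [pol, h]
    rw [this]; fun_prop
  · have : pol χ = fun s => 1 := by ext s; simp [pol, h]
    rw [this]; fun_prop

lemma HL_eq (χ : DirichletCharacter ℂ q) {s : ℂ} (hs : 0 < s.re) :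
    HL χ s = kap χ * s + pol χ s * Kfun χ s := by
  set U : Set ℂ := {z | 0 < z.re}
  have hU : IsOpen U := isOpen_lt continuous_const Complex.continuous_re
  have hUc : IsPreconnected U := (convex_halfSpace_re_gt 0).isPreconnected
  have d2 : DifferentiableOn ℂ (fun s => kap χ * s + pol χ s * Kfun χ s) U := fun z hz => by
    apply DifferentiableAt.differentiableWithinAt
    refine DifferentiableAt.add (by fun_prop) ((pol_differentiable χ z).mul
      (Kfun_differentiableAt χ hz))
  have := ((HL_differentiable χ).differentiableOn.analyticOnNhd
    hU).eqOn_of_preconnected_of_eventuallyEq (d2.analyticOnNhd hU) hUc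
    (z₀ := 2) (by simp [U]) (by
      have : {z : ℂ | 1 < z.re} ∈ 𝓝 (2 : ℂ) :=
        (isOpen_lt continuous_const Complex.continuous_re).mem_nhds (by simp)
      filter_upwards [this] with z hz
      have hz1 : z ≠ 1 := by rintro rfl; simp at hz
      rw [HL_eq_pol_mul χ hz1, DirichletCharacter.LFunction_eq_LSeries χ hz, LSeries_eq_Kfun χ hz]
      by_cases h : χ = 1
      · have : z - 1 ≠ 0 := sub_ne_zero.mpr hz1
        simp only [pol, h, if_true]; field_simp
      · simp [pol, kap, h])
  exact this hs

lemma HL_one (χ : DirichletCharacter ℂ q) (h : χ = 1) : HL χ 1 = (kap χ : ℂ) := by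
  rw [HL_eq χ (by simp)]; simp [pol, h]

lemma HL_of_ne (χ : DirichletCharacter ℂ q) (h : χ ≠ 1) (s : ℂ) :
    HL χ s = DirichletCharacter.LFunction χ s := by
  simp [HL, h]

lemma Kfun_of_ne (χ : DirichletCharacter ℂ q) (h : χ ≠ 1) {s : ℂ} (hs : 0 < s.re) :
    Kfun χ s = DirichletCharacter.LFunction χ s := by
  rw [← HL_of_ne χ h, HL_eq χ hs]; simp [pol, kap, h]

/-- growth of `HL` -/
lemma HL_norm_le (χ : DirichletCharacter ℂ q) {a : ℝ} (ha0 : 0 < a) (ha1 : a ≤ 1) {s : ℂ}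
    (hs : 1 - a / 2 ≤ s.re) : ‖HL χ s‖ ≤ 11 * (q : ℝ) ^ a / a * (1 + ‖s‖) ^ 2 := by
  have hq : (1 : ℝ) ≤ q := by exact_mod_cast NeZero.pos q
  have hK := Kfun_norm_le χ ha0.le ha1 (s := s) (by linarith)
  have hpol : ‖pol χ s‖ ≤ 1 + ‖s‖ := by
    unfold pol
    split_ifs
    · rw [add_comm]; simpa using norm_sub_le s 1
    · simp
  have hkap : ‖(kap χ : ℂ) * s‖ ≤ ‖s‖ := by
    rw [norm_mul, Complex.norm_real, Real.norm_of_nonneg (kap_nonneg χ)]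
    nlinarith [kap_le_one χ, norm_nonneg s]
  have hqa : (1 : ℝ) ≤ (q : ℝ) ^ a := Real.one_le_rpow hq ha0.le
  have hX : 1 ≤ (q : ℝ) ^ a / a := by
    rw [le_div_iff₀ ha0]; linarith
  have hK2 : ‖Kfun χ s‖ ≤ ‖s‖ * (10 * ((q : ℝ) ^ a / a)) := by
    refine hK.trans ?_
    gcongr
    rw [div_le_iff₀ (by linarith)]
    have : 10 * ((q : ℝ) ^ a / a) * (s.re + a - 1) ≥ 10 * ((q : ℝ) ^ a / a) * (a / 2) := by
      gcongr; linarith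
    refine le_trans (le_of_eq ?_) this
    field_simp; norm_num
  rw [HL_eq χ (by linarith)]
  set X := (q : ℝ) ^ a / a
  calc _ ≤ ‖s‖ + (1 + ‖s‖) * (‖s‖ * (10 * X)) := by
        refine (norm_add_le _ _).trans ?_
        rw [norm_mul (pol χ s)]
        gcongr
    _ ≤ 11 * X * (1 + ‖s‖) ^ 2 := by
        nlinarith [norm_nonneg s, mul_nonneg (sub_nonneg.2 hX) (norm_nonneg s)]
    _ = _ := by simp only [X]; ring

end PageProof

namespace PageProof
open Complex Filter Topology MeasureTheory

lemma totient_lower {ε : ℝ} (hε : 0 < ε) :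
    ∃ c : ℝ, 0 < c ∧ ∀ q : ℕ, 0 < q → c * (q : ℝ) ^ (-ε) ≤ (Nat.totient q : ℝ) / q := by
  obtain ⟨P, hP⟩ := exists_nat_ge ((2 : ℝ) ^ (1 / ε))
  refine ⟨(1 / 2 : ℝ) ^ P, by positivity, fun q hq => ?_⟩
  have hq' : (0 : ℝ) < q := by exact_mod_cast hq
  have h1 : (Nat.totient q : ℝ) / q = ∏ p ∈ q.primeFactors, (1 - (p : ℝ)⁻¹) := by
    have := Nat.totient_eq_mul_prod_factors q
    have h2 : (Nat.totient q : ℝ) = q * ∏ p ∈ q.primeFactors, (1 - (p : ℝ)⁻¹) := by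
      have h := congrArg (fun x : ℚ => (x : ℝ)) this
      push_cast at h
      exact h
    rw [h2]; field_simp
  rw [h1]
  have h3 : ∏ p ∈ q.primeFactors, ((if p < P then (1 / 2 : ℝ) else 1) * (p : ℝ) ^ (-ε))
      ≤ ∏ p ∈ q.primeFactors, (1 - (p : ℝ)⁻¹) := by
    apply Finset.prod_le_prod
    · intro p _; split_ifs <;> positivity
    · intro p hp
      have hp2 : (2 : ℝ) ≤ p := by exact_mod_cast (Nat.prime_of_mem_primeFactors hp).two_le
      have hpi : (p : ℝ)⁻¹ ≤ 1 / 2 := by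
        rw [one_div]; exact inv_anti₀ (by norm_num) hp2
      have hp0 : (p : ℝ) ^ (-ε) ≤ 1 :=
        Real.rpow_le_one_of_one_le_of_nonpos (by linarith) (by linarith)
      split_ifs with h
      · linarith
      · have h4 : (2 : ℝ) ^ (1 / ε) ≤ p := hP.trans (by exact_mod_cast not_lt.mp h)
        have h5 : (2 : ℝ) ≤ (p : ℝ) ^ ε := by
          calc (2 : ℝ) = ((2 : ℝ) ^ (1 / ε)) ^ ε := by
                rw [← Real.rpow_mul (by norm_num), one_div_mul_cancel hε.ne', Real.rpow_one]
            _ ≤ _ := Real.rpow_le_rpow (by positivity) h4 hε.le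
        rw [Real.rpow_neg (by linarith)]
        have : ((p : ℝ) ^ ε)⁻¹ ≤ 1 / 2 := by
          rw [one_div]; exact inv_anti₀ (by norm_num) h5
        linarith
  refine le_trans ?_ h3
  rw [prod_mul_distrib, Real.finsetProd_rpow _ _ (fun p _ => by positivity)]
  have h6 : (1 / 2 : ℝ) ^ P ≤ ∏ p ∈ q.primeFactors, (if p < P then (1 / 2 : ℝ) else 1) := by
    rw [prod_ite, prod_const, prod_const_one, mul_one]
    apply pow_le_pow_of_le_one (by norm_num) (by norm_num)
    calc _ ≤ (range P).card := card_le_card (by intro p hp; simp at hp ⊢; exact hp.2)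
      _ = P := card_range P
  have h7 : (q : ℝ) ^ (-ε) ≤ (∏ p ∈ q.primeFactors, (p : ℝ)) ^ (-ε) := by
    apply Real.rpow_le_rpow_of_nonpos
    · exact prod_pos fun p hp => by exact_mod_cast (Nat.prime_of_mem_primeFactors hp).pos
    · have := Nat.le_of_dvd hq (Nat.prod_primeFactors_dvd q)
      have h8 : ((∏ p ∈ q.primeFactors, p : ℕ) : ℝ) ≤ q := by exact_mod_cast this
      rwa [Nat.cast_prod] at h8
    · linarith
  gcongr

/-- shape of logarithmic derivative -/
def HasLD (f : ℂ → ℂ) (g : ℕ → ℂ) : Prop :=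
  ∀ s : ℂ, 1 < s.re → LSeriesSummable g s ∧ HasDerivAt f (-LSeries g s * f s) s

lemma HasLD.mul {f₁ f₂ : ℂ → ℂ} {g₁ g₂ : ℕ → ℂ} (h₁ : HasLD f₁ g₁) (h₂ : HasLD f₂ g₂) :
    HasLD (f₁ * f₂) (g₁ + g₂) := by
  intro s hs
  obtain ⟨a, b⟩ := h₁ s hs
  obtain ⟨c, d⟩ := h₂ s hs
  refine ⟨a.add c, ?_⟩
  rw [LSeries_add a c]
  refine (b.mul d).congr_deriv ?_
  simp only [Pi.mul_apply]; ring

lemma HasLD_LFunction {q : ℕ} [NeZero q] (χ : DirichletCharacter ℂ q) :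
    HasLD (DirichletCharacter.LFunction χ)
      (fun n => χ n * (ArithmeticFunction.vonMangoldt n : ℂ)) := by
  intro s hs
  have h1 := DirichletCharacter.LSeriesSummable_twist_vonMangoldt χ hs
  have h2 := DirichletCharacter.LSeries_twist_vonMangoldt_eq χ hs
  refine ⟨h1, ?_⟩
  have hne : s ≠ 1 := by rintro rfl; simp at hs
  have h3 := (DirichletCharacter.differentiableAt_LFunction χ s (Or.inl hne)).hasDerivAt
  refine h3.congr_deriv ?_
  have h4 : LSeries (fun n => χ n * (ArithmeticFunction.vonMangoldt n : ℂ)) s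
     = -deriv (LSeries fun n => χ n) s / LSeries (fun n => χ n) s := h2
  rw [h4, DirichletCharacter.deriv_LFunction_eq_deriv_LSeries _ hs,
    DirichletCharacter.LFunction_eq_LSeries _ hs]
  have := DirichletCharacter.LSeries_ne_zero_of_one_lt_re χ hs
  field_simp

open scoped ComplexOrder in
/-- alternating signs -/
lemma HasLD.alternating {f : ℂ → ℂ} {g : ℕ → ℂ} (h : HasLD f g) (hg : 0 ≤ g) (h2 : 0 ≤ f 2)
    (m : ℕ) : 0 ≤ (-1) ^ m * iteratedDeriv m f 2 := by
  have habs : LSeries.abscissaOfAbsConv g < (2 : ℝ) := by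
    have := LSeriesSummable.abscissaOfAbsConv_le (h ((3 / 2 : ℝ) : ℂ) (by norm_num)).1
    refine this.trans_lt ?_
    simp only [ofReal_re]
    exact_mod_cast (by norm_num : (3 / 2 : ℝ) < 2)
  have hopen : IsOpen {s : ℂ | 1 < s.re} := isOpen_lt continuous_const Complex.continuous_re
  have hmem : (2 : ℂ) ∈ {s : ℂ | 1 < s.re} := by simp
  have hev : deriv f =ᶠ[𝓝 2] -(LSeries g * f) := by
    filter_upwards [hopen.mem_nhds hmem] with s hs
    rw [(h s hs).2.deriv]; simp
  have hfan : AnalyticAt ℂ f 2 := by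
    have : DifferentiableOn ℂ f {s : ℂ | 1 < s.re} :=
      fun s hs => (h s hs).2.differentiableAt.differentiableWithinAt
    exact this.analyticAt (hopen.mem_nhds hmem)
  have hgan : AnalyticAt ℂ (LSeries g) 2 := by
    have := LSeries_analyticOnNhd g
    exact this 2 (by simpa using habs)
  induction m using Nat.strong_induction_on with
  | _ m ih =>
    cases m with
    | zero => simpa using h2
    | succ m =>
      rw [iteratedDeriv_succ', Filter.EventuallyEq.iteratedDeriv_eq m hev, iteratedDeriv_neg,
        iteratedDeriv_mul hgan.contDiffAt hfan.contDiffAt]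
      rw [pow_succ, mul_neg_one, neg_mul_neg, mul_sum]
      apply sum_nonneg
      intro i hi
      have hi' : i ≤ m := by simp at hi; omega
      have h3 := LSeries.iteratedDeriv_alternating hg habs i
      have h4 := ih (m - i) (by omega)
      have h5 := mul_nonneg (mul_nonneg (show (0 : ℂ) ≤ (m.choose i : ℂ) from by exact_mod_cast Nat.zero_le _) h3) h4
      convert h5 using 1
      have : (-1 : ℂ) ^ m = (-1) ^ i * (-1) ^ (m - i) := by
        rw [← pow_add]; congr 1; omega
      rw [this]
      push_cast
      ring
end PageProof

namespace PageProof
open Complex Filter Topology MeasureTheory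

lemma iteratedDeriv_inv_sub_one (m : ℕ) :
    iteratedDeriv m (fun s : ℂ => (s - 1)⁻¹) 2 = (-1) ^ m * (m.factorial : ℂ) := by
  rw [iteratedDeriv_comp_sub_const m (fun s : ℂ => s⁻¹) 1]
  simp only []
  rw [iteratedDeriv_eq_iterate, iter_deriv_inv']
  norm_num
  
lemma taylor_core {W f : ℂ → ℂ} (hW : Differentiable ℂ W) (hf : ∀ s, s ≠ 1 → f s * (s - 1) = W s)
    {B c0 β : ℝ} (hB : ∀ s ∈ Metric.closedBall (2 : ℂ) (3 / 2), ‖W s‖ ≤ B)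
    (hpos : ∀ m : ℕ, 0 ≤ ((-1) ^ m * iteratedDeriv m f 2).re) (hc0 : c0 ≤ (f 2).re)
    (hβ : 3 / 4 ≤ β) (hβ1 : β < 1) (hWβ : 0 ≤ (W β).re) {M : ℕ} (hM : 1 ≤ M)
    (hMB : 48 * B * (5 / 6) ^ M ≤ c0) :
    (1 - β) * c0 / 2 ≤ (W 1).re * (2 - β) ^ M := by
  have hB0 : 0 ≤ B := (norm_nonneg _).trans (hB 2 (Metric.mem_closedBall_self (by norm_num)))
  set lam := W 1 with hlam
  set P := dslope W 1 with hPdef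
  have hP : Differentiable ℂ P := by
    intro s
    have := (Complex.differentiableOn_dslope (f := W) (c := 1) (s := Set.univ) univ_mem).mpr
      hW.differentiableOn
    exact this.differentiableAt univ_mem
  have hPs : ∀ s, s ≠ 1 → P s = (W s - lam) / (s - 1) := by
    intro s hs
    rw [hPdef, dslope_of_ne _ hs, slope_def_field]
  set p : ℕ → ℂ := fun m => (-1) ^ m * iteratedDeriv m P 2 / (m.factorial : ℂ) with hp
  have hfan : AnalyticAt ℂ f 2 := by
    have : DifferentiableOn ℂ f {1}ᶜ := by
      have h1 : DifferentiableOn ℂ (fun s => W s / (s - 1)) {1}ᶜ := by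
        intro s hs
        exact ((hW s).div ((differentiableAt_id).sub_const _) (sub_ne_zero.mpr hs)).differentiableWithinAt
      refine h1.congr fun s hs => ?_
      rw [← hf s hs, mul_div_cancel_right₀ _ (sub_ne_zero.mpr hs)]
    exact this.analyticAt (isOpen_compl_singleton.mem_nhds (by simp))
  have hinvan : AnalyticAt ℂ (fun s : ℂ => (s - 1)⁻¹) 2 := by
    apply AnalyticAt.inv (by fun_prop)
    norm_num
  have hpm : ∀ m, p m = (-1) ^ m * iteratedDeriv m f 2 / (m.factorial : ℂ) - lam := by
    intro m
    have hev : P =ᶠ[𝓝 2] (f - fun s => lam * (s - 1)⁻¹) := by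
      filter_upwards [isOpen_compl_singleton.mem_nhds (show (2 : ℂ) ∈ ({1}ᶜ : Set ℂ) by simp)]
        with s hs
      have hs' := sub_ne_zero.mpr hs
      rw [hPs s hs, Pi.sub_apply, ← hf s hs]
      field_simp
    have hmf : (m.factorial : ℂ) ≠ 0 := by exact_mod_cast m.factorial_ne_zero
    simp only [hp]
    have hcan : AnalyticAt ℂ (fun s : ℂ => lam * (s - 1)⁻¹) 2 := analyticAt_const.mul hinvan
    rw [hev.iteratedDeriv_eq m, iteratedDeriv_sub hfan.contDiffAt hcan.contDiffAt, iteratedDeriv_const_mul_field,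
      iteratedDeriv_inv_sub_one]
    have : ((-1 : ℂ) ^ m) * (-1) ^ m = 1 := by rw [← mul_pow]; simp
    field_simp
    linear_combination (-lam * (m.factorial : ℂ)) * this
  have hPB : ∀ s ∈ Metric.sphere (2 : ℂ) (3 / 2), ‖P s‖ ≤ 4 * B := by
    intro s hs
    have hs2 : ‖s - 2‖ = 3 / 2 := by simpa [dist_eq_norm] using hs
    have hs1 : 1 / 2 ≤ ‖s - 1‖ := by
      have : ‖s - 2‖ ≤ ‖s - 1‖ + ‖(1 : ℂ)‖ := by
        calc ‖s - 2‖ = ‖(s - 1) - 1‖ := by ring_nf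
          _ ≤ _ := norm_sub_le _ _
      rw [hs2, norm_one] at this; linarith
    have hne : s ≠ 1 := by rintro rfl; norm_num at hs1
    rw [hPs s hne, norm_div, div_le_iff₀ (by linarith)]
    have h1 : ‖W s - lam‖ ≤ B + B := (norm_sub_le _ _).trans (add_le_add
      (hB s (Metric.sphere_subset_closedBall hs)) (hB 1 (by simp [dist_eq_norm]; norm_num)))
    nlinarith
  have hpB : ∀ m, ‖p m‖ ≤ 4 * B * (2 / 3) ^ m := by
    intro m
    have := Complex.norm_iteratedDeriv_le_of_forall_mem_sphere_norm_le m
      (by norm_num : (0 : ℝ) < 3 / 2) hP.diffContOnCl hPB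
    simp only [hp]
    rw [norm_div, norm_mul, norm_pow, norm_neg, norm_one, one_pow, one_mul, Complex.norm_natCast,
      div_le_iff₀ (by positivity)]
    refine this.trans (le_of_eq ?_)
    rw [div_pow, div_pow]; field_simp
  set x : ℝ := 2 - β with hx
  have hx1 : 1 < x := by linarith
  have hx2 : x ≤ 5 / 4 := by linarith
  have hsum : HasSum (fun m => x ^ m * (p m).re) (P β).re := by
    have hmem : (β : ℂ) ∈ Metric.ball (2 : ℂ) (3 / 2) := by
      rw [Metric.mem_ball, dist_eq_norm, show (β : ℂ) - 2 = ((β - 2 : ℝ) : ℂ) by push_cast; rfl,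
        Complex.norm_real, Real.norm_eq_abs, abs_lt]
      constructor <;> linarith
    have h1 := Complex.hasSum_taylorSeries_on_ball
      (hP.differentiableOn (s := Metric.ball (2 : ℂ) (3 / 2))) hmem
    have h2 := Complex.hasSum_re h1
    convert h2 using 2 with m
    have : ((m.factorial : ℂ))⁻¹ • ((β : ℂ) - 2) ^ m • iteratedDeriv m P 2
        = ((x ^ m : ℝ) : ℂ) * p m := by
      have e : ((β : ℂ) - 2) = (-1) * (x : ℂ) := by rw [hx]; push_cast; ring
      simp only [hp, smul_eq_mul]
      rw [e, mul_pow]; push_cast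
      ring
    rw [this, re_ofReal_mul]
  have hgeo : Summable (fun m : ℕ => ((5 / 6 : ℝ)) ^ (m + M) * (4 * B)) :=
    (((summable_nat_add_iff M).mpr
      (summable_geometric_of_lt_one (by norm_num) (by norm_num : (5 / 6 : ℝ) < 1)))).mul_right _
  have htail : -(24 * B * (5 / 6) ^ M) ≤ ∑' m, x ^ (m + M) * (p (m + M)).re := by
    have h1 : ∑' m : ℕ, -(((5 / 6 : ℝ)) ^ (m + M) * (4 * B)) ≤ ∑' m, x ^ (m + M) * (p (m + M)).re := by
      apply Summable.tsum_le_tsum _ hgeo.neg ((summable_nat_add_iff M).mpr hsum.summable)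
      intro m
      have h2 : |x ^ (m + M) * (p (m + M)).re| ≤ (5 / 6) ^ (m + M) * (4 * B) := by
        rw [abs_mul, abs_of_nonneg (by positivity)]
        calc x ^ (m + M) * |(p (m + M)).re| ≤ (5 / 4) ^ (m + M) * (4 * B * (2 / 3) ^ (m + M)) := by
              gcongr
              exact (Complex.abs_re_le_norm _).trans (hpB _)
          _ = ((5 / 4) * (2 / 3)) ^ (m + M) * (4 * B) := by rw [mul_pow]; ring
          _ = _ := by norm_num
      linarith [neg_abs_le (x ^ (m + M) * (p (m + M)).re)]
    refine le_trans (le_of_eq ?_) h1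
    rw [tsum_neg]
    simp_rw [pow_add]
    rw [tsum_mul_right, tsum_mul_right, tsum_geometric_of_lt_one (by norm_num) (by norm_num)]
    norm_num; ring
  have hhead : c0 - lam.re * ∑ m ∈ range M, x ^ m ≤ ∑ m ∈ range M, x ^ m * (p m).re := by
    have h1 : ∀ m, x ^ m * (-lam.re) ≤ x ^ m * (p m).re := by
      intro m
      apply mul_le_mul_of_nonneg_left _ (by positivity)
      rw [hpm, sub_re]
      have : 0 ≤ ((-1) ^ m * iteratedDeriv m f 2 / (m.factorial : ℂ)).re := by
        have := hpos m
        rw [show (m.factorial : ℂ) = ((m.factorial : ℝ) : ℂ) by push_cast; rfl, div_ofReal_re]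
        positivity
      linarith
    obtain ⟨K, rfl⟩ : ∃ K, M = K + 1 := ⟨M - 1, by omega⟩
    rw [sum_range_succ', sum_range_succ']
    have h2 : ∑ m ∈ range K, x ^ (m + 1) * (-lam.re) ≤ ∑ m ∈ range K, x ^ (m + 1) * (p (m + 1)).re :=
      sum_le_sum fun m _ => h1 _
    rw [← sum_mul] at h2
    have h3 : (p 0).re = (f 2).re - lam.re := by rw [hpm]; simp
    rw [h3]; simp only [pow_zero]
    linarith
  have htot : ∑ m ∈ range M, x ^ m * (p m).re + ∑' m, x ^ (m + M) * (p (m + M)).re = (P β).re := by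
    rw [← hsum.tsum_eq]; exact hsum.summable.sum_add_tsum_nat_add M
  have hPβ : (P β).re * (1 - β) ≤ lam.re := by
    rw [hPs β (by exact_mod_cast hβ1.ne)]
    rw [show (β : ℂ) - 1 = ((β - 1 : ℝ) : ℂ) by push_cast; rfl, div_ofReal_re, sub_re]
    have : β - 1 ≠ 0 := by linarith
    have e : ((W β).re - lam.re) / (β - 1) * (1 - β) = lam.re - (W β).re := by
      field_simp; ring
    rw [e]; linarith
  have hg : (∑ m ∈ range M, x ^ m) * (1 - β) = x ^ M - 1 := by
    rw [show (1 - β) = x - 1 by rw [hx]; ring]; exact geom_sum_mul x M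
  have h1β : 0 < 1 - β := by linarith
  have hA : (c0 - lam.re * ∑ m ∈ range M, x ^ m - 24 * B * (5 / 6) ^ M) * (1 - β) ≤ (P β).re * (1 - β) := by
    apply mul_le_mul_of_nonneg_right _ h1β.le
    linarith
  have hC : (24 * B * (5 / 6) ^ M) * (1 - β) ≤ (c0 / 2) * (1 - β) := by
    apply mul_le_mul_of_nonneg_right _ h1β.le
    linarith
  have hD : lam.re * (∑ m ∈ range M, x ^ m) * (1 - β) = lam.re * x ^ M - lam.re := by
    rw [mul_assoc, hg]; ring
  nlinarith

lemma taylor_lower {W f : ℂ → ℂ} (hW : Differentiable ℂ W) (hf : ∀ s, s ≠ 1 → f s * (s - 1) = W s)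
    {B c0 β : ℝ} (hB : ∀ s ∈ Metric.closedBall (2 : ℂ) (3 / 2), ‖W s‖ ≤ B) (hB1 : 1 ≤ B)
    (hpos : ∀ m : ℕ, 0 ≤ ((-1) ^ m * iteratedDeriv m f 2).re) (hc0 : c0 ≤ (f 2).re)
    (hc0' : 0 < c0) (hc01 : c0 ≤ 1)
    (hβ : 3 / 4 ≤ β) (hβ1 : β < 1) (hWβ : 0 ≤ (W β).re) :
    (1 - β) * c0 / 2 * (Real.exp (-2) * (48 * B / c0) ^ (-(6 * (1 - β)))) ≤ (W 1).re := by
  set M : ℕ := ⌈6 * Real.log (48 * B / c0)⌉₊ + 1 with hM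
  have h48 : 1 ≤ 48 * B / c0 := by rw [le_div_iff₀ hc0']; linarith
  have hlog : 0 ≤ Real.log (48 * B / c0) := Real.log_nonneg h48
  have hMl : 6 * Real.log (48 * B / c0) ≤ M := by
    rw [hM]; push_cast
    have := Nat.le_ceil (6 * Real.log (48 * B / c0)); linarith
  have hMu : (M : ℝ) ≤ 6 * Real.log (48 * B / c0) + 2 := by
    rw [hM]; push_cast
    have := Nat.ceil_lt_add_one (show 0 ≤ 6 * Real.log (48 * B / c0) by positivity); linarith
  have h56 : (5 / 6 : ℝ) ^ M ≤ c0 / (48 * B) := by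
    have h1 : (5 / 6 : ℝ) ≤ Real.exp (-(1 / 6)) := by
      have := Real.add_one_le_exp (-(1 / 6) : ℝ); linarith
    calc (5 / 6 : ℝ) ^ M ≤ Real.exp (-(1 / 6)) ^ M := by gcongr
      _ = Real.exp (-(M / 6)) := by rw [← Real.exp_nat_mul]; congr 1; ring
      _ ≤ Real.exp (-(Real.log (48 * B / c0))) := by apply Real.exp_le_exp.mpr; linarith
      _ = c0 / (48 * B) := by
        rw [Real.exp_neg, Real.exp_log (by linarith)]; field_simp
  have hMB : 48 * B * (5 / 6) ^ M ≤ c0 := by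
    calc 48 * B * (5 / 6) ^ M ≤ 48 * B * (c0 / (48 * B)) := by gcongr
      _ = c0 := by field_simp
  have hcore := taylor_core hW hf hB hpos hc0 hβ hβ1 hWβ (by omega : 1 ≤ M) hMB
  have hx : (2 - β) ^ M ≤ Real.exp 2 * (48 * B / c0) ^ (6 * (1 - β)) := by
    calc (2 - β) ^ M ≤ Real.exp (1 - β) ^ M := by
          gcongr
          · linarith
          · have := Real.add_one_le_exp (1 - β); linarith
      _ = Real.exp (M * (1 - β)) := by rw [← Real.exp_nat_mul]
      _ ≤ Real.exp (2 + Real.log (48 * B / c0) * (6 * (1 - β))) := by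
        apply Real.exp_le_exp.mpr; nlinarith
      _ = _ := by rw [Real.exp_add, Real.rpow_def_of_pos (by linarith)]
  have hX : 0 < Real.exp 2 * (48 * B / c0) ^ (6 * (1 - β)) := by positivity
  have hWpos : 0 ≤ (W 1).re := by
    by_contra hneg
    push Not at hneg
    have : (W 1).re * (2 - β) ^ M ≤ 0 :=
      mul_nonpos_of_nonpos_of_nonneg hneg.le (pow_nonneg (by linarith) _)
    have : 0 < (1 - β) * c0 / 2 := by
      have : 0 < 1 - β := by linarith
      positivity
    linarith
  have h2 : (1 - β) * c0 / 2 ≤ (W 1).re * (Real.exp 2 * (48 * B / c0) ^ (6 * (1 - β))) :=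
    hcore.trans (mul_le_mul_of_nonneg_left hx hWpos)
  rw [Real.exp_neg, Real.rpow_neg (by linarith), ← mul_inv, ← div_eq_mul_inv, div_le_iff₀ hX]
  exact h2
end PageProof

namespace PageProof
open Complex Filter Topology MeasureTheory
open DirichletCharacter

lemma real_values {q : ℕ} [NeZero q] {χ : DirichletCharacter ℂ q} (h : χ ^ 2 = 1) (a : ZMod q) :
    χ a = 0 ∨ χ a = 1 ∨ χ a = -1 := by
  by_cases ha : IsUnit a
  · right
    have : (χ ^ 2) a = 1 := by rw [h]; exact MulChar.one_apply ha
    rw [MulChar.pow_apply' χ two_ne_zero] at this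
    simpa using this
  · left; exact χ.map_nonunit ha

lemma conj_real_values {q : ℕ} [NeZero q] {χ : DirichletCharacter ℂ q} (h : χ ^ 2 = 1) (a : ZMod q) :
    (starRingEnd ℂ) (χ a) = χ a := by
  rcases real_values h a with h | h | h <;> simp [h]

lemma HL_real {q : ℕ} [NeZero q] {χ : DirichletCharacter ℂ q} (h : χ ^ 2 = 1) {σ : ℝ} (hσ : 0 < σ) :
    HL χ σ = ((HL χ σ).re : ℂ) := by
  symm
  rw [← Complex.conj_eq_iff_re]
  rw [HL_eq χ (by simpa using hσ)]
  have hK : (starRingEnd ℂ) (Kfun χ σ) = Kfun χ σ := by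
    unfold Kfun
    rw [map_mul, conj_ofReal, mellin_gfun, ← integral_conj]
    congr 1
    apply setIntegral_congr_fun measurableSet_Ioi
    intro t ht
    have ht0 : (0 : ℝ) < t := lt_trans one_pos ht
    simp only [map_mul, map_sub, conj_ofReal]
    congr 1
    · rw [show (-((σ : ℂ) + 1)) = ((-(σ + 1) : ℝ) : ℂ) by push_cast; ring,
        ← Complex.ofReal_cpow ht0.le, conj_ofReal]
    · congr 1
      unfold sumChar
      rw [map_sum]
      exact sum_congr rfl fun k _ => conj_real_values h _
  have hp : (starRingEnd ℂ) (pol χ σ) = pol χ σ := by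
    unfold pol; split_ifs <;> simp
  rw [map_add, map_mul, map_mul, hK, hp, conj_ofReal, conj_ofReal]

lemma LFunction_eq_re {q : ℕ} [NeZero q] {χ : DirichletCharacter ℂ q} (h : χ ^ 2 = 1) :
    ∃ r : ℝ, 1 / 4 ≤ r ∧ LFunction χ 2 = (r : ℂ) := by
  have h2 : (1 : ℝ) < (2 : ℂ).re := by simp
  have hsm : LSeriesSummable (fun n => χ n) 2 :=
    DirichletCharacter.LSeriesSummable_of_one_lt_re χ h2
  have hS : HasSum (LSeries.term (fun n => χ n) 2) (LFunction χ 2) := by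
    rw [LFunction_eq_LSeries χ h2]; exact hsm.hasSum
  have hterm : ∀ n : ℕ, LSeries.term (fun n => χ n) 2 n = ((((χ n).re / (n : ℝ) ^ 2 : ℝ)) : ℂ) := by
    intro n
    rcases eq_or_ne n 0 with rfl | hn
    · simp
    · rw [LSeries.term_of_ne_zero hn]
      have : χ n = ((χ n).re : ℂ) := (Complex.conj_eq_iff_re.mp (conj_real_values h _)).symm
      conv_lhs => rw [this]
      push_cast
      norm_cast
  have hre : HasSum (fun n : ℕ => (χ n).re / (n : ℝ) ^ 2) (LFunction χ 2).re := by
    have := Complex.hasSum_re hS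
    simp_rw [hterm, ofReal_re] at this
    exact this
  have him : (LFunction χ 2).im = 0 := by
    have := Complex.hasSum_im hS
    simp_rw [hterm, ofReal_im] at this
    exact this.unique hasSum_zero
  refine ⟨(LFunction χ 2).re, ?_, by apply Complex.ext <;> simp [him]⟩
  have h3 := hre.add hasSum_zeta_two
  have h4 := sum_le_hasSum {1} (fun n _ => by
    have : -1 ≤ (χ n).re := by rcases real_values h n with h | h | h <;> simp [h]
    rw [← add_div]
    apply div_nonneg _ (by positivity)
    linarith) h3
  simp at h4
  have hpi := Real.pi_lt_d2
  have : Real.pi ^ 2 < 3.15 ^ 2 := by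
    apply pow_lt_pow_left₀ hpi Real.pi_pos.le (by norm_num)
  norm_num at this
  linarith

lemma HL_ball {q : ℕ} [NeZero q] (χ : DirichletCharacter ℂ q) {s : ℂ}
    (hs : s ∈ Metric.closedBall (2 : ℂ) (3 / 2)) : ‖HL χ s‖ ≤ 223 * q := by
  have h1 : ‖s - 2‖ ≤ 3 / 2 := by simpa [dist_eq_norm] using hs
  have h2 : 1 - (1 : ℝ) / 2 ≤ s.re := by
    have := (abs_le.mp ((Complex.abs_re_le_norm (s - 2)).trans h1)).1
    simp at this; linarith
  have h3 : ‖s‖ ≤ 7 / 2 := by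
    calc ‖s‖ = ‖(s - 2) + 2‖ := by ring_nf
      _ ≤ ‖s - 2‖ + ‖(2 : ℂ)‖ := norm_add_le _ _
      _ ≤ _ := by simp; linarith
  refine (HL_norm_le χ one_pos le_rfl h2).trans ?_
  rw [Real.rpow_one, div_one]
  have : (1 + ‖s‖) ^ 2 ≤ (9 / 2) ^ 2 := by gcongr; linarith
  have hq : (0 : ℝ) ≤ q := by positivity
  nlinarith

open scoped ComplexOrder in
lemma siegel_step {R : ℂ → ℂ} (hR : Differentiable ℂ R) {g : ℕ → ℂ}
    (hLD : HasLD (LFunction (1 : DirichletCharacter ℂ 1) * R) g) (hg : 0 ≤ g) {r : ℝ}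
    (h2 : (LFunction (1 : DirichletCharacter ℂ 1) * R) 2 = (r : ℂ)) (hr : 1 / 256 ≤ r) {B : ℝ}
    (hB : ∀ s ∈ Metric.closedBall (2 : ℂ) (3 / 2), ‖R s‖ ≤ B) (hB1 : 1 ≤ B) {β : ℝ}
    (hβ : 3 / 4 ≤ β) (hβ1 : β < 1) (h : 0 ≤ (HL (1 : DirichletCharacter ℂ 1) β * R β).re) :
    (1 - β) / 512 * (Real.exp (-2) * (48 * (223 * B) * 256) ^ (-(6 * (1 - β)))) ≤ ‖R 1‖ := by
  have hW : Differentiable ℂ (HL (1 : DirichletCharacter ℂ 1) * R) := (HL_differentiable _).mul hR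
  have h1 := taylor_lower (f := LFunction (1 : DirichletCharacter ℂ 1) * R) hW (c0 := 1 / 256)
    (B := 223 * B) (β := β) (by
      intro s hs
      rw [Pi.mul_apply, Pi.mul_apply, HL_eq_pol_mul _ hs]
      simp [pol]; ring) (by
      intro s hs
      rw [Pi.mul_apply, norm_mul]
      have := HL_ball (1 : DirichletCharacter ℂ 1) hs
      have h3 := hB s hs
      simp at this
      gcongr) (by linarith) (by
      intro m
      have := hLD.alternating hg (by rw [h2]; exact_mod_cast (by linarith : (0 : ℝ) ≤ r)) m
      exact (Complex.le_def.mp this).1) (by rw [h2]; simpa using hr) (by norm_num) (by norm_num) hβ hβ1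
      (by rw [Pi.mul_apply]; exact h)
  have h3 : ((HL (1 : DirichletCharacter ℂ 1) * R) 1).re ≤ ‖R 1‖ := by
    rw [Pi.mul_apply, HL_one _ rfl]
    have : kap (1 : DirichletCharacter ℂ 1) = 1 := by simp [kap]
    rw [this]; simp only [ofReal_one, one_mul]
    exact Complex.re_le_norm _
  refine le_trans (le_of_eq ?_) (h1.trans h3)
  rw [show 48 * (223 * B) / (1 / 256) = 48 * (223 * B) * 256 by ring]
  ring

lemma HL_eq_L {q : ℕ} [NeZero q] {χ : DirichletCharacter ℂ q} (h : χ ≠ 1) :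
    HL χ = LFunction χ := funext fun s => HL_of_ne χ h s

lemma vM_nonneg (n : ℕ) : 0 ≤ (ArithmeticFunction.vonMangoldt n : ℝ) :=
  ArithmeticFunction.vonMangoldt_nonneg

open scoped ComplexOrder in
/-- Case B -/
lemma siegel_caseB {q : ℕ} [NeZero q] {χ : DirichletCharacter ℂ q} (h : χ ^ 2 = 1) (h1 : χ ≠ 1)
    {β : ℝ} (hβ : 3 / 4 ≤ β) (hβ1 : β < 1)
    (hz : ∀ σ : ℝ, β ≤ σ → σ < 1 → HL (1 : DirichletCharacter ℂ 1) σ * LFunction χ σ ≠ 0) :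
    (1 - β) / 512 * (Real.exp (-2) * (48 * (223 * (223 * q)) * 256) ^ (-(6 * (1 - β)))) ≤
      ‖LFunction χ 1‖ := by
  have hq1 : (1 : ℝ) ≤ q := by exact_mod_cast NeZero.one_le
  have h11 : (1 : DirichletCharacter ℂ 1) ^ 2 = 1 := one_pow _
  obtain ⟨r0, hr0, e0⟩ := LFunction_eq_re h11
  obtain ⟨r1, hr1, e1⟩ := LFunction_eq_re h
  have hd : Differentiable ℂ (LFunction χ) := by rw [← HL_eq_L h1]; exact HL_differentiable _
  refine siegel_step (g := (fun n : ℕ => (1 : DirichletCharacter ℂ 1) n * (ArithmeticFunction.vonMangoldt n : ℂ)) +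
    fun n : ℕ => χ n * (ArithmeticFunction.vonMangoldt n : ℂ)) (r := r0 * r1) hd
    ((HasLD_LFunction _).mul (HasLD_LFunction _)) ?_ ?_ ?_ ?_ ?_ hβ hβ1 ?_
  · intro n
    have hL := vM_nonneg n
    have : (1 : DirichletCharacter ℂ 1) n = 1 := by
      rw [Subsingleton.elim (n : ZMod 1) 1]; simp
    simp only [Pi.zero_apply, Pi.add_apply, this]
    rcases real_values h n with h | h | h <;> rw [h] <;> simp <;> exact_mod_cast by positivity
  · rw [Pi.mul_apply, e0, e1]; push_cast; rfl
  · nlinarith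
  · intro s hs
    rw [← HL_eq_L h1]; exact HL_ball χ hs
  · linarith
  · rw [← HL_eq_L h1] at hz ⊢
    set w : ℝ → ℝ := fun σ => (HL (1 : DirichletCharacter ℂ 1) σ * HL χ σ).re with hw
    have hwc : ContinuousOn w (Set.Icc β 2) := by
      apply Continuous.continuousOn
      have := (HL_differentiable (1 : DirichletCharacter ℂ 1)).continuous
      have := (HL_differentiable χ).continuous
      fun_prop
    have hwr : ∀ σ : ℝ, 0 < σ → HL (1 : DirichletCharacter ℂ 1) σ * HL χ σ = (w σ : ℂ) := by
      intro σ hσ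
      simp only [hw]
      rw [HL_real h11 hσ, HL_real h hσ, ← ofReal_mul, ofReal_re]
    have hne : ∀ σ ∈ Set.Icc β 2, w σ ≠ 0 := by
      intro σ hσ h0
      have hp : 0 < σ := by linarith [hσ.1]
      have e := hwr σ hp
      rw [h0, ofReal_zero] at e
      rcases lt_trichotomy σ 1 with hlt | rfl | hgt
      · exact hz σ hσ.1 hlt e
      · rw [ofReal_one, HL_one _ rfl, HL_of_ne χ h1] at e
        simp [kap] at e
        exact LFunction_apply_one_ne_zero h1 e
      · have hs1 : (σ : ℂ) ≠ 1 := by exact_mod_cast hgt.ne'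
        rw [HL_eq_pol_mul _ hs1, HL_of_ne χ h1] at e
        have a1 := LFunction_ne_zero_of_one_le_re χ (Or.inr hs1) (by simpa using hgt.le)
        have a2 := LFunction_ne_zero_of_one_le_re (1 : DirichletCharacter ℂ 1) (Or.inr hs1)
          (by simpa using hgt.le)
        have a3 : pol (1 : DirichletCharacter ℂ 1) σ ≠ 0 := by
          simp [pol]; exact sub_ne_zero.mpr hs1
        exact (mul_ne_zero (mul_ne_zero a3 a2) a1) e
    by_contra hneg
    push Not at hneg
    have hw2 : 0 < w 2 := by
      simp only [hw]
      have : HL (1 : DirichletCharacter ℂ 1) (2 : ℝ) * HL χ (2 : ℝ) = ((r0 * r1 : ℝ) : ℂ) := by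
        rw [HL_eq_pol_mul _ (by norm_num), HL_of_ne χ h1]
        simp only [ofReal_ofNat]
        rw [e0, e1]; simp [pol]; norm_num
      rw [this, ofReal_re]; positivity
    have := isPreconnected_Icc.intermediate_value (a := β) (b := 2) ⟨le_rfl, by linarith⟩
      ⟨by linarith, le_rfl⟩ hwc
    obtain ⟨σ, hσ, h0⟩ := this ⟨hneg.le, hw2.le⟩
    exact hne σ hσ h0
end PageProof

namespace PageProof
open Complex Filter Topology MeasureTheory
open DirichletCharacter

lemma totient_prod {q : ℕ} (hq : 0 < q) :
    (Nat.totient q : ℝ) / q = ∏ p ∈ q.primeFactors, (1 - (p : ℝ)⁻¹) := by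
  have hq' : (0 : ℝ) < q := by exact_mod_cast hq
  have := Nat.totient_eq_mul_prod_factors q
  have h2 : (Nat.totient q : ℝ) = q * ∏ p ∈ q.primeFactors, (1 - (p : ℝ)⁻¹) := by
    have h := congrArg (fun x : ℚ => (x : ℝ)) this
    push_cast at h
    exact h
  rw [h2]; field_simp

lemma L_lift {q Q : ℕ} [NeZero q] [NeZero Q] (hd : q ∣ Q) {χ : DirichletCharacter ℂ q} (h : χ ≠ 1) :
    ‖LFunction χ 1‖ * ((Nat.totient Q : ℝ) / Q) ≤ ‖LFunction (changeLevel hd χ) 1‖ ∧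
    ‖LFunction (changeLevel hd χ) 1‖ * ((Nat.totient Q : ℝ) / Q) ≤ ‖LFunction χ 1‖ := by
  have hQ : 0 < Q := NeZero.pos Q
  rw [LFunction_changeLevel hd χ (Or.inl h), norm_mul, norm_prod, totient_prod hQ]
  have hx : ∀ p ∈ Q.primeFactors, 0 ≤ 1 - (p : ℝ)⁻¹ ∧ ‖χ p * (p : ℂ) ^ (-1 : ℂ)‖ ≤ (p : ℝ)⁻¹ := by
    intro p hp
    have hp2 : (1 : ℝ) ≤ p := by exact_mod_cast (Nat.prime_of_mem_primeFactors hp).one_lt.le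
    have : (p : ℝ)⁻¹ ≤ 1 := inv_le_one_of_one_le₀ hp2
    refine ⟨by linarith, ?_⟩
    rw [norm_mul, cpow_neg_one, norm_inv, norm_natCast]
    calc _ ≤ 1 * (p : ℝ)⁻¹ := by gcongr; exact χ.norm_le_one _
      _ = _ := one_mul _
  constructor
  · apply mul_le_mul_of_nonneg_left _ (norm_nonneg _)
    apply Finset.prod_le_prod
    · intro p hp; exact (hx p hp).1
    · intro p hp
      have h1 := norm_sub_norm_le (1 : ℂ) (χ p * (p : ℂ) ^ (-1 : ℂ))
      rw [norm_one] at h1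
      have := (hx p hp).2
      linarith
  · rw [mul_assoc, ← prod_mul_distrib]
    apply mul_le_of_le_one_right (norm_nonneg _)
    apply prod_le_one
    · intro p hp; exact mul_nonneg (norm_nonneg _) (hx p hp).1
    · intro p hp
      obtain ⟨h1, h2⟩ := hx p hp
      have h3 : ‖1 - χ p * (p : ℂ) ^ (-1 : ℂ)‖ ≤ 1 + (p : ℝ)⁻¹ := by
        refine (norm_sub_le _ _).trans ?_
        rw [norm_one]; linarith
      calc _ ≤ (1 + (p : ℝ)⁻¹) * (1 - (p : ℝ)⁻¹) := by gcongr
        _ ≤ 1 := by nlinarith [sq_nonneg (p : ℝ)⁻¹]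

lemma L_one_le {q : ℕ} [NeZero q] {χ : DirichletCharacter ℂ q} (h : χ ≠ 1) {a : ℝ} (ha : 0 < a)
    (ha1 : a ≤ 1) : ‖LFunction χ 1‖ ≤ 44 / a * (q : ℝ) ^ a := by
  have := HL_norm_le χ ha ha1 (s := 1) (by simp; linarith)
  rw [HL_of_ne χ h, norm_one] at this
  refine this.trans (le_of_eq ?_)
  ring

open scoped ComplexOrder in
/-- Case A at common level -/
lemma siegel_caseA {q : ℕ} [NeZero q] {χ₁ χ₂ : DirichletCharacter ℂ q} (h₁ : χ₁ ^ 2 = 1)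
    (h₂ : χ₂ ^ 2 = 1) (n₁ : χ₁ ≠ 1) (n₂ : χ₂ ≠ 1) (n₃ : χ₁ * χ₂ ≠ 1)
    {β : ℝ} (hβ : 3 / 4 ≤ β) (hβ1 : β < 1)
    (hz : HL (1 : DirichletCharacter ℂ 1) β * LFunction χ₁ β = 0) :
    (1 - β) / 512 * (Real.exp (-2) * (48 * (223 * (223 * q * (223 * q * (223 * q)))) * 256)
      ^ (-(6 * (1 - β)))) ≤ ‖LFunction χ₁ 1‖ * (‖LFunction χ₂ 1‖ * ‖LFunction (χ₁ * χ₂) 1‖) := by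
  have hq1 : (1 : ℝ) ≤ q := by exact_mod_cast NeZero.one_le
  have h11 : (1 : DirichletCharacter ℂ 1) ^ 2 = 1 := one_pow _
  have h₃ : (χ₁ * χ₂) ^ 2 = 1 := by rw [mul_pow, h₁, h₂, one_mul]
  obtain ⟨r0, hr0, e0⟩ := LFunction_eq_re h11
  obtain ⟨r1, hr1, e1⟩ := LFunction_eq_re h₁
  obtain ⟨r2, hr2, e2⟩ := LFunction_eq_re h₂
  obtain ⟨r3, hr3, e3⟩ := LFunction_eq_re h₃
  have hd₁ : Differentiable ℂ (LFunction χ₁) := by rw [← HL_eq_L n₁]; exact HL_differentiable _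
  have hd₂ : Differentiable ℂ (LFunction χ₂) := by rw [← HL_eq_L n₂]; exact HL_differentiable _
  have hd₃ : Differentiable ℂ (LFunction (χ₁ * χ₂)) := by
    rw [← HL_eq_L n₃]; exact HL_differentiable _
  rw [← norm_mul, ← norm_mul]
  refine siegel_step (R := LFunction χ₁ * (LFunction χ₂ * LFunction (χ₁ * χ₂)))
    (g := (fun n : ℕ => (1 : DirichletCharacter ℂ 1) n * (ArithmeticFunction.vonMangoldt n : ℂ)) +
    ((fun n : ℕ => χ₁ n * (ArithmeticFunction.vonMangoldt n : ℂ)) +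
    ((fun n : ℕ => χ₂ n * (ArithmeticFunction.vonMangoldt n : ℂ)) +
    (fun n : ℕ => (χ₁ * χ₂) n * (ArithmeticFunction.vonMangoldt n : ℂ)))))
    (r := r0 * (r1 * (r2 * r3))) (hd₁.mul (hd₂.mul hd₃))
    ((HasLD_LFunction _).mul ((HasLD_LFunction _).mul ((HasLD_LFunction _).mul (HasLD_LFunction _))))
     ?_ ?_ ?_ ?_ ?_ hβ hβ1 ?_
  · intro n
    have hL := vM_nonneg n
    have : (1 : DirichletCharacter ℂ 1) n = 1 := by
      rw [Subsingleton.elim (n : ZMod 1) 1]; simp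
    simp only [Pi.zero_apply, Pi.add_apply, this, MulChar.mul_apply]
    rcases real_values h₁ n with h | h | h <;> rcases real_values h₂ n with h' | h' | h' <;>
      rw [h, h'] <;> simp <;> norm_cast <;> positivity
  · simp only [Pi.mul_apply, e0, e1, e2, e3]; push_cast; rfl
  · calc (1 / 256 : ℝ) = 1 / 4 * (1 / 4 * (1 / 4 * (1 / 4))) := by norm_num
      _ ≤ _ := by gcongr
  · intro s hs
    simp only [Pi.mul_apply, norm_mul]
    rw [← HL_eq_L n₁, ← HL_eq_L n₂, ← HL_eq_L n₃]
    have a1 := HL_ball χ₁ hs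
    have a2 := HL_ball χ₂ hs
    have a3 := HL_ball (χ₁ * χ₂) hs
    gcongr
  · have : (1 : ℝ) ≤ 223 * q := by linarith
    exact one_le_mul_of_one_le_of_one_le this (one_le_mul_of_one_le_of_one_le this this)
  · simp only [Pi.mul_apply]
    rw [← mul_assoc, hz, zero_mul]; simp

/-- Siegel theorem -/
theorem siegel {ε : ℝ} (hε : 0 < ε) : ∃ c : ℝ, 0 < c ∧ ∀ (q : ℕ) [NeZero q]
    (χ : DirichletCharacter ℂ q), χ ^ 2 = 1 → χ ≠ 1 → c * (q : ℝ) ^ (-ε) ≤ ‖LFunction χ 1‖ := by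
  set a : ℝ := min (ε / 24) (1 / 4) with ha
  have ha0 : 0 < a := by rw [ha]; positivity
  have ha4 : a ≤ 1 / 4 := min_le_right _ _
  have haε : 24 * a ≤ ε := by
    have : a ≤ ε / 24 := min_le_left _ _
    linarith
  by_cases hA : ∃ (q₁ : ℕ) (_ : NeZero q₁) (χ₁ : DirichletCharacter ℂ q₁) (β : ℝ), χ₁ ^ 2 = 1 ∧
      χ₁ ≠ 1 ∧ 1 - a ≤ β ∧ β < 1 ∧ HL (1 : DirichletCharacter ℂ 1) β * LFunction χ₁ β = 0
  · obtain ⟨q₁, _, χ₁, β, h₁, n₁, hβ, hβ1, hz⟩ := hA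
    obtain ⟨ct, hct, htot⟩ := totient_lower ha0
    set L1 := ‖LFunction χ₁ 1‖ with hL1
    have hL1pos : 0 < L1 := norm_pos_iff.mpr (LFunction_apply_one_ne_zero n₁)
    set K : ℝ := 48 * (223 * (223 * (223 * 223))) * 256 with hK
    have h1β : 0 < 1 - β := by linarith
    set c1 : ℝ := (1 - β) / 512 * (Real.exp (-2) * K ^ (-(6 * (1 - β)))) with hc1
    have hK0 : 0 < K := by rw [hK]; norm_num
    have hc1pos : 0 < c1 := by positivity
    set c2 : ℝ := min (L1 * ct) (c1 / (44 / a) ^ 2) with hc2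
    have hc2pos : 0 < c2 := by rw [hc2]; positivity
    have hq₁ : (0 : ℝ) < q₁ := by exact_mod_cast NeZero.pos q₁
    refine ⟨c2 * ct * (q₁ : ℝ) ^ (-(21 * a)), by positivity, fun q _ χ hχ hn => ?_⟩
    have hq0 : (1 : ℝ) ≤ q := by exact_mod_cast NeZero.one_le
    have : NeZero (q₁ * q) := ⟨mul_ne_zero (NeZero.ne _) (NeZero.ne _)⟩
    set Q := q₁ * q with hQ
    have hQ1 : (1 : ℝ) ≤ Q := by exact_mod_cast NeZero.one_le
    have hQ0 : (0 : ℝ) < Q := by linarith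
    have d₁ : q₁ ∣ Q := Dvd.intro _ rfl
    have d₂ : q ∣ Q := Dvd.intro_left _ rfl
    set ψ₁ := changeLevel d₁ χ₁ with hψ₁
    set ψ₂ := changeLevel d₂ χ with hψ₂
    have hs₁ : ψ₁ ^ 2 = 1 := by rw [hψ₁, ← map_pow, h₁, map_one]
    have hs₂ : ψ₂ ^ 2 = 1 := by rw [hψ₂, ← map_pow, hχ, map_one]
    have hn₁ : ψ₁ ≠ 1 := fun h => n₁ ((changeLevel_eq_one_iff d₁).mp h)
    have hn₂ : ψ₂ ≠ 1 := fun h => hn ((changeLevel_eq_one_iff d₂).mp h)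
    have htotQ := htot Q (NeZero.pos Q)
    have hlow : c2 * (Q : ℝ) ^ (-(20 * a)) ≤ ‖LFunction ψ₂ 1‖ := by
      by_cases h3 : ψ₁ * ψ₂ = 1
      · have : ψ₁ = ψ₂ := by
          have e : ψ₁ * (ψ₁ * ψ₂) = ψ₂ := by rw [← mul_assoc, ← sq, hs₁, one_mul]
          rw [h3, mul_one] at e; exact e
        rw [← this]
        calc c2 * (Q : ℝ) ^ (-(20 * a)) ≤ (L1 * ct) * (Q : ℝ) ^ (-a) := by
              gcongr
              · exact min_le_left _ _
              · linarith
          _ = L1 * (ct * (Q : ℝ) ^ (-a)) := by ring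
          _ ≤ L1 * ((Nat.totient Q : ℝ) / Q) := by gcongr
          _ ≤ _ := (L_lift d₁ n₁).1
      · have hz' : HL (1 : DirichletCharacter ℂ 1) β * LFunction ψ₁ β = 0 := by
          rw [hψ₁, LFunction_changeLevel d₁ χ₁ (Or.inl n₁), ← mul_assoc, hz, zero_mul]
        have hA := siegel_caseA hs₁ hs₂ hn₁ hn₂ h3 (by linarith) hβ1 hz'
        have e1 : (48 * (223 * (223 * Q * (223 * Q * (223 * (Q : ℝ))))) * 256) = K * (Q : ℝ) ^ (3 : ℝ) := by
          rw [hK]; norm_cast; push_cast; ring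
        rw [e1, Real.mul_rpow hK0.le (by positivity), ← Real.rpow_mul hQ0.le] at hA
        have hu1 := L_one_le hn₁ ha0 (by linarith)
        have hu3 := L_one_le h3 ha0 (by linarith)
        have hexp : (Q : ℝ) ^ (-(18 * a)) ≤ (Q : ℝ) ^ ((3 : ℝ) * (-(6 * (1 - β)))) := by
          apply Real.rpow_le_rpow_of_exponent_le hQ1; linarith
        have hchain : c1 * (Q : ℝ) ^ (-(18 * a)) ≤
            (44 / a) ^ 2 * (Q : ℝ) ^ (2 * a) * ‖LFunction ψ₂ 1‖ := by
          calc c1 * (Q : ℝ) ^ (-(18 * a)) ≤ c1 * (Q : ℝ) ^ ((3 : ℝ) * (-(6 * (1 - β)))) := by gcongr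
            _ ≤ ‖LFunction ψ₁ 1‖ * (‖LFunction ψ₂ 1‖ * ‖LFunction (ψ₁ * ψ₂) 1‖) := by
              refine le_trans (le_of_eq ?_) hA
              rw [hc1]; ring
            _ ≤ (44 / a * (Q : ℝ) ^ a) * (‖LFunction ψ₂ 1‖ * (44 / a * (Q : ℝ) ^ a)) := by gcongr
            _ = _ := by
              rw [show 2 * a = a + a by ring, Real.rpow_add hQ0]; ring
        have hP : 0 < (44 / a) ^ 2 * (Q : ℝ) ^ (2 * a) := by positivity
        calc c2 * (Q : ℝ) ^ (-(20 * a)) ≤ c1 / (44 / a) ^ 2 * (Q : ℝ) ^ (-(20 * a)) := by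
              gcongr; exact min_le_right _ _
          _ = c1 * (Q : ℝ) ^ (-(18 * a)) / ((44 / a) ^ 2 * (Q : ℝ) ^ (2 * a)) := by
              rw [show -(20 * a) = -(18 * a) - 2 * a by ring, Real.rpow_sub hQ0]; field_simp
          _ ≤ _ := by rw [div_le_iff₀ hP]; linarith
    have hfin := (L_lift d₂ hn).2
    have hQq : (Q : ℝ) = q₁ * q := by rw [hQ]; push_cast; rfl
    calc c2 * ct * (q₁ : ℝ) ^ (-(21 * a)) * (q : ℝ) ^ (-ε)
        ≤ c2 * ct * (q₁ : ℝ) ^ (-(21 * a)) * (q : ℝ) ^ (-(21 * a)) := by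
          gcongr
          linarith
      _ = (c2 * (Q : ℝ) ^ (-(20 * a))) * (ct * (Q : ℝ) ^ (-a)) := by
          have e : (Q : ℝ) ^ (-(21 * a)) = (Q : ℝ) ^ (-(20 * a)) * (Q : ℝ) ^ (-a) := by
            rw [← Real.rpow_add hQ0]; ring_nf
          have e' : (Q : ℝ) ^ (-(21 * a)) = (q₁ : ℝ) ^ (-(21 * a)) * (q : ℝ) ^ (-(21 * a)) := by
            rw [hQq, Real.mul_rpow hq₁.le (by positivity)]
          rw [mul_assoc, ← e', e]; ring
      _ ≤ ‖LFunction ψ₂ 1‖ * ((Nat.totient Q : ℝ) / Q) := by gcongr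
      _ ≤ _ := hfin
  · push Not at hA
    set K : ℝ := 48 * (223 * 223) * 256 with hK
    have hK0 : 0 < K := by rw [hK]; norm_num
    refine ⟨a / 512 * (Real.exp (-2) * K ^ (-(6 * a))), by positivity, fun q _ χ hχ hn => ?_⟩
    have hq0 : (1 : ℝ) ≤ q := by exact_mod_cast NeZero.one_le
    have := siegel_caseB hχ hn (β := 1 - a) (by linarith) (by linarith)
      (fun σ h1 h2 => hA q inferInstance χ σ hχ hn h1 h2)
    refine le_trans ?_ this
    rw [show 1 - (1 - a) = a by ring, show 48 * (223 * (223 * (q : ℝ))) * 256 = K * q by rw [hK]; ring,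
      Real.mul_rpow hK0.le (by positivity)]
    have : (q : ℝ) ^ (-ε) ≤ (q : ℝ) ^ (-(6 * a)) := by
      apply Real.rpow_le_rpow_of_exponent_le hq0; linarith
    calc _ ≤ a / 512 * (Real.exp (-2) * K ^ (-(6 * a))) * (q : ℝ) ^ (-(6 * a)) := by gcongr
      _ = _ := by ring

theorem siegel_HL {ε : ℝ} (hε : 0 < ε) : ∃ c : ℝ, 0 < c ∧ ∀ (q : ℕ) [NeZero q]
    (χ : DirichletCharacter ℂ q), χ ^ 2 = 1 → c * (q : ℝ) ^ (-ε) ≤ ‖HL χ 1‖ := by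
  obtain ⟨c1, h1, H1⟩ := siegel hε
  obtain ⟨c2, h2, H2⟩ := totient_lower hε
  refine ⟨min c1 c2, by positivity, fun q _ χ hχ => ?_⟩
  by_cases h : χ = 1
  · rw [HL_one χ h, Complex.norm_real, Real.norm_of_nonneg (kap_nonneg χ)]
    have : kap χ = (Nat.totient q : ℝ) / q := by simp [kap, h]
    rw [this]
    refine le_trans ?_ (H2 q (NeZero.pos q))
    gcongr; exact min_le_right _ _
  · rw [HL_of_ne χ h]
    refine le_trans ?_ (H1 q χ hχ h)
    gcongr; exact min_le_left _ _
end PageProof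

namespace PageProof
open Complex Filter Topology MeasureTheory
open DirichletCharacter

variable {q : ℕ} [NeZero q]
set_option linter.unusedSectionVars false

lemma abel_char (χ : DirichletCharacter ℂ q) (s : ℂ) {Y : ℝ} (hY : 1 ≤ Y) :
    s * ∫ t in Set.Ioc (1 : ℝ) Y, (t : ℂ) ^ (-(s + 1)) * sumChar χ t =
      ∑ k ∈ Icc 1 ⌊Y⌋₊, (k : ℂ) ^ (-s) * χ k - (Y : ℂ) ^ (-s) * sumChar χ Y := by
  set c : ℕ → ℂ := fun n => if n = 0 then 0 else χ n with hc
  have hcs : ∀ n : ℕ, ∑ k ∈ Icc 0 n, c k = ∑ k ∈ Icc 1 n, χ k := by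
    intro n
    rw [← Finset.insert_Icc_succ_left_eq_Icc (Nat.zero_le n), sum_insert (by simp)]
    simp only [hc, if_true, zero_add]
    apply sum_congr rfl
    intro k hk
    have : k ≠ 0 := by
      have := (mem_Icc.mp hk).1
      simp at this; omega
    simp [this]
  have hcs2 : ∀ n : ℕ, ∑ k ∈ Icc 0 n, (k : ℂ) ^ (-s) * c k = ∑ k ∈ Icc 1 n, (k : ℂ) ^ (-s) * χ k := by
    intro n
    rw [← Finset.insert_Icc_succ_left_eq_Icc (Nat.zero_le n), sum_insert (by simp)]
    simp only [hc, if_true, zero_add, mul_zero]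
    apply sum_congr rfl
    intro k hk
    have : k ≠ 0 := by
      have := (mem_Icc.mp hk).1
      simp at this; omega
    simp [this]
  have hder : ∀ t ∈ Set.Icc (1 : ℝ) Y, HasDerivAt (fun t : ℝ => (t : ℂ) ^ (-s)) (-s * (t : ℂ) ^ (-s - 1)) t := by
    intro t ht
    by_cases hs : s = 0
    · subst hs; simp; exact hasDerivAt_const _ _
    · have h0 : t ≠ 0 := by linarith [ht.1]
      exact hasDerivAt_ofReal_cpow_const h0 (neg_ne_zero.mpr hs)
  have hcont : ContinuousOn (fun t : ℝ => -s * (t : ℂ) ^ (-s - 1)) (Set.Icc 1 Y) := by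
    intro t ht
    have h0 : t ≠ 0 := by linarith [ht.1]
    apply ContinuousAt.continuousWithinAt
    apply ContinuousAt.mul continuousAt_const
    exact Complex.continuousAt_ofReal_cpow_const t (-s - 1) (Or.inr h0)
  have hIntgr : IntegrableOn (deriv (fun t : ℝ => (t : ℂ) ^ (-s))) (Set.Icc 1 Y) := by
    apply (hcont.integrableOn_Icc).congr_fun _ measurableSet_Icc
    intro t ht; exact ((hder t ht).deriv).symm
  have := sum_mul_eq_sub_integral_mul₀ (c := c) (f := fun t : ℝ => (t : ℂ) ^ (-s)) (by simp [hc]) Y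
    (fun t ht => (hder t ht).differentiableAt) hIntgr
  simp only [hcs] at this
  simp only [ofReal_natCast] at this
  rw [hcs2] at this
  rw [this]
  have e : ∫ t in Set.Ioc (1 : ℝ) Y, deriv (fun t : ℝ => (t : ℂ) ^ (-s)) t * ∑ k ∈ Icc 1 ⌊t⌋₊, χ k
      = ∫ t in Set.Ioc (1 : ℝ) Y, (-s) * ((t : ℂ) ^ (-(s + 1)) * sumChar χ t) := by
    apply setIntegral_congr_fun measurableSet_Ioc
    intro t ht
    simp only
    rw [(hder t ⟨ht.1.le, ht.2⟩).deriv, sumChar]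
    rw [show -s - 1 = -(s + 1) by ring]; ring
  rw [e, integral_const_mul, sumChar]
  ring

lemma Kfun_growth {a : ℝ} (ha : 0 < a) (ha1 : a ≤ 1) : ∃ C : ℝ, 1 ≤ C ∧ ∀ (q : ℕ) [NeZero q]
    (χ : DirichletCharacter ℂ q) (s : ℂ), 1 - a / 2 ≤ s.re →
    ‖Kfun χ s‖ ≤ C * ((q : ℝ) * (1 + ‖s‖)) ^ a := by
  set D : ℝ := ∑' n : ℕ, 1 / (n : ℝ) ^ (1 + a / 2) with hD
  have hsum : Summable (fun n : ℕ => 1 / (n : ℝ) ^ (1 + a / 2)) :=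
    Real.summable_one_div_nat_rpow.mpr (by linarith)
  have hD0 : 0 ≤ D := tsum_nonneg fun n => by positivity
  refine ⟨20 / a + (D + 15), by have : 0 < 20 / a := by positivity
                                linarith, fun q _ χ s hs => ?_⟩
  have hq1 : (1 : ℝ) ≤ q := by exact_mod_cast NeZero.one_le
  set Y : ℝ := (q : ℝ) * (1 + ‖s‖) with hY
  have hY1 : 1 ≤ Y := one_le_mul_of_one_le_of_one_le hq1 (by linarith [norm_nonneg s])
  have hY0 : 0 < Y := by linarith
  have hYa : 1 ≤ Y ^ a := Real.one_le_rpow hY1 ha.le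
  by_cases hs1 : ‖s - 1‖ < 1
  · have h1 := Kfun_norm_le χ ha.le ha1 (s := s) (by linarith)
    have h2 : ‖s‖ ≤ 2 := by
      calc ‖s‖ = ‖(s - 1) + 1‖ := by ring_nf
        _ ≤ ‖s - 1‖ + ‖(1 : ℂ)‖ := norm_add_le _ _
        _ ≤ 2 := by rw [norm_one]; linarith
    calc _ ≤ ‖s‖ * (5 * (q : ℝ) ^ a / (s.re + a - 1)) := h1
      _ ≤ 2 * (5 * Y ^ a / (a / 2)) := by
        have : (q : ℝ) ≤ Y := by rw [hY]; nlinarith [norm_nonneg s]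
        have h3 : 0 < s.re + a - 1 := by linarith
        gcongr
        linarith
      _ = 20 / a * Y ^ a := by field_simp; ring
      _ ≤ _ := by gcongr; linarith
  · push Not at hs1
    have hne : s ≠ 1 := by rintro rfl; norm_num at hs1
    have hσ : 1 / 2 ≤ s.re := by linarith
    have hss : ‖s‖ ≤ 2 * ‖s - 1‖ := by
      calc ‖s‖ = ‖(s - 1) + 1‖ := by ring_nf
        _ ≤ ‖s - 1‖ + ‖(1 : ℂ)‖ := norm_add_le _ _
        _ ≤ _ := by rw [norm_one]; linarith
    have hG : ∀ t : ℝ, 1 < t → ‖sumChar χ t - (kap χ : ℂ) * t‖ ≤ 5 * q := by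
      intro t ht
      have := norm_gfun_le_const χ (lt_trans one_pos ht)
      unfold gfun at this
      rwa [Set.indicator_of_mem (show t ∈ Set.Ioi 1 from ht)] at this
    -- integrability
    have hgm : ∀ t : ℝ, 1 < t → ‖(t : ℂ) ^ (-(s + 1)) * (sumChar χ t - (kap χ : ℂ) * t)‖
        ≤ 5 * q * t ^ (-s.re - 1) := by
      intro t ht
      have ht0 : 0 < t := by linarith
      rw [norm_mul, norm_cpow_eq_rpow_re_of_pos ht0, show (-(s + 1)).re = -s.re - 1 by simp; ring,
        mul_comm]
      gcongr; exact hG t ht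
    have hmeas : Measurable (fun t : ℝ => (t : ℂ) ^ (-(s + 1)) * (sumChar χ t - (kap χ : ℂ) * t)) := by
      have := measurable_sumChar χ
      fun_prop
    have hI1 : IntegrableOn (fun t : ℝ => (t : ℂ) ^ (-(s + 1)) * (sumChar χ t - (kap χ : ℂ) * t))
        (Set.Ioi 1) := by
      have hIntgr : IntegrableOn (fun t : ℝ => 5 * (q : ℝ) * t ^ (-s.re - 1)) (Set.Ioi 1) :=
        (integrableOn_Ioi_rpow_of_lt (by linarith) one_pos).const_mul _
      refine hIntgr.mono' hmeas.aestronglyMeasurable ?_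
      filter_upwards [ae_restrict_mem measurableSet_Ioi] with t ht using hgm t ht
    have hsplit : Kfun χ s = s * (∫ t in Set.Ioc (1 : ℝ) Y, (t : ℂ) ^ (-(s + 1)) * (sumChar χ t - (kap χ : ℂ) * t))
        + s * ∫ t in Set.Ioi Y, (t : ℂ) ^ (-(s + 1)) * (sumChar χ t - (kap χ : ℂ) * t) := by
      unfold Kfun
      rw [mellin_gfun, ← mul_add, ← setIntegral_union (Set.Ioc_disjoint_Ioi le_rfl) measurableSet_Ioi
        (hI1.mono_set Set.Ioc_subset_Ioi_self) (hI1.mono_set (Set.Ioi_subset_Ioi hY1)),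
        Set.Ioc_union_Ioi_eq_Ioi hY1]
    have hYexp : ∀ e : ℝ, e ≤ a → Y ^ e ≤ Y ^ a := fun e he =>
      Real.rpow_le_rpow_of_exponent_le hY1 he
    have htail : ‖s * ∫ t in Set.Ioi Y, (t : ℂ) ^ (-(s + 1)) * (sumChar χ t - (kap χ : ℂ) * t)‖
        ≤ 10 * Y ^ a := by
      have hIntgr : IntegrableOn (fun t : ℝ => 5 * (q : ℝ) * t ^ (-s.re - 1)) (Set.Ioi Y) :=
        (integrableOn_Ioi_rpow_of_lt (by linarith) hY0).const_mul _
      have h1 : ‖∫ t in Set.Ioi Y, (t : ℂ) ^ (-(s + 1)) * (sumChar χ t - (kap χ : ℂ) * t)‖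
          ≤ ∫ t in Set.Ioi Y, 5 * (q : ℝ) * t ^ (-s.re - 1) := by
        apply norm_integral_le_of_norm_le hIntgr
        filter_upwards [ae_restrict_mem measurableSet_Ioi] with t ht
        exact hgm t (lt_of_le_of_lt hY1 ht)
      rw [integral_const_mul, integral_Ioi_rpow_of_lt (by linarith) hY0] at h1
      have h2 : -Y ^ (-s.re - 1 + 1) / (-s.re - 1 + 1) ≤ 2 * Y ^ (-s.re) := by
        rw [sub_add_cancel, neg_div_neg_eq, div_le_iff₀ (by linarith)]
        have : 0 < Y ^ (-s.re) := by positivity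
        nlinarith
      rw [norm_mul]
      calc _ ≤ ‖s‖ * (5 * q * (2 * Y ^ (-s.re))) := by
            gcongr; exact h1.trans (by gcongr)
        _ = 10 * ((q * ‖s‖) * Y ^ (-s.re)) := by ring
        _ ≤ 10 * (Y * Y ^ (-s.re)) := by
            gcongr; rw [hY]; nlinarith
        _ = 10 * Y ^ (1 - s.re) := by
            rw [sub_eq_add_neg, Real.rpow_add hY0, Real.rpow_one]
        _ ≤ _ := by
            have := hYexp (1 - s.re) (by linarith)
            linarith
    have hcpi : IntegrableOn (fun t : ℝ => (kap χ : ℂ) * (t : ℂ) ^ (-s)) (Set.Ioc 1 Y) := by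
      have : ContinuousOn (fun t : ℝ => (kap χ : ℂ) * (t : ℂ) ^ (-s)) (Set.Icc 1 Y) := by
        intro t ht
        have h0 : t ≠ 0 := by linarith [ht.1]
        apply ContinuousAt.continuousWithinAt
        apply ContinuousAt.mul continuousAt_const
        exact Complex.continuousAt_ofReal_cpow_const t (-s) (Or.inr h0)
      exact this.integrableOn_Icc.mono_set Set.Ioc_subset_Icc_self
    have hhead : s * (∫ t in Set.Ioc (1 : ℝ) Y, (t : ℂ) ^ (-(s + 1)) * (sumChar χ t - (kap χ : ℂ) * t))
        = (∑ k ∈ Icc 1 ⌊Y⌋₊, (k : ℂ) ^ (-s) * χ k - (Y : ℂ) ^ (-s) * sumChar χ Y)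
          - (kap χ : ℂ) * (s * (((Y : ℂ) ^ (-s + 1) - 1) / (-s + 1))) := by
      rw [← abel_char χ s hY1]
      have e1 : ∀ t ∈ Set.Ioc (1 : ℝ) Y, (t : ℂ) ^ (-(s + 1)) * sumChar χ t =
          (t : ℂ) ^ (-(s + 1)) * (sumChar χ t - (kap χ : ℂ) * t) + (kap χ : ℂ) * (t : ℂ) ^ (-s) := by
        intro t ht
        have ht0 : (t : ℂ) ≠ 0 := by exact_mod_cast (by linarith [ht.1] : t ≠ 0)
        have : (t : ℂ) ^ (-s) = (t : ℂ) ^ (-(s + 1)) * t := by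
          rw [show -s = -(s + 1) + 1 by ring, cpow_add _ _ ht0, cpow_one]
        rw [this]; ring
      rw [setIntegral_congr_fun measurableSet_Ioc e1, integral_add
        (hI1.mono_set Set.Ioc_subset_Ioi_self) hcpi, integral_const_mul,
        ← intervalIntegral.integral_of_le hY1 (f := fun t : ℝ => (t : ℂ) ^ (-s)), integral_cpow]
      · simp; ring
      · right
        refine ⟨fun h => hne (neg_injective (by rw [h])), ?_⟩
        rw [Set.uIcc_of_le hY1]; intro h; linarith [h.1]
    have b1 : ‖∑ k ∈ Icc 1 ⌊Y⌋₊, (k : ℂ) ^ (-s) * χ k‖ ≤ D * Y ^ a := by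
      calc _ ≤ ∑ k ∈ Icc 1 ⌊Y⌋₊, (1 / (k : ℝ) ^ (1 + a / 2)) * Y ^ a := by
            apply (norm_sum_le _ _).trans
            apply sum_le_sum
            intro k hk
            have hk1 : (1 : ℝ) ≤ k := by exact_mod_cast (mem_Icc.mp hk).1
            have hkY : (k : ℝ) ≤ Y := (Nat.le_floor_iff hY0.le).mp (mem_Icc.mp hk).2
            have hk0 : (0 : ℝ) < k := by linarith
            rw [norm_mul, norm_natCast_cpow_of_pos (by exact_mod_cast hk0), neg_re]
            calc (k : ℝ) ^ (-s.re) * ‖χ k‖ ≤ (k : ℝ) ^ (-(1 + a / 2) + a) * 1 := by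
                  gcongr
                  · linarith
                  · exact χ.norm_le_one _
              _ = (1 / (k : ℝ) ^ (1 + a / 2)) * (k : ℝ) ^ a := by
                  rw [mul_one, Real.rpow_add hk0, Real.rpow_neg hk0.le, one_div]
              _ ≤ _ := by gcongr
        _ ≤ _ := by
          rw [← sum_mul]
          gcongr
          exact hsum.sum_le_tsum _ fun n _ => by positivity
    have b2 : ‖(Y : ℂ) ^ (-s) * sumChar χ Y‖ ≤ Y ^ a := by
      rw [norm_mul, norm_cpow_eq_rpow_re_of_pos hY0, neg_re]
      have : ‖sumChar χ Y‖ ≤ Y := by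
        unfold sumChar
        calc _ ≤ ∑ k ∈ Icc 1 ⌊Y⌋₊, (1 : ℝ) := (norm_sum_le _ _).trans
              (sum_le_sum fun k _ => χ.norm_le_one _)
          _ = ⌊Y⌋₊ := by simp
          _ ≤ Y := Nat.floor_le hY0.le
      calc _ ≤ Y ^ (-s.re) * Y := by gcongr
        _ = Y ^ (1 - s.re) := by rw [sub_eq_add_neg, Real.rpow_add hY0, Real.rpow_one, mul_comm]
        _ ≤ _ := hYexp _ (by linarith)
    have b3 : ‖(kap χ : ℂ) * (s * (((Y : ℂ) ^ (-s + 1) - 1) / (-s + 1)))‖ ≤ 4 * Y ^ a := by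
      have hn : ‖-s + 1‖ = ‖s - 1‖ := by rw [← norm_neg]; ring_nf
      rw [norm_mul, norm_mul, norm_div, Complex.norm_real, Real.norm_of_nonneg (kap_nonneg χ), hn]
      have h1 : ‖(Y : ℂ) ^ (-s + 1) - 1‖ ≤ 2 * Y ^ a := by
        refine (norm_sub_le _ _).trans ?_
        rw [norm_cpow_eq_rpow_re_of_pos hY0, norm_one]
        have := hYexp (-s + 1).re (by simp; linarith)
        linarith
      have hs0 : 0 < ‖s - 1‖ := by linarith
      calc _ ≤ 1 * ((2 * ‖s - 1‖) * (2 * Y ^ a / ‖s - 1‖)) := by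
            gcongr; exact kap_le_one χ
        _ = _ := by field_simp; ring
    rw [hsplit, hhead]
    have h20 : 0 ≤ 20 / a * Y ^ a := by positivity
    have n1 := norm_add_le (∑ k ∈ Icc 1 ⌊Y⌋₊, (k : ℂ) ^ (-s) * χ k - (Y : ℂ) ^ (-s) * sumChar χ Y
          - (kap χ : ℂ) * (s * (((Y : ℂ) ^ (-s + 1) - 1) / (-s + 1)))) (s * ∫ t in Set.Ioi Y, (t : ℂ) ^ (-(s + 1)) * (sumChar χ t - (kap χ : ℂ) * t))
    have n2 := norm_sub_le (∑ k ∈ Icc 1 ⌊Y⌋₊, (k : ℂ) ^ (-s) * χ k - (Y : ℂ) ^ (-s) * sumChar χ Y)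
          ((kap χ : ℂ) * (s * (((Y : ℂ) ^ (-s + 1) - 1) / (-s + 1))))
    have n3 := norm_sub_le (∑ k ∈ Icc 1 ⌊Y⌋₊, (k : ℂ) ^ (-s) * χ k) ((Y : ℂ) ^ (-s) * sumChar χ Y)
    nlinarith
end PageProof

namespace PageProof
open Complex Filter Topology MeasureTheory
open DirichletCharacter

variable {q : ℕ} [NeZero q]
set_option linter.unusedSectionVars false

/-- normalised L-function -/
noncomputable def NL (χ : DirichletCharacter ℂ q) (s : ℂ) : ℂ := HL χ s / (pol χ s + 2)

lemma pol_of_one {χ : DirichletCharacter ℂ q} (h : χ = 1) (s : ℂ) : pol χ s = s - 1 := by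
  simp [pol, h]

lemma pol_of_ne {χ : DirichletCharacter ℂ q} (h : χ ≠ 1) (s : ℂ) : pol χ s = 1 := by
  simp [pol, h]

lemma norm_lower_of_re {s : ℂ} (hs : 0 < s.re) : 1 ≤ ‖s + 1‖ := by
  have := Complex.re_le_norm (s + 1)
  simp at this; linarith

lemma pol_add_two_ne (χ : DirichletCharacter ℂ q) {s : ℂ} (hs : 0 < s.re) : pol χ s + 2 ≠ 0 := by
  by_cases h : χ = 1
  · rw [pol_of_one h]
    have := norm_lower_of_re hs
    intro h0
    rw [show s + 1 = s - 1 + 2 by ring, h0, norm_zero] at this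
    linarith
  · rw [pol_of_ne h]; norm_num

lemma NL_differentiableAt (χ : DirichletCharacter ℂ q) {s : ℂ} (hs : 0 < s.re) :
    DifferentiableAt ℂ (NL χ) s :=
  (HL_differentiable χ s).div ((pol_differentiable χ s).add_const 2) (pol_add_two_ne χ hs)

lemma NL_norm_le_K (χ : DirichletCharacter ℂ q) {s : ℂ} (hs : 0 < s.re) :
    ‖NL χ s‖ ≤ 1 + ‖Kfun χ s‖ := by
  unfold NL
  rw [HL_eq χ hs]
  by_cases h : χ = 1
  · rw [pol_of_one h, show s - 1 + 2 = s + 1 by ring, norm_div]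
    have h1 := norm_lower_of_re hs
    rw [div_le_iff₀ (by linarith)]
    have h2 : ‖s‖ ≤ ‖s + 1‖ := by
      rw [Complex.norm_def, Complex.norm_def]
      apply Real.sqrt_le_sqrt
      simp [normSq_apply]; nlinarith
    have h3 : ‖s - 1‖ ≤ ‖s + 1‖ := by
      rw [Complex.norm_def, Complex.norm_def]
      apply Real.sqrt_le_sqrt
      simp [normSq_apply]; nlinarith
    calc _ ≤ ‖(kap χ : ℂ) * s‖ + ‖(s - 1) * Kfun χ s‖ := norm_add_le _ _
      _ = kap χ * ‖s‖ + ‖s - 1‖ * ‖Kfun χ s‖ := by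
        rw [norm_mul, norm_mul, Complex.norm_real, Real.norm_of_nonneg (kap_nonneg χ)]
      _ ≤ 1 * ‖s + 1‖ + ‖s + 1‖ * ‖Kfun χ s‖ := by
        gcongr; exact kap_le_one χ
      _ = _ := by ring
  · rw [pol_of_ne h]
    have : kap χ = 0 := by simp [kap, h]
    rw [this]; simp only [ofReal_zero, zero_mul, zero_add, one_mul, norm_div]
    have h3 : ‖(1 : ℂ) + 2‖ = 3 := by norm_num
    rw [h3, div_le_iff₀ (by norm_num)]
    linarith [norm_nonneg (Kfun χ s)]

lemma NL_growth {a : ℝ} (ha : 0 < a) (ha1 : a ≤ 1) : ∃ C : ℝ, 1 ≤ C ∧ ∀ (q : ℕ) [NeZero q]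
    (χ : DirichletCharacter ℂ q) (s : ℂ), 1 - a / 2 ≤ s.re →
    ‖NL χ s‖ ≤ C * ((q : ℝ) * (1 + ‖s‖)) ^ a := by
  obtain ⟨C, hC, H⟩ := Kfun_growth ha ha1
  refine ⟨1 + C, by linarith, fun q _ χ s hs => ?_⟩
  have h1 := NL_norm_le_K χ (s := s) (by linarith)
  have h2 := H q χ s hs
  have hq1 : (1 : ℝ) ≤ q := by exact_mod_cast NeZero.one_le
  have h3 : 1 ≤ ((q : ℝ) * (1 + ‖s‖)) ^ a := Real.one_le_rpow
    (one_le_mul_of_one_le_of_one_le hq1 (by linarith [norm_nonneg s])) ha.le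
  nlinarith

lemma L_eq_NL (χ : DirichletCharacter ℂ q) {s : ℂ} (hs : 0 < s.re) (h1 : s ≠ 1) :
    LFunction χ s = NL χ s * ((pol χ s + 2) / pol χ s) := by
  unfold NL
  have h2 := pol_add_two_ne χ hs
  have h3 : pol χ s ≠ 0 := by
    by_cases h : χ = 1
    · rw [pol_of_one h]; exact sub_ne_zero.mpr h1
    · rw [pol_of_ne h]; norm_num
  rw [HL_eq_pol_mul χ h1]; field_simp

lemma norm_pol_ratio (χ : DirichletCharacter ℂ q) {s : ℂ} {τ : ℝ} (hτ : 0 < τ) (hτ1 : τ ≤ 1)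
    (h : χ = 1 → τ ≤ ‖s - 1‖) : ‖(pol χ s + 2) / pol χ s‖ ≤ 3 / τ := by
  by_cases h1 : χ = 1
  · rw [pol_of_one h1, norm_div]
    have h2 := h h1
    rw [div_le_div_iff₀ (by linarith) hτ]
    have h3 : ‖s - 1 + 2‖ ≤ ‖s - 1‖ + 2 := by
      refine (norm_add_le _ _).trans ?_; simp
    nlinarith [norm_nonneg (s - 1)]
  · rw [pol_of_ne h1, div_one]
    have : ‖(1 : ℂ) + 2‖ = 3 := by norm_num
    rw [this, le_div_iff₀ hτ]; nlinarith

/-- derivative bound -/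
lemma NL_deriv_le (χ : DirichletCharacter ℂ q) {z : ℂ} {ρ B : ℝ} (hρ : 0 < ρ) (hz : ρ < z.re)
    (hB : ∀ w ∈ Metric.sphere z ρ, ‖NL χ w‖ ≤ B) : ‖deriv (NL χ) z‖ ≤ B / ρ := by
  apply Complex.norm_deriv_le_of_forall_mem_sphere_norm_le hρ _ hB
  apply DifferentiableOn.diffContOnCl
  intro w hw
  have hw' : w ∈ Metric.closedBall z ρ := Metric.closure_ball_subset_closedBall hw
  have h1 : ‖w - z‖ ≤ ρ := by simpa [dist_eq_norm] using hw'
  have h2 := (abs_le.mp ((Complex.abs_re_le_norm (w - z)).trans h1)).1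
  simp at h2
  exact (NL_differentiableAt χ (by linarith)).differentiableWithinAt

lemma NL_sub_le (χ : DirichletCharacter ℂ q) {z w : ℂ} {D : ℝ} (hz : 0 < z.re) (hw : 0 < w.re)
    (hD : ∀ u ∈ segment ℝ z w, ‖deriv (NL χ) u‖ ≤ D) : ‖NL χ w - NL χ z‖ ≤ D * ‖w - z‖ := by
  have hpos : ∀ u ∈ segment ℝ z w, 0 < u.re := by
    intro u hu
    have hc : Convex ℝ {u : ℂ | 0 < u.re} := convex_halfSpace_re_gt 0
    exact hc.segment_subset hz hw hu
  exact (convex_segment z w).norm_image_sub_le_of_norm_deriv_le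
    (fun u hu => NL_differentiableAt χ (hpos u hu)) hD (left_mem_segment ℝ z w)
    (right_mem_segment ℝ z w)

lemma NL_lower_aux (χ : DirichletCharacter ℂ q) {s : ℂ} {a B τ : ℝ} (ha : 0 < a) (ha1 : a ≤ 1)
    (hs1 : 1 < s.re) (hs2 : s.re ≤ 2) (hB1 : 1 ≤ B)
    (hB : ∀ (ψ : DirichletCharacter ℂ q) (z : ℂ), 1 - a / 2 ≤ z.re → 1 + ‖z‖ ≤ 4 * (1 + ‖s‖) → ‖NL ψ z‖ ≤ B)
    (hτ : 0 < τ) (hτ1 : τ ≤ 1) (hcase : χ ^ 2 = 1 → τ ≤ ‖s - 1‖) :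
    τ ^ 5 / (248832 * B ^ 4 * (2 * B / a) ^ 4) ≤ ‖NL χ s‖ := by
  set B' := 2 * B / a with hB'
  have hB'1 : 1 ≤ B' := by rw [hB', le_div_iff₀ ha]; linarith
  set η := τ ^ 5 / (248832 * B ^ 4 * B' ^ 4) with hη
  have hη0 : 0 < η := by positivity
  have hη1 : η ≤ 1 := by
    rw [hη]
    apply div_le_one_of_le₀ _ (by positivity)
    have : τ ^ 5 ≤ 1 := pow_le_one₀ hτ.le hτ1
    have h2 : 1 ≤ B ^ 4 := one_le_pow₀ hB1
    have h3 : 1 ≤ B' ^ 4 := one_le_pow₀ hB'1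
    nlinarith
  set x := s.re - 1 + η with hx
  set y := s.im with hy
  have hx0 : 0 < x := by linarith
  have h341 := norm_LFunction_product_ge_one χ hx0 y
  set s' : ℂ := 1 + x + I * y with hs'
  set s2 : ℂ := 1 + x + 2 * I * y with hs2'
  have hs'e : s' = s + η := by
    apply Complex.ext
    · simp [hs', hx]; ring
    · simp [hs', hy]
  have hre' : s'.re = s.re + η := by rw [hs'e]; simp
  have hre2 : s2.re = s.re + η := by simp [hs2', hx]; ring
  have hs2e : s2 = s' + I * y := by rw [hs', hs2']; ring
  have hyn : ‖I * (y : ℂ)‖ ≤ ‖s‖ := by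
    rw [norm_mul, norm_I, one_mul, Complex.norm_real]; exact Complex.abs_im_le_norm s
  have hns' : ‖s'‖ ≤ ‖s‖ + 1 := by
    rw [hs'e]; refine (norm_add_le _ _).trans ?_
    rw [Complex.norm_real, Real.norm_of_nonneg hη0.le]; linarith
  have hns2 : ‖s2‖ ≤ 2 * ‖s‖ + 1 := by
    rw [hs2e]; refine (norm_add_le _ _).trans ?_
    linarith
  have hn1 : ‖(1 + x : ℂ)‖ ≤ 3 := by
    rw [show (1 + x : ℂ) = ((1 + x : ℝ) : ℂ) by push_cast; rfl, Complex.norm_real,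
      Real.norm_of_nonneg (by linarith)]; linarith
  have hsn := norm_nonneg s
  have hsn1 : 1 ≤ ‖s‖ := hs1.le.trans (Complex.re_le_norm s)
  have hd1 : ‖s - 1‖ ≤ ‖s' - 1‖ := by
    rw [Complex.norm_def, Complex.norm_def]
    apply Real.sqrt_le_sqrt
    rw [hs'e]
    simp [normSq_apply]; nlinarith
  have hd2 : ‖s - 1‖ ≤ ‖s2 - 1‖ := by
    rw [Complex.norm_def, Complex.norm_def]
    apply Real.sqrt_le_sqrt
    rw [hs2e, hs'e]
    simp [normSq_apply, ← hy]; nlinarith [mul_self_nonneg y]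
  have c0 : ‖LFunctionTrivChar q (1 + x)‖ ≤ 4 * B / η := by
    have hre : 0 < (1 + x : ℂ).re := by simp; linarith
    have hne : (1 + x : ℂ) ≠ 1 := by
      intro h
      have : (x : ℂ) = 0 := by linear_combination h
      exact hx0.ne' (by exact_mod_cast this)
    rw [show LFunctionTrivChar q (1 + x) = LFunction (1 : DirichletCharacter ℂ q) (1 + x) from rfl,
      L_eq_NL _ hre hne, norm_mul, pol_of_one rfl]
    have h1 := hB 1 (1 + x) (by simp; linarith) (by linarith)
    have h2 : ‖((1 : ℂ) + x - 1 + 2) / (1 + x - 1)‖ ≤ 4 / η := by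
      rw [show ((1 : ℂ) + x - 1 + 2) / (1 + x - 1) = (((x + 2) / x : ℝ) : ℂ) by push_cast; ring_nf,
        Complex.norm_real, Real.norm_of_nonneg (by positivity)]
      rw [div_le_div_iff₀ hx0 hη0]; nlinarith
    calc _ ≤ B * (4 / η) := by gcongr
      _ = _ := by ring
  have c1 : ‖LFunction χ s'‖ ≤ 3 / τ * ‖NL χ s'‖ := by
    rw [L_eq_NL χ (by linarith) (by intro h; rw [h] at hre'; simp at hre'; linarith), norm_mul, mul_comm]
    gcongr
    apply norm_pol_ratio χ hτ hτ1
    intro h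
    exact (hcase (by rw [h, one_pow])).trans hd1
  have c2 : ‖LFunction (χ ^ 2) s2‖ ≤ 3 * B / τ := by
    rw [L_eq_NL (χ ^ 2) (by linarith) (by intro h; rw [h] at hre2; simp at hre2; linarith), norm_mul]
    have h1 := hB (χ ^ 2) s2 (by linarith) (by linarith)
    have h2 := norm_pol_ratio (χ ^ 2) (s := s2) hτ hτ1 (fun h => (hcase h).trans hd2)
    calc _ ≤ B * (3 / τ) := by gcongr
      _ = _ := by ring
  have hprod : 1 ≤ (4 * B / η) ^ 3 * (3 / τ * ‖NL χ s'‖) ^ 4 * (3 * B / τ) := by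
    refine h341.trans ?_
    rw [norm_mul, norm_mul, norm_pow, norm_pow]
    gcongr
  have hpow : (2 * B' * η) ^ 4 ≤ ‖NL χ s'‖ ^ 4 := by
    have e1 : (4 * B / η) ^ 3 * (3 / τ * ‖NL χ s'‖) ^ 4 * (3 * B / τ)
        = 15552 * B ^ 4 / (η ^ 3 * τ ^ 5) * ‖NL χ s'‖ ^ 4 := by
      field_simp; ring
    rw [e1] at hprod
    have hp : 0 < 15552 * B ^ 4 / (η ^ 3 * τ ^ 5) := by positivity
    have e2 : (2 * B' * η) ^ 4 = 1 / (15552 * B ^ 4 / (η ^ 3 * τ ^ 5)) := by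
      have : η * (248832 * B ^ 4 * B' ^ 4) = τ ^ 5 := by
        rw [hη]; field_simp
      rw [one_div_div, ← this]; field_simp; norm_num
    rw [e2, div_le_iff₀ hp, mul_comm]; exact hprod
  have hNL' : 2 * B' * η ≤ ‖NL χ s'‖ := le_of_pow_le_pow_left₀ (by norm_num) (norm_nonneg _) hpow
  have hdiff : ‖NL χ s' - NL χ s‖ ≤ B' * ‖s' - s‖ := by
    apply NL_sub_le χ (by linarith) (by linarith)
    intro u hu
    have hu1 : 1 < u.re := (convex_halfSpace_re_gt 1).segment_subset hs1 (by
      show 1 < s'.re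
      linarith) hu
    have hun : ‖u - s‖ ≤ 1 := by
      have hss : s ∈ Metric.closedBall s 1 := by simp
      have hss' : s' ∈ Metric.closedBall s 1 := by
        rw [Metric.mem_closedBall, dist_eq_norm, hs'e, add_sub_cancel_left, Complex.norm_real,
          Real.norm_of_nonneg hη0.le]; exact hη1
      simpa [dist_eq_norm] using (convex_closedBall s 1).segment_subset hss hss' hu
    have := NL_deriv_le χ (z := u) (ρ := a / 2) (B := B) (by linarith) (by linarith) (by
      intro w hw
      have hw1 : ‖w - u‖ = a / 2 := by simpa [dist_eq_norm] using hw
      have h2 := (abs_le.mp ((Complex.abs_re_le_norm (w - u)).trans hw1.le)).1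
      simp at h2
      apply hB χ w (by linarith)
      have : ‖w‖ ≤ ‖w - u‖ + ‖u - s‖ + ‖s‖ := by
        calc ‖w‖ = ‖(w - u) + (u - s) + s‖ := by ring_nf
          _ ≤ _ := norm_add₃_le
      linarith)
    refine this.trans (le_of_eq ?_)
    rw [hB']; field_simp
  have hss : ‖s' - s‖ = η := by
    rw [hs'e, add_sub_cancel_left, Complex.norm_real, Real.norm_of_nonneg hη0.le]
  rw [hss] at hdiff
  have h1 := norm_sub_norm_le (NL χ s') (NL χ s)
  nlinarith
end PageProof

namespace PageProof
open Complex Filter Topology MeasureTheory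
open DirichletCharacter

lemma NL_one_lower {a : ℝ} (ha : 0 < a) : ∃ c : ℝ, 0 < c ∧ ∀ (q : ℕ) [NeZero q]
    (χ : DirichletCharacter ℂ q), χ ^ 2 = 1 → c * (q : ℝ) ^ (-a) ≤ ‖NL χ 1‖ := by
  obtain ⟨c, hc, H⟩ := siegel_HL ha
  refine ⟨c / 3, by positivity, fun q _ χ h => ?_⟩
  have h1 := H q χ h
  unfold NL
  rw [norm_div]
  have h2 : ‖pol χ 1 + 2‖ ≤ 3 := by
    by_cases h : χ = 1
    · rw [pol_of_one h]; norm_num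
    · rw [pol_of_ne h]; norm_num
  have h3 : 0 < ‖pol χ 1 + 2‖ := norm_pos_iff.mpr (pol_add_two_ne χ (by simp))
  rw [le_div_iff₀ h3]
  have h4 : 0 ≤ c / 3 * (q : ℝ) ^ (-a) := by positivity
  nlinarith

lemma NL_deriv_le_of {q : ℕ} [NeZero q] (χ : DirichletCharacter ℂ q) {a B M : ℝ} (ha : 0 < a) (ha1 : a ≤ 1)
    (hB : ∀ (ψ : DirichletCharacter ℂ q) (z : ℂ), 1 - a / 2 ≤ z.re → 1 + ‖z‖ ≤ M → ‖NL ψ z‖ ≤ B)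
    {ρ : ℝ} (hρ : 0 < ρ) (hρ1 : ρ ≤ 1 / 2) {u : ℂ} (hu : 1 - a / 2 + ρ ≤ u.re) (hM : 2 + ‖u‖ ≤ M) :
    ‖deriv (NL χ) u‖ ≤ B / ρ := by
  apply NL_deriv_le χ hρ
  · linarith
  intro w hw
  have hw1 : ‖w - u‖ = ρ := by simpa [dist_eq_norm] using hw
  have h2 := (abs_le.mp ((Complex.abs_re_le_norm (w - u)).trans hw1.le)).1
  simp at h2
  apply hB χ w (by linarith)
  have : ‖w‖ ≤ ‖w - u‖ + ‖u‖ := by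
    calc ‖w‖ = ‖(w - u) + u‖ := by ring_nf
      _ ≤ _ := norm_add_le _ _
  linarith

lemma NL_lower {a : ℝ} (ha : 0 < a) (ha1 : a ≤ 1) : ∃ c C : ℝ, 0 < c ∧ 1 ≤ C ∧ ∀ (q : ℕ) [NeZero q]
    (s : ℂ), 1 < s.re → s.re ≤ 2 →
    (∀ (ψ : DirichletCharacter ℂ q) (z : ℂ), 1 - a / 2 ≤ z.re → 1 + ‖z‖ ≤ 4 * (1 + ‖s‖) →
      ‖NL ψ z‖ ≤ C * ((q : ℝ) * (1 + ‖s‖)) ^ a) ∧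
    ∀ χ : DirichletCharacter ℂ q, c / (((q : ℝ) * (1 + ‖s‖)) ^ a) ^ 18 ≤ ‖NL χ s‖ := by
  obtain ⟨C, hC, HC⟩ := NL_growth ha ha1
  obtain ⟨c0, hc0, H0⟩ := NL_one_lower ha
  set c := min c0 1 with hc
  have hcp : 0 < c := lt_min hc0 one_pos
  have hc1 : c ≤ 1 := min_le_right _ _
  set K := c * a / (16 * C) with hK
  have hKp : 0 < K := by positivity
  have hK1 : K ≤ 1 := by
    rw [hK]; apply div_le_one_of_le₀ _ (by positivity); nlinarith
  refine ⟨min (c / 2) (K ^ 5 / (248832 * (4 * C) ^ 4 * (2 * (4 * C) / a) ^ 4)), 4 * C, by positivity,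
    by linarith, fun q _ s hs1 hs2 => ?_⟩
  have hq : (1 : ℝ) ≤ q := by exact_mod_cast NeZero.one_le
  set X := (q : ℝ) * (1 + ‖s‖) with hX
  have hX1 : 1 ≤ X := by nlinarith [norm_nonneg s]
  have hqX : (q : ℝ) ≤ X := by nlinarith [norm_nonneg s]
  set Y := X ^ a with hY
  have hY1 : 1 ≤ Y := Real.one_le_rpow hX1 ha.le
  have hsn1 : 1 ≤ ‖s‖ := hs1.le.trans (Complex.re_le_norm s)
  have hB : ∀ (ψ : DirichletCharacter ℂ q) (z : ℂ), 1 - a / 2 ≤ z.re → 1 + ‖z‖ ≤ 4 * (1 + ‖s‖) →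
      ‖NL ψ z‖ ≤ 4 * C * Y := by
    intro ψ z hz hz2
    refine (HC q ψ z hz).trans ?_
    have : ((q : ℝ) * (1 + ‖z‖)) ^ a ≤ 4 * Y := by
      calc ((q : ℝ) * (1 + ‖z‖)) ^ a ≤ (4 * X) ^ a := by
            apply Real.rpow_le_rpow (by positivity) _ ha.le
            rw [hX]; nlinarith
        _ = 4 ^ a * Y := Real.mul_rpow (by norm_num) (by linarith)
        _ ≤ 4 * Y := by
            gcongr
            calc (4 : ℝ) ^ a ≤ 4 ^ (1 : ℝ) := Real.rpow_le_rpow_of_exponent_le (by norm_num) ha1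
              _ = 4 := by norm_num
    nlinarith
  refine ⟨hB, fun χ => ?_⟩
  set τ := K / Y ^ 2 with hτ
  have hτp : 0 < τ := by positivity
  have hτ1 : τ ≤ 1 := by
    rw [hτ]; apply div_le_one_of_le₀ _ (by positivity)
    have := one_le_pow₀ hY1 (n := 2); linarith
  by_cases hcase : χ ^ 2 = 1 → τ ≤ ‖s - 1‖
  · have := NL_lower_aux χ ha ha1 hs1 hs2 (by nlinarith : 1 ≤ 4 * C * Y) hB hτp hτ1 hcase
    refine le_trans (le_trans (div_le_div_of_nonneg_right (min_le_right _ _) (by positivity)) (le_of_eq ?_)) this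
    rw [hτ]; field_simp
  · push Not at hcase
    obtain ⟨hχ, hlt⟩ := hcase
    have h1 := H0 q χ hχ
    have hqa : Y⁻¹ ≤ (q : ℝ) ^ (-a) := by
      rw [Real.rpow_neg (by linarith), hY]
      gcongr
    have h2 : c * Y⁻¹ ≤ ‖NL χ 1‖ := by
      refine le_trans ?_ h1
      gcongr
      exact min_le_left _ _
    have hdiff : ‖NL χ s - NL χ 1‖ ≤ (4 * C * Y / (a / 2)) * ‖s - 1‖ := by
      apply NL_sub_le χ (by simp) (by linarith)
      intro u hu
      have hu1 : 1 ≤ u.re := (convex_halfSpace_re_ge 1).segment_subset (by simp) (by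
        show 1 ≤ s.re
        linarith) hu
      have hun : ‖u - 1‖ ≤ 1 := by
        have hss : (1 : ℂ) ∈ Metric.closedBall (1 : ℂ) 1 := by simp
        have hss' : s ∈ Metric.closedBall (1 : ℂ) 1 := by
          rw [Metric.mem_closedBall, dist_eq_norm]; linarith
        simpa [dist_eq_norm] using (convex_closedBall (1 : ℂ) 1).segment_subset hss hss' hu
      apply NL_deriv_le_of χ ha ha1 hB (by linarith) (by linarith) (by linarith)
      have : ‖u‖ ≤ ‖u - 1‖ + ‖(1 : ℂ)‖ := by
        calc ‖u‖ = ‖(u - 1) + 1‖ := by ring_nf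
          _ ≤ _ := norm_add_le _ _
      rw [norm_one] at this
      linarith
    have h3 : (4 * C * Y / (a / 2)) * ‖s - 1‖ ≤ c / 2 * Y⁻¹ := by
      calc (4 * C * Y / (a / 2)) * ‖s - 1‖ ≤ (4 * C * Y / (a / 2)) * τ := by gcongr
        _ = c / 2 * Y⁻¹ := by rw [hτ, hK]; field_simp; norm_num
    have h4 : ‖NL χ 1‖ ≤ ‖NL χ s‖ + ‖NL χ s - NL χ 1‖ := by
      rw [norm_sub_rev]; exact norm_le_insert' _ _
    have h5 : c / 2 * Y⁻¹ ≤ ‖NL χ s‖ := by linarith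
    refine le_trans ?_ h5
    refine (div_le_div_of_nonneg_right (min_le_left _ _) (by positivity)).trans ?_
    rw [← div_eq_mul_inv]
    gcongr
    exact le_self_pow₀ hY1 (by norm_num)

/-- minus the logarithmic derivative of `NL` -/
noncomputable def GLd {q : ℕ} [NeZero q] (χ : DirichletCharacter ℂ q) (s : ℂ) : ℂ :=
  - (deriv (NL χ) s / NL χ s)

lemma GLd_iteratedDeriv {δ : ℝ} (hδ : 0 < δ) : ∃ C : ℝ, 1 ≤ C ∧ ∀ (q : ℕ) [NeZero q]
    (χ : DirichletCharacter ℂ q) (s : ℂ) (k : ℕ), 1 < s.re → s.re ≤ 2 →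
    ‖iteratedDeriv k (GLd χ) s‖ ≤ k.factorial * (C * ((q : ℝ) * (1 + ‖s‖)) ^ δ) ^ (k + 1) := by
  set a := min (δ / 19) 1 with haa
  have ha : 0 < a := lt_min (by positivity) one_pos
  have ha1 : a ≤ 1 := min_le_right _ _
  obtain ⟨c, C, hc, hC, H⟩ := NL_lower ha ha1
  refine ⟨max 1 (8 * C / (a * c)), le_max_left _ _, fun q _ χ s k hs1 hs2 => ?_⟩
  obtain ⟨hB, hL⟩ := H q s hs1 hs2
  have hq : (1 : ℝ) ≤ q := by exact_mod_cast NeZero.one_le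
  set X := (q : ℝ) * (1 + ‖s‖) with hX
  have hX1 : 1 ≤ X := by nlinarith [norm_nonneg s]
  set Y := X ^ a with hY
  have hY1 : 1 ≤ Y := Real.one_le_rpow hX1 ha.le
  have hsn1 : 1 ≤ ‖s‖ := hs1.le.trans (Complex.re_le_norm s)
  set m := c / Y ^ 18 with hm
  have hmp : 0 < m := by positivity
  have hLs := hL χ
  have hmB : m ≤ C * Y := hLs.trans (hB χ s (by linarith) (by linarith))
  set ρ := m * a / (8 * (C * Y)) with hρ
  have hρp : 0 < ρ := by positivity
  have hρa : ρ ≤ a / 8 := by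
    rw [hρ, div_le_div_iff₀ (by positivity) (by norm_num)]; nlinarith
  have hball : ∀ u ∈ Metric.closedBall s ρ, 1 - a / 4 ≤ u.re ∧ ‖deriv (NL χ) u‖ ≤ C * Y / (a / 4) := by
    intro u hu
    have hw1 : ‖u - s‖ ≤ ρ := by simpa [dist_eq_norm] using hu
    have h2 := (abs_le.mp ((Complex.abs_re_le_norm (u - s)).trans hw1)).1
    simp at h2
    refine ⟨by linarith, ?_⟩
    apply NL_deriv_le_of χ ha ha1 hB (by linarith) (by linarith) (by linarith)
    have : ‖u‖ ≤ ‖u - s‖ + ‖s‖ := by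
      calc ‖u‖ = ‖(u - s) + s‖ := by ring_nf
        _ ≤ _ := norm_add_le _ _
    linarith
  have hlow : ∀ u ∈ Metric.closedBall s ρ, m / 2 ≤ ‖NL χ u‖ := by
    intro u hu
    have hw1 : ‖u - s‖ ≤ ρ := by simpa [dist_eq_norm] using hu
    have hdiff : ‖NL χ u - NL χ s‖ ≤ (C * Y / (a / 4)) * ‖u - s‖ := by
      apply NL_sub_le χ (by linarith) (by linarith [(hball u hu).1])
      intro v hv
      exact (hball v ((convex_closedBall s ρ).segment_subset (by simp [hρp.le]) hu hv)).2
    have h3 : (C * Y / (a / 4)) * ‖u - s‖ ≤ m / 2 := by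
      calc (C * Y / (a / 4)) * ‖u - s‖ ≤ (C * Y / (a / 4)) * ρ := by gcongr
        _ = m / 2 := by rw [hρ]; field_simp; norm_num
    have h4 : ‖NL χ s‖ ≤ ‖NL χ u‖ + ‖NL χ u - NL χ s‖ := by
      rw [norm_sub_rev]; exact norm_le_insert' _ _
    linarith
  have hG : ∀ u ∈ Metric.closedBall s ρ, ‖GLd χ u‖ ≤ 1 / ρ := by
    intro u hu
    rw [GLd, norm_neg, norm_div]
    calc _ ≤ (C * Y / (a / 4)) / (m / 2) := by
          gcongr
          · exact (hball u hu).2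
          · exact hlow u hu
      _ = 1 / ρ := by rw [hρ]; field_simp; norm_num
  have hdiffG : DiffContOnCl ℂ (GLd χ) (Metric.ball s ρ) := by
    apply DifferentiableOn.diffContOnCl
    rw [closure_ball s hρp.ne']
    intro u hu
    apply DifferentiableAt.differentiableWithinAt
    have hu0 : 0 < u.re := by linarith [(hball u hu).1]
    have hne : NL χ u ≠ 0 := norm_pos_iff.mp (by linarith [hlow u hu])
    have hd : DifferentiableOn ℂ (NL χ) {z | 0 < z.re} :=
      fun z hz => (NL_differentiableAt χ hz).differentiableWithinAt
    have hopen : IsOpen {z : ℂ | 0 < z.re} := isOpen_lt continuous_const Complex.continuous_re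
    have hd2 := (hd.deriv hopen).differentiableAt (hopen.mem_nhds hu0)
    exact (hd2.div (NL_differentiableAt χ hu0) hne).neg
  have key := Complex.norm_iteratedDeriv_le_of_forall_mem_sphere_norm_le k hρp hdiffG
    (fun z hz => hG z (Metric.sphere_subset_closedBall hz))
  refine key.trans ?_
  have hρ1 : 1 / ρ ≤ max 1 (8 * C / (a * c)) * X ^ δ := by
    calc 1 / ρ = (8 * C / (a * c)) * Y ^ 19 := by rw [hρ, hm]; field_simp
      _ ≤ max 1 (8 * C / (a * c)) * X ^ δ := by
        gcongr
        · exact le_max_right _ _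
        · rw [hY, ← Real.rpow_natCast, ← Real.rpow_mul (by linarith)]
          apply Real.rpow_le_rpow_of_exponent_le hX1
          have := min_le_left (δ / 19) 1
          push_cast; linarith
  calc (k.factorial : ℝ) * (1 / ρ) / ρ ^ k = k.factorial * (1 / ρ) ^ (k + 1) := by
        rw [pow_succ, one_div, inv_pow]; field_simp
    _ ≤ _ := by gcongr

end PageProof

namespace PageProof
open Complex Filter Topology MeasureTheory
open DirichletCharacter
open ArithmeticFunction.vonMangoldt (residueClass)

lemma NL_ne_zero {q : ℕ} [NeZero q] (χ : DirichletCharacter ℂ q) {s : ℂ} (hs : 1 < s.re) :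
    NL χ s ≠ 0 := by
  have h1 : s ≠ 1 := by rintro rfl; simp at hs
  have h := LFunction_ne_zero_of_one_le_re χ (Or.inr h1) hs.le
  intro h0
  rw [L_eq_NL χ (by linarith) h1, h0, zero_mul] at h
  exact h rfl

lemma GLd_differentiableAt {q : ℕ} [NeZero q] (χ : DirichletCharacter ℂ q) {s : ℂ} (hs : 1 < s.re) :
    DifferentiableAt ℂ (GLd χ) s := by
  have hd : DifferentiableOn ℂ (NL χ) {z | 0 < z.re} :=
    fun z hz => (NL_differentiableAt χ hz).differentiableWithinAt
  have hopen : IsOpen {z : ℂ | 0 < z.re} := isOpen_lt continuous_const Complex.continuous_re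
  have hu0 : 0 < s.re := by linarith
  have hd2 := (hd.deriv hopen).differentiableAt (hopen.mem_nhds hu0)
  exact (hd2.div (NL_differentiableAt χ hu0) (NL_ne_zero χ hs)).neg

open Classical in
lemma neg_logDeriv {q : ℕ} [NeZero q] (χ : DirichletCharacter ℂ q) {s : ℂ} (hs : 1 < s.re) :
    - (deriv (LFunction χ) s / LFunction χ s)
      = GLd χ s + if χ = 1 then 1 / (s - 1) - 1 / (s + 1) else 0 := by
  have hopen : IsOpen {z : ℂ | 1 < z.re} := isOpen_lt continuous_const Complex.continuous_re
  have hs1 : s ≠ 1 := by rintro rfl; simp at hs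
  have hm1 : s - 1 ≠ 0 := sub_ne_zero.mpr hs1
  have hp1 : s + 1 ≠ 0 := norm_pos_iff.mp (by linarith [norm_lower_of_re (s := s) (by linarith)])
  have hN := NL_ne_zero χ hs
  have hev : LFunction χ =ᶠ[𝓝 s] fun z => NL χ z * ((pol χ z + 2) / pol χ z) := by
    filter_upwards [hopen.mem_nhds hs] with z hz
    have hz' : 1 < z.re := hz
    exact L_eq_NL χ (by linarith) (by rintro rfl; simp at hz')
  have hNd := (NL_differentiableAt χ (by linarith : 0 < s.re)).hasDerivAt
  rw [hev.deriv_eq, hev.eq_of_nhds]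
  by_cases h : χ = 1
  · simp only [pol_of_one h, if_pos h]
    have hd : HasDerivAt (fun z : ℂ => (z - 1 + 2) / (z - 1)) (((s - 1) - (s - 1 + 2)) / (s - 1) ^ 2) s := by
      have e1 : HasDerivAt (fun z : ℂ => z - 1 + 2) 1 s := ((hasDerivAt_id s).sub_const 1).add_const 2
      have e2 : HasDerivAt (fun z : ℂ => z - 1) 1 s := (hasDerivAt_id s).sub_const 1
      exact (e1.div e2 hm1).congr_deriv (by ring)
    have hD := (hNd.mul hd).deriv
    rw [show (NL χ * fun z : ℂ => (z - 1 + 2) / (z - 1)) = fun z => NL χ z * ((z - 1 + 2) / (z - 1)) from rfl] at hD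
    rw [hD, GLd, show s - 1 + 2 = s + 1 by ring]
    field_simp
    ring
  · simp only [pol_of_ne h, if_neg h]
    rw [(hNd.mul_const _).deriv, GLd]
    field_simp
    simp

/-- the basic coefficients -/
noncomputable def af {q : ℕ} (a : ZMod q) (n : ℕ) : ℝ := residueClass a n - (q.totient : ℝ)⁻¹

/-- the correction term -/
noncomputable def Ecor (s : ℂ) : ℂ := - 1 - 1 / (s + 1) - Kfun (1 : DirichletCharacter ℂ 1) s

lemma LSeries_one_eq {s : ℂ} (hs : 1 < s.re) :
    LSeries (1 : ℕ → ℂ) s = s / (s - 1) + Kfun (1 : DirichletCharacter ℂ 1) s := by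
  have h := LSeries_eq_Kfun (1 : DirichletCharacter ℂ 1) hs
  have e : (fun n : ℕ => (1 : DirichletCharacter ℂ 1) n) = (1 : ℕ → ℂ) := by
    funext n
    have : IsUnit (n : ZMod 1) := isUnit_of_subsingleton _
    simp [MulChar.one_apply this]
  rw [e] at h
  rw [h]
  simp [kap]

lemma abscissa_af {q : ℕ} (a : ZMod q) : LSeries.abscissaOfAbsConv (fun n => ((af a n : ℝ) : ℂ)) ≤ 1 := by
  have e : (fun n => ((af a n : ℝ) : ℂ)) =
    (fun n => ((residueClass a n : ℝ) : ℂ)) - ((q.totient : ℂ)⁻¹ • (1 : ℕ → ℂ)) := by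
    funext n; simp [af]
  rw [e]
  refine (LSeries.abscissaOfAbsConv_sub_le _ _).trans (max_le
    (ArithmeticFunction.vonMangoldt.abscissaOfAbsConv_residueClass_le_one a) ?_)
  apply LSeries.abscissaOfAbsConv_le_of_forall_lt_LSeriesSummable'
  intro y hy
  apply LSeriesSummable.smul
  exact LSeriesSummable_one_iff.mpr (by simpa using (show (1 : ℝ) < y by exact_mod_cast hy))

lemma LSeries_af {q : ℕ} [NeZero q] {a : ZMod q} (ha : IsUnit a) {s : ℂ} (hs : 1 < s.re) :
    LSeries (fun n => ((af a n : ℝ) : ℂ)) s =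
      (q.totient : ℂ)⁻¹ * (∑ χ : DirichletCharacter ℂ q, χ a⁻¹ * GLd χ s + Ecor s) := by
  have e : (fun n => ((af a n : ℝ) : ℂ)) =
    (fun n => ((residueClass a n : ℝ) : ℂ)) - ((q.totient : ℂ)⁻¹ • (1 : ℕ → ℂ)) := by
    funext n; simp [af]
  rw [e, LSeries_sub, LSeries_smul, LSeries_one_eq hs,
    ArithmeticFunction.vonMangoldt.LSeries_residueClass_eq ha hs]
  · have hs1 : s ≠ 1 := by rintro rfl; simp at hs
    have hm1 : s - 1 ≠ 0 := sub_ne_zero.mpr hs1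
    have h1 : ∑ χ : DirichletCharacter ℂ q, χ a⁻¹ * (deriv (LFunction χ) s / LFunction χ s)
        = - (∑ χ : DirichletCharacter ℂ q, χ a⁻¹ * GLd χ s) - (1 / (s - 1) - 1 / (s + 1)) := by
      classical
      have : ∀ χ : DirichletCharacter ℂ q, χ a⁻¹ * (deriv (LFunction χ) s / LFunction χ s)
         = - (χ a⁻¹ * GLd χ s) - (if χ = 1 then (1 / (s - 1) - 1 / (s + 1)) else 0) := by
        intro χ
        have h := neg_logDeriv χ hs
        have h' : deriv (LFunction χ) s / LFunction χ s
          = - (GLd χ s + if χ = 1 then 1 / (s - 1) - 1 / (s + 1) else 0) := by rw [← h, neg_neg]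
        rw [h']
        by_cases hχ : χ = 1
        · have hu : IsUnit (a⁻¹) := by
            obtain ⟨u, rfl⟩ := ha
            rw [ZMod.inv_coe_unit]
            exact Units.isUnit _
          rw [if_pos hχ, hχ, MulChar.one_apply hu]; ring
        · simp [hχ]
      simp only [this, sum_sub_distrib, sum_neg_distrib, Finset.sum_ite_eq', Finset.mem_univ, if_true]
    rw [h1, Ecor]
    have : s / (s - 1) = 1 + 1 / (s - 1) := by field_simp; ring
    rw [this]
    ring
  · apply LSeriesSummable_of_abscissaOfAbsConv_lt_re
    refine (ArithmeticFunction.vonMangoldt.abscissaOfAbsConv_residueClass_le_one a).trans_lt ?_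
    exact_mod_cast hs
  · apply LSeriesSummable.smul
    exact LSeriesSummable_one_iff.mpr hs

lemma Ecor_differentiableAt {s : ℂ} (hs : 0 < s.re) : DifferentiableAt ℂ Ecor s := by
  have hp1 : s + 1 ≠ 0 := norm_pos_iff.mp (by linarith [norm_lower_of_re (s := s) hs])
  have h1 : DifferentiableAt ℂ (fun z : ℂ => 1 / (z + 1)) s :=
    (differentiableAt_const _).div (differentiableAt_id.add_const 1) hp1
  exact ((differentiableAt_const _).sub h1).sub (Kfun_differentiableAt _ hs)

lemma Ecor_iteratedDeriv (k : ℕ) : ∃ C : ℝ, 1 ≤ C ∧ ∀ s : ℂ, 1 < s.re →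
    ‖iteratedDeriv k Ecor s‖ ≤ C * (1 + ‖s‖) := by
  obtain ⟨C, hC, H⟩ := Kfun_growth (a := 1) one_pos le_rfl
  refine ⟨k.factorial * (2 + 2 * C) * 2 ^ k, ?_, fun s hs => ?_⟩
  · have h1 : (1 : ℝ) ≤ k.factorial := by exact_mod_cast Nat.one_le_iff_ne_zero.mpr k.factorial_ne_zero
    have h2 : (1 : ℝ) ≤ 2 ^ k := one_le_pow₀ (by norm_num)
    have h3 : 1 ≤ 2 + 2 * C := by linarith
    exact one_le_mul_of_one_le_of_one_le (one_le_mul_of_one_le_of_one_le h1 h3) h2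
  have hre : ∀ u ∈ Metric.closedBall s (1 / 2), 1 / 2 ≤ u.re ∧ ‖u‖ ≤ 1 / 2 + ‖s‖ := by
    intro u hu
    have hw1 : ‖u - s‖ ≤ 1 / 2 := by simpa [dist_eq_norm] using hu
    have h2 := (abs_le.mp ((Complex.abs_re_le_norm (u - s)).trans hw1)).1
    simp at h2
    refine ⟨by linarith, ?_⟩
    calc ‖u‖ = ‖(u - s) + s‖ := by ring_nf
      _ ≤ ‖u - s‖ + ‖s‖ := norm_add_le _ _
      _ ≤ _ := by linarith
  have key := Complex.norm_iteratedDeriv_le_of_forall_mem_sphere_norm_le (f := Ecor) (c := s)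
    (R := 1 / 2) (C := (2 + 2 * C) * (1 + ‖s‖)) k (by norm_num) (by
      apply DifferentiableOn.diffContOnCl
      rw [closure_ball s (by norm_num)]
      intro u hu
      exact (Ecor_differentiableAt (by linarith [(hre u hu).1])).differentiableWithinAt) (by
      intro u hu
      obtain ⟨h1, h2⟩ := hre u (Metric.sphere_subset_closedBall hu)
      have h3 := H 1 1 u (by linarith)
      rw [Nat.cast_one, one_mul, Real.rpow_one] at h3
      have h4 := norm_lower_of_re (s := u) (by linarith)
      have h5 : ‖1 / (u + 1)‖ ≤ 1 := by
        rw [norm_div, norm_one]; exact div_le_one_of_le₀ h4 (norm_nonneg _)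
      have : ‖Ecor u‖ ≤ 1 + 1 + C * (1 + ‖u‖) := by
        unfold Ecor
        refine (norm_sub_le _ _).trans (add_le_add ((norm_sub_le _ _).trans (add_le_add ?_ h5)) h3)
        simp
      nlinarith [norm_nonneg s])
  refine key.trans (le_of_eq ?_)
  rw [one_div, inv_pow]; field_simp

lemma F_iteratedDeriv {θ : ℝ} (hθ : 0 < θ) (hθ1 : θ ≤ 1) (k : ℕ) : ∃ C : ℝ, 1 ≤ C ∧ ∀ (q : ℕ) [NeZero q]
    (a : ZMod q) (s : ℂ), IsUnit a → 1 < s.re → s.re ≤ 2 →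
    ‖iteratedDeriv k (LSeries (fun n => ((af a n : ℝ) : ℂ))) s‖ ≤ C * (q : ℝ) ^ θ * (1 + ‖s‖) := by
  obtain ⟨C1, hC1, H1⟩ := GLd_iteratedDeriv (δ := θ / (k + 1)) (by positivity)
  obtain ⟨C2, hC2, H2⟩ := Ecor_iteratedDeriv k
  have hfac : (1 : ℝ) ≤ k.factorial := by exact_mod_cast Nat.one_le_iff_ne_zero.mpr k.factorial_ne_zero
  refine ⟨k.factorial * C1 ^ (k + 1) + C2, by nlinarith [one_le_pow₀ hC1 (n := k + 1)],
    fun q _ a s ha hs hs2 => ?_⟩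
  have hq : (1 : ℝ) ≤ q := by exact_mod_cast NeZero.one_le
  have hopen : IsOpen {z : ℂ | 1 < z.re} := isOpen_lt continuous_const Complex.continuous_re
  have hev : LSeries (fun n => ((af a n : ℝ) : ℂ)) =ᶠ[𝓝 s] fun z =>
      (q.totient : ℂ)⁻¹ * (∑ χ : DirichletCharacter ℂ q, χ a⁻¹ * GLd χ z + Ecor z) := by
    filter_upwards [hopen.mem_nhds hs] with z hz
    exact LSeries_af ha hz
  have hcd : ∀ f : ℂ → ℂ, (∀ z : ℂ, 1 < z.re → DifferentiableAt ℂ f z) → ContDiffAt ℂ k f s := by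
    intro f hf
    have : AnalyticAt ℂ f s := DifferentiableOn.analyticAt (s := {z : ℂ | 1 < z.re})
      (fun z hz => (hf z hz).differentiableWithinAt) (hopen.mem_nhds hs)
    exact this.contDiffAt
  have hG : ∀ χ : DirichletCharacter ℂ q, ContDiffAt ℂ k (GLd χ) s :=
    fun χ => hcd _ fun z hz => GLd_differentiableAt χ hz
  have hE : ContDiffAt ℂ k Ecor s := hcd _ fun z hz => Ecor_differentiableAt (by linarith)
  have hterm : ∀ χ ∈ (univ : Finset (DirichletCharacter ℂ q)),
      ContDiffAt ℂ k (fun z => χ a⁻¹ * GLd χ z) s := fun χ _ => contDiffAt_const.mul (hG χ)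
  rw [hev.iteratedDeriv_eq, iteratedDeriv_const_mul_field]
  have e1 : iteratedDeriv k (fun z => ∑ χ : DirichletCharacter ℂ q, χ a⁻¹ * GLd χ z + Ecor z) s
      = ∑ χ : DirichletCharacter ℂ q, χ a⁻¹ * iteratedDeriv k (GLd χ) s + iteratedDeriv k Ecor s := by
    have := iteratedDeriv_add (n := k) (x := s) (f := fun z => ∑ χ : DirichletCharacter ℂ q, χ a⁻¹ * GLd χ z)
      (g := Ecor) (ContDiffAt.sum hterm) hE
    rw [show (fun z => ∑ χ : DirichletCharacter ℂ q, χ a⁻¹ * GLd χ z + Ecor z) =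
      (fun z => ∑ χ : DirichletCharacter ℂ q, χ a⁻¹ * GLd χ z) + Ecor from rfl, this,
      iteratedDeriv_fun_sum hterm]
    simp only [iteratedDeriv_const_mul_field]
  rw [e1, norm_mul]
  have hX1 : 1 ≤ 1 + ‖s‖ := by linarith [norm_nonneg s]
  have hb : ((C1 * ((q : ℝ) * (1 + ‖s‖)) ^ (θ / (k + 1)))) ^ (k + 1) ≤ C1 ^ (k + 1) * ((q : ℝ) ^ θ * (1 + ‖s‖)) := by
    rw [mul_pow]
    gcongr
    rw [← Real.rpow_natCast, ← Real.rpow_mul (by positivity)]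
    have : θ / (k + 1) * ((k + 1 : ℕ) : ℝ) = θ := by push_cast; field_simp
    rw [this, Real.mul_rpow (by positivity) (by positivity)]
    gcongr
    calc (1 + ‖s‖) ^ θ ≤ (1 + ‖s‖) ^ (1 : ℝ) := Real.rpow_le_rpow_of_exponent_le hX1 hθ1
      _ = _ := Real.rpow_one _
  have hφ : (0 : ℝ) < q.totient := by exact_mod_cast Nat.totient_pos.mpr (NeZero.pos q)
  have hφ1 : (1 : ℝ) ≤ q.totient := by exact_mod_cast Nat.totient_pos.mpr (NeZero.pos q)
  have hqθ : 1 ≤ (q : ℝ) ^ θ := Real.one_le_rpow hq hθ.le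
  set W := (q : ℝ) ^ θ * (1 + ‖s‖) with hW
  have hsum : ‖∑ χ : DirichletCharacter ℂ q, χ a⁻¹ * iteratedDeriv k (GLd χ) s‖
      ≤ q.totient * (k.factorial * (C1 ^ (k + 1) * W)) := by
    refine (norm_sum_le_of_le _ (fun χ _ => ?_)).trans (?_ : ∑ χ : DirichletCharacter ℂ q,
      k.factorial * (C1 ^ (k + 1) * W) ≤ _)
    · rw [norm_mul]
      calc _ ≤ 1 * ‖iteratedDeriv k (GLd χ) s‖ := by
            gcongr
            exact χ.norm_le_one _
        _ ≤ _ := by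
          rw [one_mul]
          refine (H1 q χ s k hs hs2).trans ?_
          gcongr
    · rw [sum_const, nsmul_eq_mul]
      have : (univ : Finset (DirichletCharacter ℂ q)).card = q.totient := by
        rw [← DirichletCharacter.card_eq_totient_of_hasEnoughRootsOfUnity ℂ q, Nat.card_eq_fintype_card,
          Finset.card_univ]
      rw [this]
  have hEb : ‖iteratedDeriv k Ecor s‖ ≤ q.totient * (C2 * W) := by
    refine (H2 s hs).trans ?_
    have : C2 * (1 + ‖s‖) ≤ C2 * W := by
      gcongr; rw [hW]; nlinarith
    have h0 : 0 ≤ C2 * W := by positivity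
    nlinarith
  rw [norm_inv, Complex.norm_natCast, inv_mul_le_iff₀ hφ]
  refine (norm_add_le _ _).trans ((add_le_add hsum hEb).trans (le_of_eq ?_))
  rw [mul_assoc _ _ (1 + ‖s‖), ← hW]; ring

end PageProof

namespace PageProof
open Complex Filter Topology MeasureTheory
open DirichletCharacter
open ArithmeticFunction.vonMangoldt (residueClass)

/-- the smoothing weight -/
noncomputable def wf (t : ℝ) : ℂ := (Set.Ioc (0 : ℝ) 1).indicator (fun t : ℝ => (t : ℂ) ^ (0 : ℂ)) t
  - (2 : ℂ) • (Set.Ioc (0 : ℝ) 1).indicator (fun t : ℝ => (t : ℂ) ^ (1 : ℂ)) t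
  + (Set.Ioc (0 : ℝ) 1).indicator (fun t : ℝ => (t : ℂ) ^ (2 : ℂ)) t

lemma wf_eq {t : ℝ} (ht : 0 < t) : wf t = (((max (1 - t) 0) ^ 2 : ℝ) : ℂ) := by
  unfold wf
  by_cases h : t ≤ 1
  · have hm : t ∈ Set.Ioc (0 : ℝ) 1 := ⟨ht, h⟩
    rw [Set.indicator_of_mem hm, Set.indicator_of_mem hm, Set.indicator_of_mem hm,
      max_eq_left (by linarith), Complex.cpow_zero, Complex.cpow_one,
      show (2 : ℂ) = ((2 : ℕ) : ℂ) by norm_num, Complex.cpow_natCast]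
    push_cast; simp only [smul_eq_mul]; ring
  · have hm : t ∉ Set.Ioc (0 : ℝ) 1 := fun hm => h hm.2
    rw [Set.indicator_of_notMem hm, Set.indicator_of_notMem hm, Set.indicator_of_notMem hm,
      max_eq_right (by linarith)]
    simp

lemma wf_continuousAt {t : ℝ} (ht : 0 < t) : ContinuousAt wf t := by
  have h : (fun t : ℝ => (((max (1 - t) 0) ^ 2 : ℝ) : ℂ)) =ᶠ[𝓝 t] wf := by
    filter_upwards [lt_mem_nhds ht] with u hu
    exact (wf_eq hu).symm
  refine ContinuousAt.congr ?_ h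
  apply Continuous.continuousAt
  fun_prop

lemma wf_hasMellin {s : ℂ} (hs : 0 < s.re) : HasMellin wf s (2 / (s * (s + 1) * (s + 2))) := by
  have h0 := hasMellin_cpow_Ioc 0 (s := s) (by simpa using hs)
  have h1 := hasMellin_cpow_Ioc 1 (s := s) (by simp; linarith)
  have h2 := hasMellin_cpow_Ioc 2 (s := s) (by simp; linarith)
  have h1' := hasMellin_const_smul h1.1 (2 : ℂ)
  have h3 := hasMellin_sub h0.1 h1'.1
  have h4 := hasMellin_add h3.1 h2.1
  refine ⟨h4.1, ?_⟩
  have e := h4.2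
  rw [h3.2, h1'.2, h0.2, h1.2, h2.2] at e
  refine Eq.trans e ?_
  have n0 : s ≠ 0 := by rintro rfl; simp at hs
  have n1 : s + 1 ≠ 0 := norm_pos_iff.mp (by linarith [norm_lower_of_re (s := s) hs])
  have n2 : s + 2 ≠ 0 := by
    have := norm_lower_of_re (s := s + 1) (by simp; linarith)
    exact norm_pos_iff.mp (by rw [show s + 2 = s + 1 + 1 by ring]; linarith)
  rw [add_zero, smul_eq_mul]
  field_simp
  ring

lemma wf_mellin_bound {σ : ℝ} (hσ : 1 ≤ σ) (t : ℝ) :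
    ‖mellin wf (σ + t * I)‖ * (1 + ‖(σ + t * I : ℂ)‖) ≤ 4 * (1 + t ^ 2)⁻¹ := by
  set s : ℂ := σ + t * I with hs
  have hre : s.re = σ := by simp [hs]
  have him : s.im = t := by simp [hs]
  have hpos : 0 < s.re := by linarith
  rw [(wf_hasMellin hpos).2, norm_div, norm_mul, norm_mul]
  have hs1 : 1 ≤ ‖s‖ := by
    have := Complex.re_le_norm s
    linarith
  have hmono : ∀ c : ℝ, 0 ≤ c → ‖s‖ ≤ ‖s + c‖ := by
    intro c hc
    rw [Complex.norm_def, Complex.norm_def]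
    apply Real.sqrt_le_sqrt
    simp [normSq_apply]; nlinarith
  have h1 : ‖s‖ ≤ ‖s + 1‖ := by simpa using hmono 1 (by norm_num)
  have h2 : ‖s‖ ≤ ‖s + 2‖ := by simpa using hmono 2 (by norm_num)
  have hsq : 1 + t ^ 2 ≤ ‖s‖ ^ 2 := by
    rw [Complex.sq_norm, normSq_apply, hre, him]; nlinarith
  have : ‖(2 : ℂ)‖ / (‖s‖ * ‖s + 1‖ * ‖s + 2‖) * (1 + ‖s‖) ≤ 2 / (‖s‖ * ‖s‖ * ‖s‖) * (2 * ‖s‖) := by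
    rw [show ‖(2 : ℂ)‖ = 2 by simp]
    gcongr
    linarith
  refine this.trans ?_
  have e : 2 / (‖s‖ * ‖s‖ * ‖s‖) * (2 * ‖s‖) = 4 * (‖s‖ ^ 2)⁻¹ := by
    have : ‖s‖ ≠ 0 := by linarith
    field_simp; norm_num
  rw [e]
  gcongr

lemma wf_mellin_continuous {σ : ℝ} (hσ : 1 ≤ σ) : Continuous (fun t : ℝ => mellin wf (σ + t * I)) := by
  have e : (fun t : ℝ => mellin wf (σ + t * I)) = fun t : ℝ =>
      2 / (((σ : ℂ) + t * I) * ((σ + t * I) + 1) * ((σ + t * I) + 2)) := by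
    funext t
    exact (wf_hasMellin (by simp; linarith)).2
  rw [e]
  refine Continuous.div₀ continuous_const (by fun_prop) ?_
  intro t
  have hre : 0 < ((σ : ℂ) + t * I).re := by simp; linarith
  have n1 := norm_lower_of_re hre
  have n2 := norm_lower_of_re (s := (σ + t * I : ℂ) + 1) (by simp; linarith)
  have e2 : (σ + t * I : ℂ) + 2 = (σ + t * I : ℂ) + 1 + 1 := by ring
  refine mul_ne_zero (mul_ne_zero ?_ ?_) ?_
  · intro h; rw [h] at hre; simp at hre
  · exact norm_pos_iff.mp (by linarith)
  · rw [e2]; exact norm_pos_iff.mp (by linarith)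

lemma wf_mellin_bound' {σ : ℝ} (hσ : 1 ≤ σ) (t : ℝ) :
    ‖mellin wf (σ + t * I)‖ ≤ 4 * (1 + t ^ 2)⁻¹ := by
  have h := wf_mellin_bound hσ t
  have := norm_nonneg (mellin wf (σ + t * I))
  nlinarith [norm_nonneg (σ + t * I : ℂ)]

lemma wf_vertical {σ : ℝ} (hσ : 1 ≤ σ) : Integrable (fun t : ℝ => mellin wf (σ + t * I)) := by
  refine Integrable.mono' (integrable_inv_one_add_sq.const_mul 4)
    (wf_mellin_continuous hσ).aestronglyMeasurable (ae_of_all _ (wf_mellin_bound' hσ))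

lemma perron {α : ℕ → ℂ} {σ x M : ℝ} (hσ : 1 ≤ σ) (hx : 0 < x) (hsum : LSeriesSummable α σ)
    (hb : ∀ t : ℝ, ‖LSeries α (σ + t * I)‖ ≤ M * (1 + ‖(σ + t * I : ℂ)‖)) :
    ‖∑ n ∈ Icc 1 ⌊x⌋₊, α n * (((1 - n / x) ^ 2 : ℝ) : ℂ)‖ ≤ 2 * M * x ^ σ := by
  set F : ℕ → ℝ → ℂ := fun n t => (x : ℂ) ^ (σ + t * I : ℂ) * LSeries.term α (σ + t * I) n *
    mellin wf (σ + t * I) with hF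
  have hxC : (x : ℂ) ≠ 0 := by exact_mod_cast hx.ne'
  have hnx : ∀ t : ℝ, ‖(x : ℂ) ^ (σ + t * I : ℂ)‖ = x ^ σ := by
    intro t
    rw [Complex.norm_cpow_eq_rpow_re_of_pos hx]; simp
  have hterm : ∀ n (t : ℝ), ‖LSeries.term α (σ + t * I) n‖ = ‖LSeries.term α σ n‖ := by
    intro n t
    rw [LSeries.norm_term_eq, LSeries.norm_term_eq]; simp
  have hFb : ∀ n t, ‖F n t‖ ≤ x ^ σ * ‖LSeries.term α σ n‖ * (4 * (1 + t ^ 2)⁻¹) := by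
    intro n t
    rw [hF]; simp only [norm_mul, hnx, hterm]
    gcongr
    exact wf_mellin_bound' hσ t
  have hFc : ∀ n, Continuous (F n) := by
    intro n
    refine Continuous.mul (Continuous.mul ?_ ?_) (wf_mellin_continuous hσ)
    · exact Continuous.const_cpow (by fun_prop) (Or.inl hxC)
    · by_cases hn : n = 0
      · subst hn; simp only [LSeries.term_zero]; exact continuous_const
      · simp only [LSeries.term_of_ne_zero hn]
        refine Continuous.div₀ continuous_const ?_ ?_
        · exact Continuous.const_cpow (by fun_prop) (Or.inl (by exact_mod_cast hn))
        · intro t; rw [Complex.cpow_ne_zero_iff]; left; exact_mod_cast hn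
  have hFi : ∀ n, Integrable (F n) := fun n =>
    Integrable.mono' ((integrable_inv_one_add_sq.const_mul 4).const_mul _)
      (hFc n).aestronglyMeasurable (ae_of_all _ (hFb n))
  have hS : Summable fun n => ∫ t, ‖F n t‖ := by
    refine Summable.of_nonneg_of_le (fun n => integral_nonneg fun t => norm_nonneg _)
      (fun n => integral_mono (hFi n).norm ((integrable_inv_one_add_sq.const_mul 4).const_mul _) (hFb n)) ?_
    simp only [integral_const_mul]
    exact (hsum.norm.mul_left _).mul_right _
  have key := hasSum_integral_of_summable_integral_norm hFi hS
  have hval : ∀ n, n ≠ 0 → ∫ t, F n t = 2 * Real.pi * (α n * wf (n / x)) := by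
    intro n hn
    have hnpos : (0 : ℝ) < n := by positivity
    have hnC : (n : ℂ) ≠ 0 := by exact_mod_cast hn
    have hnx : 0 < (n : ℝ) / x := by positivity
    have hinv := mellinInv_mellin_eq σ wf hnx (wf_hasMellin (by simp; linarith)).1 (wf_vertical hσ)
      (wf_continuousAt hnx)
    rw [mellinInv] at hinv
    rw [← hinv, real_smul]
    have e : ∀ t : ℝ, F n t = α n * ((((n / x : ℝ) : ℂ)) ^ (-(σ + t * I : ℂ)) • mellin wf (σ + t * I)) := by
      intro t
      rw [hF]
      simp only [smul_eq_mul]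
      have h1 : (n : ℂ) ^ (σ + t * I : ℂ) = ((n / x : ℝ) : ℂ) ^ (σ + t * I : ℂ) * (x : ℂ) ^ (σ + t * I : ℂ) := by
        rw [← Complex.mul_cpow_ofReal_nonneg hnx.le hx.le]
        congr 1
        push_cast; field_simp
      have h2 : ((n / x : ℝ) : ℂ) ^ (σ + t * I : ℂ) ≠ 0 := by
        rw [Complex.cpow_ne_zero_iff]; left; exact_mod_cast hnx.ne'
      have h3 : (x : ℂ) ^ (σ + t * I : ℂ) ≠ 0 := by
        rw [Complex.cpow_ne_zero_iff]; left; exact hxC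
      rw [LSeries.term_of_ne_zero hn, Complex.cpow_neg, h1]
      field_simp
    simp only [e]
    rw [integral_const_mul]
    generalize (∫ t : ℝ, (((n / x : ℝ) : ℂ)) ^ (-(σ + t * I : ℂ)) • mellin wf (σ + t * I)) = J
    push_cast
    have : (Real.pi : ℂ) ≠ 0 := by exact_mod_cast Real.pi_ne_zero
    field_simp
  have hval0 : ∫ t, F 0 t = 0 := by simp [hF]
  have hfin : HasSum (fun n => ∫ t, F n t) (∑ n ∈ Icc 1 ⌊x⌋₊, ∫ t, F n t) := by
    apply hasSum_sum_of_ne_finset_zero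
    intro n hn
    by_cases h0 : n = 0
    · rw [h0, hval0]
    · rw [hval n h0, wf_eq (by positivity)]
      have : x < n := by
        by_contra h
        apply hn
        rw [mem_Icc]
        exact ⟨Nat.one_le_iff_ne_zero.mpr h0, Nat.le_floor (not_lt.mp h)⟩
      rw [max_eq_right (by rw [sub_nonpos, one_le_div hx]; exact this.le)]
      simp
  have heq := hfin.unique key
  have hsumeq : ∑ n ∈ Icc 1 ⌊x⌋₊, ∫ t, F n t
      = 2 * Real.pi * ∑ n ∈ Icc 1 ⌊x⌋₊, α n * (((1 - n / x) ^ 2 : ℝ) : ℂ) := by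
    rw [mul_sum]
    apply Finset.sum_congr rfl
    intro n hn
    rw [mem_Icc] at hn
    rw [hval n (by omega), wf_eq (by have : 0 < n := hn.1
                                     positivity)]
    have : (n : ℝ) ≤ x := (Nat.le_floor_iff hx.le).mp hn.2
    rw [max_eq_left (by rw [sub_nonneg, div_le_one hx]; exact this)]
  rw [hsumeq] at heq
  have hIntgr : ‖∫ t, ∑' n, F n t‖ ≤ ∫ t : ℝ, x ^ σ * M * (4 * (1 + t ^ 2)⁻¹) := by
    apply norm_integral_le_of_norm_le ((integrable_inv_one_add_sq.const_mul 4).const_mul _)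
    refine ae_of_all _ fun t => ?_
    have e : ∑' n, F n t = (x : ℂ) ^ (σ + t * I : ℂ) * LSeries α (σ + t * I) * mellin wf (σ + t * I) := by
      rw [hF, LSeries, ← tsum_mul_left, ← tsum_mul_right]
    rw [e, norm_mul, norm_mul, hnx]
    have h1 := hb t
    have h2 := wf_mellin_bound hσ t
    have hM : 0 ≤ M := by
      by_contra hM
      push Not at hM
      have := (norm_nonneg _).trans h1
      nlinarith [norm_nonneg (σ + t * I : ℂ)]
    calc _ ≤ x ^ σ * (M * (1 + ‖(σ + t * I : ℂ)‖)) * ‖mellin wf (σ + t * I)‖ := by gcongr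
      _ = x ^ σ * M * (‖mellin wf (σ + t * I)‖ * (1 + ‖(σ + t * I : ℂ)‖)) := by ring
      _ ≤ _ := by gcongr
  rw [← heq, norm_mul, integral_const_mul, integral_const_mul, integral_univ_inv_one_add_sq] at hIntgr
  have hpi : ‖(2 * Real.pi : ℂ)‖ = 2 * Real.pi := by
    rw [norm_mul, Complex.norm_real, Real.norm_of_nonneg Real.pi_pos.le]; simp
  rw [hpi] at hIntgr
  have := Real.pi_pos
  have h2 : 2 * Real.pi * ‖∑ n ∈ Icc 1 ⌊x⌋₊, α n * (((1 - n / x) ^ 2 : ℝ) : ℂ)‖ ≤ 2 * Real.pi * (2 * M * x ^ σ) := by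
    linarith
  exact le_of_mul_le_mul_left h2 (by positivity)

end PageProof

namespace PageProof
open Complex Filter Topology MeasureTheory
open DirichletCharacter
open ArithmeticFunction.vonMangoldt (residueClass)

lemma logMul_iter (f : ℕ → ℂ) (k n : ℕ) : (LSeries.logMul^[k] f) n = (Real.log n : ℂ) ^ k * f n := by
  induction k with
  | zero => simp
  | succ k ih =>
    rw [Function.iterate_succ_apply', LSeries.logMul, ih, ← Complex.natCast_log, pow_succ]; ring

lemma smooth_bound0 {θ : ℝ} (hθ : 0 < θ) (hθ1 : θ ≤ 1) (k : ℕ) : ∃ C : ℝ, 1 ≤ C ∧ ∀ (q : ℕ) [NeZero q]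
    (a : ZMod q), IsUnit a → ∀ x : ℝ, 3 ≤ x →
    |∑ n ∈ Icc 1 ⌊x⌋₊, af a n * Real.log n ^ k * (x - n) ^ 2| ≤ C * (q : ℝ) ^ θ * x ^ 3 := by
  obtain ⟨C, hC, H⟩ := F_iteratedDeriv hθ hθ1 k
  refine ⟨6 * C, by linarith, fun q _ a ha x hx => ?_⟩
  have hx0 : 0 < x := by linarith
  have hlog : 1 ≤ Real.log x := by
    rw [Real.le_log_iff_exp_le hx0]; linarith [Real.exp_one_lt_d9]
  set σ := 1 + 1 / Real.log x with hσ
  have hinv : 0 < 1 / Real.log x := by positivity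
  have hinv1 : 1 / Real.log x ≤ 1 := div_le_one_of_le₀ hlog (by linarith)
  have hσ1 : 1 < σ := by linarith
  have hσ2 : σ ≤ 2 := by linarith
  set f : ℕ → ℂ := fun n => ((af a n : ℝ) : ℂ) with hf
  have habs : ∀ s : ℂ, 1 < s.re → LSeries.abscissaOfAbsConv f < s.re := fun s hs =>
    (abscissa_af a).trans_lt (by exact_mod_cast hs)
  have hsum : LSeriesSummable (LSeries.logMul^[k] f) σ := by
    apply LSeriesSummable_of_abscissaOfAbsConv_lt_re
    rw [LSeries.absicssaOfAbsConv_logPowMul]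
    exact habs _ (by simpa using hσ1)
  have hp := perron (M := C * (q : ℝ) ^ θ) hσ1.le hx0 hsum (by
    intro t
    have hre : 1 < (σ + t * I : ℂ).re := by simpa using hσ1
    have h := H q a (σ + t * I) ha hre (by simpa using hσ2)
    rw [LSeries_iteratedDeriv k (habs _ hre), norm_mul, norm_pow, norm_neg, norm_one, one_pow, one_mul] at h
    exact h)
  have hxσ : x ^ σ ≤ 3 * x := by
    rw [hσ, Real.rpow_add hx0, Real.rpow_one, Real.rpow_def_of_pos hx0, mul_one_div_cancel (by linarith)]
    nlinarith [Real.exp_one_lt_d9]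
  have e : (((∑ n ∈ Icc 1 ⌊x⌋₊, af a n * Real.log n ^ k * (x - n) ^ 2 : ℝ)) : ℂ)
      = x ^ 2 * ∑ n ∈ Icc 1 ⌊x⌋₊, (LSeries.logMul^[k] f) n * (((1 - n / x) ^ 2 : ℝ) : ℂ) := by
    rw [mul_sum, Complex.ofReal_sum]
    apply Finset.sum_congr rfl
    intro n _
    rw [logMul_iter, hf]
    have : (x : ℂ) ≠ 0 := by exact_mod_cast hx0.ne'
    push_cast
    field_simp
  rw [← Real.norm_eq_abs, ← Complex.norm_real, e, norm_mul, norm_pow, Complex.norm_real,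
    Real.norm_of_nonneg hx0.le]
  calc _ ≤ x ^ 2 * (2 * (C * (q : ℝ) ^ θ) * (3 * x)) := by
        gcongr
        refine hp.trans ?_
        gcongr
    _ = _ := by ring

/-- truncated powers -/
noncomputable def tp (j : ℕ) (x : ℝ) (n : ℕ) : ℝ := if (n : ℝ) ≤ x then (x - n) ^ j else 0

lemma tp_nonneg (j : ℕ) (x : ℝ) (n : ℕ) : 0 ≤ tp j x n := by
  unfold tp; split_ifs with h
  · have : 0 ≤ x - n := by linarith
    positivity
  · exact le_rfl

lemma tp_mono (j : ℕ) {x y : ℝ} (h : x ≤ y) (n : ℕ) : tp j x n ≤ tp j y n := by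
  by_cases h1 : (n : ℝ) ≤ x
  · have h2 : (n : ℝ) ≤ y := by linarith
    simp only [tp, if_pos h1, if_pos h2]
    have : 0 ≤ x - n := by linarith
    gcongr
  · have : tp j x n = 0 := by simp [tp, h1]
    rw [this]; exact tp_nonneg _ _ _

lemma tp_lower (j : ℕ) (hj : j < 2) {x h : ℝ} (hh : 0 ≤ h) (n : ℕ) :
    (j + 1) * h * tp j x n ≤ tp (j + 1) (x + h) n - tp (j + 1) x n := by
  by_cases h1 : (n : ℝ) ≤ x
  · have h2 : (n : ℝ) ≤ x + h := by linarith
    simp only [tp, if_pos h1, if_pos h2]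
    interval_cases j
    · simp
    · norm_num; nlinarith
  · have h3 : tp j x n = 0 := by simp [tp, h1]
    have h4 := tp_mono (j + 1) (by linarith : x ≤ x + h) n
    rw [h3]; linarith

lemma tp_upper (j : ℕ) (hj : j < 2) {x h : ℝ} (hh : 0 ≤ h) (n : ℕ) :
    tp (j + 1) (x + h) n - tp (j + 1) x n ≤ (j + 1) * h * tp j (x + h) n := by
  by_cases h2 : (n : ℝ) ≤ x + h
  · by_cases h1 : (n : ℝ) ≤ x
    · simp only [tp, if_pos h1, if_pos h2]
      interval_cases j
      · simp
      · norm_num; nlinarith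
    · simp only [tp, if_neg h1, if_pos h2]
      interval_cases j
      · norm_num; linarith
      · norm_num; nlinarith
  · have h1 : ¬ (n : ℝ) ≤ x := by intro h; exact h2 (by linarith)
    simp [tp, h1, h2]

/-- smoothed sums -/
noncomputable def AS (β : ℕ → ℝ) (M j : ℕ) (x : ℝ) : ℝ := ∑ n ∈ Icc 1 M, β n * tp j x n

lemma AS_mono {β : ℕ → ℝ} (hβ : ∀ n, 0 ≤ β n) (M j : ℕ) {x y : ℝ} (h : x ≤ y) :
    AS β M j x ≤ AS β M j y := by
  unfold AS
  gcongr with n _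
  · exact hβ n
  · exact tp_mono j h n

lemma AS_lower {β : ℕ → ℝ} (hβ : ∀ n, 0 ≤ β n) (M j : ℕ) (hj : j < 2) {x h : ℝ} (hh : 0 ≤ h) :
    (j + 1) * h * AS β M j x ≤ AS β M (j + 1) (x + h) - AS β M (j + 1) x := by
  unfold AS
  rw [mul_sum, ← sum_sub_distrib]
  apply sum_le_sum
  intro n _
  have := mul_le_mul_of_nonneg_left (tp_lower j hj (x := x) hh n) (hβ n)
  linarith

lemma AS_upper {β : ℕ → ℝ} (hβ : ∀ n, 0 ≤ β n) (M j : ℕ) (hj : j < 2) {x h : ℝ} (hh : 0 ≤ h) :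
    AS β M (j + 1) (x + h) - AS β M (j + 1) x ≤ (j + 1) * h * AS β M j (x + h) := by
  unfold AS
  rw [mul_sum, ← sum_sub_distrib]
  apply sum_le_sum
  intro n _
  have := mul_le_mul_of_nonneg_left (tp_upper j hj (x := x) hh n) (hβ n)
  linarith

lemma AS_step {β γ : ℕ → ℝ} (hβ : ∀ n, 0 ≤ β n) (hγ : ∀ n, 0 ≤ γ n) (M j : ℕ) (hj : j < 2)
    {x h E D Y : ℝ} (hh : 0 < h) (hxY : x + h ≤ Y)
    (hE : ∀ y ≤ Y, |AS β M (j + 1) y - AS γ M (j + 1) y| ≤ E)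
    (hD : AS γ M j (x + h) - AS γ M j (x - h) ≤ D) :
    |AS β M j x - AS γ M j x| ≤ 2 * E / h + D := by
  have l1 := AS_lower hβ M j hj (x := x) hh.le
  have u1 := AS_upper hγ M j hj (x := x) hh.le
  have l2 := AS_lower hγ M j hj (x := x - h) hh.le
  have u2 := AS_upper hβ M j hj (x := x - h) hh.le
  rw [sub_add_cancel] at l2 u2
  have e1 := abs_le.mp (hE (x + h) hxY)
  have e2 := abs_le.mp (hE x (by linarith))
  have e3 := abs_le.mp (hE (x - h) (by linarith))
  have hE0 : 0 ≤ E := (abs_nonneg _).trans (hE x (by linarith))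
  have m1 := AS_mono hγ M j (by linarith : x ≤ x + h)
  have m2 := AS_mono hγ M j (by linarith : x - h ≤ x)
  set J : ℝ := (j + 1) * h with hJ
  have hJh : h ≤ J := by rw [hJ]; nlinarith [(Nat.cast_nonneg j : (0 : ℝ) ≤ j)]
  have hJ0 : 0 < J := by linarith
  have hEJ : 2 * E / J ≤ 2 * E / h := by gcongr
  have k1 : AS β M j x ≤ AS γ M j (x + h) + 2 * E / J := by
    rw [← sub_le_iff_le_add', le_div_iff₀ hJ0]
    nlinarith
  have k2 : AS γ M j (x - h) - 2 * E / J ≤ AS β M j x := by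
    rw [sub_le_iff_le_add, ← sub_le_iff_le_add', le_div_iff₀ hJ0]
    nlinarith
  rw [abs_le]
  constructor <;> linarith

lemma AS_zero_le {γ : ℕ → ℝ} {M : ℕ} {g y : ℝ} (hg0 : 0 ≤ g) (hg : ∀ n ∈ Icc 1 M, γ n ≤ g) (hy : 0 ≤ y) :
    AS γ M 0 y ≤ g * y := by
  have : AS γ M 0 y ≤ ∑ n ∈ Icc 1 ⌊y⌋₊, g := by
    unfold AS tp
    simp only [pow_zero, mul_ite, mul_one, mul_zero]
    rw [← sum_filter]
    calc _ ≤ ∑ n ∈ (Icc 1 M).filter (fun n : ℕ => (n : ℝ) ≤ y), g :=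
          sum_le_sum fun n hn => hg n (mem_filter.mp hn).1
      _ ≤ _ := by
        apply sum_le_sum_of_subset_of_nonneg
        · intro n hn
          rw [mem_filter, mem_Icc] at hn
          rw [mem_Icc]
          exact ⟨hn.1.1, Nat.le_floor hn.2⟩
        · intros; exact hg0
  refine this.trans ?_
  rw [sum_const, Nat.card_Icc, nsmul_eq_mul, mul_comm]
  have := Nat.floor_le hy
  simp only [Nat.add_sub_cancel]
  gcongr

lemma AS_zero_diff {γ : ℕ → ℝ} {M : ℕ} {g x h : ℝ} (hg0 : 0 ≤ g) (hg : ∀ n ∈ Icc 1 M, γ n ≤ g) (hh : 0 < h) :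
    AS γ M 0 (x + h) - AS γ M 0 (x - h) ≤ g * (2 * h + 1) := by
  have : AS γ M 0 (x + h) - AS γ M 0 (x - h) ≤ ∑ n ∈ Ioc ⌊x - h⌋ ⌊x + h⌋, g := by
    unfold AS tp
    simp only [pow_zero, mul_ite, mul_one, mul_zero]
    rw [← sum_sub_distrib]
    have e : ∀ n ∈ Icc 1 M, ((if (n : ℝ) ≤ x + h then γ n else 0) - (if (n : ℝ) ≤ x - h then γ n else 0))
      ≤ if (x - h < n ∧ (n : ℝ) ≤ x + h) then g else 0 := by
      intro n hn
      have := hg n hn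
      by_cases h1 : (n : ℝ) ≤ x - h
      · have h2 : (n : ℝ) ≤ x + h := by linarith
        have h3 : ¬ x - h < n := not_lt.mpr h1
        simp [h1, h2, h3]
      · by_cases h2 : (n : ℝ) ≤ x + h
        · have h3 : x - h < n := not_le.mp h1
          simp [h1, h2, h3, this]
        · simp [h1, h2]
    refine (sum_le_sum e).trans ?_
    rw [← sum_filter, sum_const, sum_const, nsmul_eq_mul, nsmul_eq_mul]
    gcongr
    apply Finset.card_le_card_of_injOn (fun n : ℕ => (n : ℤ))
    · intro n hn
      simp only [coe_filter, mem_Icc, Set.mem_ofPred_eq] at hn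
      simp only [coe_Ioc, Set.mem_Ioc]
      exact ⟨Int.floor_lt.mpr (by exact_mod_cast hn.2.1), Int.le_floor.mpr (by exact_mod_cast hn.2.2)⟩
    · intro a _ b _ hab
      simpa using hab
  refine this.trans ?_
  rw [sum_const, Int.card_Ioc, nsmul_eq_mul, mul_comm]
  gcongr
  have h1 := Int.floor_le (x + h)
  have h2 := Int.lt_floor_add_one (x - h)
  have h3 : ⌊x - h⌋ ≤ ⌊x + h⌋ := Int.floor_le_floor (by linarith)
  have h4 : (((⌊x + h⌋ - ⌊x - h⌋).toNat : ℕ) : ℝ) = ⌊x + h⌋ - ⌊x - h⌋ := by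
    have : (((⌊x + h⌋ - ⌊x - h⌋).toNat : ℤ) : ℝ) = ((⌊x + h⌋ - ⌊x - h⌋ : ℤ) : ℝ) := by
      rw [Int.toNat_of_nonneg (by omega)]
    push_cast at this
    exact_mod_cast this
  rw [h4]; linarith

end PageProof

namespace PageProof
open Complex Filter Topology MeasureTheory
open DirichletCharacter
open ArithmeticFunction.vonMangoldt (residueClass)

lemma inv_totient_le {q : ℕ} [NeZero q] : (q.totient : ℝ)⁻¹ ≤ 1 := by
  have : (1 : ℝ) ≤ q.totient := by exact_mod_cast Nat.totient_pos.mpr (NeZero.pos q)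
  exact inv_le_one_of_one_le₀ this

lemma smooth_bound {θ : ℝ} (hθ : 0 < θ) (hθ1 : θ ≤ 1) (k : ℕ) (hk : k ≠ 0) : ∃ C : ℝ, 1 ≤ C ∧
    ∀ (q : ℕ) [NeZero q] (a : ZMod q), IsUnit a → ∀ (M : ℕ) (y : ℝ), 3 ≤ M → y ≤ M →
    |∑ n ∈ Icc 1 M, af a n * Real.log n ^ k * tp 2 y n| ≤ C * (q : ℝ) ^ θ * (M : ℝ) ^ 3 := by
  obtain ⟨C, hC, H⟩ := smooth_bound0 hθ hθ1 k
  refine ⟨C, hC, fun q _ a ha M y hM hy => ?_⟩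
  have hq : (1 : ℝ) ≤ q := by exact_mod_cast NeZero.one_le
  have hqθ : 1 ≤ (q : ℝ) ^ θ := Real.one_le_rpow hq hθ.le
  have hM3 : (3 : ℝ) ≤ M := by exact_mod_cast hM
  by_cases h3 : 3 ≤ y
  · have e : ∑ n ∈ Icc 1 M, af a n * Real.log n ^ k * tp 2 y n
      = ∑ n ∈ Icc 1 ⌊y⌋₊, af a n * Real.log n ^ k * (y - n) ^ 2 := by
      unfold tp
      simp only [mul_ite, mul_zero]
      rw [← sum_filter]
      apply Finset.sum_congr _ (fun _ _ => rfl)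
      ext n
      rw [mem_filter, mem_Icc, mem_Icc, Nat.le_floor_iff (by linarith)]
      constructor
      · rintro ⟨⟨h1, _⟩, h2⟩; exact ⟨h1, h2⟩
      · rintro ⟨h1, h2⟩; exact ⟨⟨h1, by exact_mod_cast h2.trans hy⟩, h2⟩
    rw [e]
    refine (H q a ha y h3).trans ?_
    gcongr
  · push Not at h3
    have e : ∑ n ∈ Icc 1 M, af a n * Real.log n ^ k * tp 2 y n
      = af a 2 * Real.log 2 ^ k * tp 2 y 2 := by
      have := Finset.sum_eq_single_of_mem (s := Icc 1 M)
        (f := fun n : ℕ => af a n * Real.log n ^ k * tp 2 y n) 2 (by rw [mem_Icc]; omega) (by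
        intro n hn hn2
        rw [mem_Icc] at hn
        by_cases h1 : n = 1
        · subst h1; simp [hk]
        · have : (3 : ℝ) ≤ n := by exact_mod_cast (by omega : 3 ≤ n)
          have h' : ¬ (n : ℝ) ≤ y := by linarith
          simp [tp, h'])
      simpa using this
    rw [e]
    have h2 : |af a 2| ≤ 2 := by
      have r0 := ArithmeticFunction.vonMangoldt.residueClass_nonneg a 2
      have r1 := ArithmeticFunction.vonMangoldt.residueClass_le a 2
      have r2 := ArithmeticFunction.vonMangoldt_le_log (n := 2)
      have r3 := Real.log_two_lt_d9
      have r4 := inv_totient_le (q := q)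
      have r5 : 0 ≤ (q.totient : ℝ)⁻¹ := by positivity
      norm_num at r2
      unfold af
      rw [abs_le]; constructor <;> linarith
    have h4 : |Real.log 2 ^ k| ≤ 1 := by
      rw [abs_pow]
      apply pow_le_one₀ (abs_nonneg _)
      rw [abs_of_pos (Real.log_pos (by norm_num))]; linarith [Real.log_two_lt_d9]
    have h5 : |tp 2 y 2| ≤ 1 := by
      rw [abs_of_nonneg (tp_nonneg _ _ _)]
      unfold tp
      split_ifs with h
      · push_cast at h ⊢; nlinarith
      · norm_num
    rw [abs_mul, abs_mul]
    calc _ ≤ (2 : ℝ) * 1 * 1 := by gcongr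
      _ ≤ 1 * 1 * 3 ^ 3 := by norm_num
      _ ≤ _ := by gcongr

lemma one_le_log {N : ℕ} (hN : 3 ≤ N) : 1 ≤ Real.log N := by
  have h3 : (3 : ℝ) ≤ N := by exact_mod_cast hN
  rw [Real.le_log_iff_exp_le (by linarith)]; linarith [Real.exp_one_lt_d9]

lemma log_pow_le (m : ℕ) : ∃ C : ℝ, 0 < C ∧ ∀ N : ℕ, 3 ≤ N → Real.log N ^ m ≤ C * N := by
  refine ⟨m.factorial, by positivity, fun N hN => ?_⟩
  have h1 := one_le_log hN
  have h := Real.pow_div_factorial_le_exp (Real.log N) (by linarith) m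
  rw [Real.exp_log (by positivity), div_le_iff₀ (by positivity)] at h
  linarith

lemma main_bound {c : ℝ} (hc : 1 ≤ c) (B : ℕ) : ∃ C : ℝ, 1 ≤ C ∧ ∀ (N q : ℕ) [NeZero q]
    (a : ZMod q), 3 ≤ N → (q : ℝ) < Real.log N ^ c → IsUnit a → ∀ x : ℝ, x ≤ 2 * N →
    |∑ n ∈ Icc 1 (4 * N), af a n * Real.log n ^ (4 * B + 1) * tp 0 x n|
      ≤ C * N * Real.log N ^ (3 * B + 1) := by
  set k := 4 * B + 1 with hk
  obtain ⟨C, hC, H⟩ := smooth_bound (θ := 1 / c) (by positivity)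
    (div_le_one_of_le₀ hc (by linarith)) k (by omega)
  obtain ⟨C2, hC2, HL2⟩ := log_pow_le B
  set C1 := 2 * (64 * C) + 16 * 3 ^ k with hC1
  refine ⟨2 * C1 + 3 ^ k * (2 + C2), ?_, fun N q _ a hN hqr ha x hx => ?_⟩
  · have : (0 : ℝ) < 3 ^ k := by positivity
    nlinarith
  have hr := one_le_log hN
  set r := Real.log N with hr'
  have hr0 : 0 < r := by linarith
  have hq : (1 : ℝ) ≤ q := by exact_mod_cast NeZero.one_le
  have hN3 : (3 : ℝ) ≤ N := by exact_mod_cast hN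
  have hNp : (0 : ℝ) < N := by linarith
  have hqθ : (q : ℝ) ^ (1 / c) ≤ r := by
    calc (q : ℝ) ^ (1 / c) ≤ (r ^ c) ^ (1 / c) := by gcongr
      _ = r := by rw [← Real.rpow_mul hr0.le, mul_one_div_cancel (by linarith), Real.rpow_one]
  set β : ℕ → ℝ := fun n => residueClass a n * Real.log n ^ k with hβ
  set γ : ℕ → ℝ := fun n => (q.totient : ℝ)⁻¹ * Real.log n ^ k with hγ
  have hlogn : ∀ n : ℕ, 0 ≤ Real.log n := fun n => Real.log_natCast_nonneg n
  have hβ0 : ∀ n, 0 ≤ β n := fun n => mul_nonneg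
    (ArithmeticFunction.vonMangoldt.residueClass_nonneg a n) (pow_nonneg (hlogn n) k)
  have hγ0 : ∀ n, 0 ≤ γ n := fun n => mul_nonneg (by positivity) (pow_nonneg (hlogn n) k)
  set M := 4 * N with hM
  have hMr : (M : ℝ) = 4 * N := by rw [hM]; push_cast; ring
  have hdiff : ∀ j y, AS β M j y - AS γ M j y = ∑ n ∈ Icc 1 M, af a n * Real.log n ^ k * tp j y n := by
    intro j y
    unfold AS
    rw [← sum_sub_distrib]
    apply Finset.sum_congr rfl
    intro n _
    simp only [hβ, hγ, af]; ring
  have hE2 : ∀ y ≤ (M : ℝ), |AS β M (1 + 1) y - AS γ M (1 + 1) y| ≤ 64 * C * r * N ^ 3 := by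
    intro y hy
    rw [hdiff]
    refine (H q a ha M y (by omega) hy).trans ?_
    rw [hMr]
    calc C * (q : ℝ) ^ (1 / c) * (4 * N : ℝ) ^ 3 ≤ C * r * (4 * N : ℝ) ^ 3 := by gcongr
      _ = _ := by ring
  set g := (3 * r) ^ k with hg
  have hg0 : 0 ≤ g := by positivity
  have hgb : ∀ n ∈ Icc 1 M, γ n ≤ g := by
    intro n hn
    rw [mem_Icc] at hn
    have hn1 : (1 : ℝ) ≤ n := by exact_mod_cast hn.1
    have hn2 : (n : ℝ) ≤ 4 * N := by rw [← hMr]; exact_mod_cast hn.2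
    have hl : Real.log n ≤ 3 * r := by
      calc Real.log n ≤ Real.log (4 * N) := Real.log_le_log (by linarith) hn2
        _ = Real.log 4 + r := Real.log_mul (by norm_num) (by linarith)
        _ ≤ 3 * r := by
          have : Real.log 4 = 2 * Real.log 2 := by
            rw [show (4 : ℝ) = 2 ^ 2 by norm_num, Real.log_pow]; norm_num
          have := Real.log_two_lt_d9
          linarith
    calc γ n ≤ 1 * Real.log n ^ k := by
          rw [hγ]
          exact mul_le_mul_of_nonneg_right inv_totient_le (pow_nonneg (hlogn n) k)
      _ ≤ g := by rw [one_mul, hg]; exact pow_le_pow_left₀ (hlogn n) hl k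
  have hE1 : ∀ y ≤ 3 * (N : ℝ), |AS β M (0 + 1) y - AS γ M (0 + 1) y| ≤ C1 * N ^ 2 * r ^ (2 * B + 1) := by
    intro y hy
    set h := (N : ℝ) / r ^ (2 * B) with hh
    have hrB : 1 ≤ r ^ (2 * B) := one_le_pow₀ hr
    have hhN : h ≤ N := div_le_self hNp.le hrB
    have hh0 : 0 < h := by positivity
    have hD : AS γ M 1 (y + h) - AS γ M 1 (y - h) ≤ 2 * h * (g * (4 * N)) := by
      have u := AS_upper hγ0 M 0 (by norm_num) (x := y - h) (h := 2 * h) (by linarith)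
      rw [show y - h + 2 * h = y + h by ring] at u
      have m := AS_mono hγ0 M 0 (show y + h ≤ 4 * N by linarith)
      have z := AS_zero_le hg0 hgb (y := 4 * N) (by linarith)
      calc _ ≤ _ := u
        _ = 2 * h * AS γ M 0 (y + h) := by push_cast; ring
        _ ≤ _ := by gcongr; exact m.trans z
    have := AS_step hβ0 hγ0 M 1 (by norm_num) (x := y) (Y := M) hh0 (by rw [hMr]; linarith) hE2 hD
    refine this.trans ?_
    have e1 : 2 * (64 * C * r * N ^ 3) / h = 2 * (64 * C) * N ^ 2 * r ^ (2 * B + 1) := by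
      rw [hh]; field_simp; ring
    have e2 : 2 * h * (g * (4 * N)) = 8 * 3 ^ k * N ^ 2 * r ^ (2 * B + 1) := by
      rw [hh, hg, hk, mul_pow]
      field_simp
      ring
    rw [e1, e2, hC1]
    have : (0 : ℝ) ≤ 3 ^ k * N ^ 2 * r ^ (2 * B + 1) := by positivity
    linarith
  have hfinal : |AS β M 0 x - AS γ M 0 x| ≤ (2 * C1 + 3 ^ k * (2 + C2)) * N * r ^ (3 * B + 1) := by
    set h := (N : ℝ) / r ^ B with hh
    have hrB : 1 ≤ r ^ B := one_le_pow₀ hr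
    have hhN : h ≤ N := div_le_self hNp.le hrB
    have hh0 : 0 < h := by positivity
    have := AS_step hβ0 hγ0 M 0 (by norm_num) (x := x) (Y := 3 * N) hh0 (by linarith) hE1
      (AS_zero_diff hg0 hgb hh0)
    refine this.trans ?_
    have e1 : 2 * (C1 * N ^ 2 * r ^ (2 * B + 1)) / h = 2 * C1 * N * r ^ (3 * B + 1) := by
      rw [hh]; field_simp; ring
    have h2 : 1 ≤ C2 * h := by
      rw [hh, ← mul_div_assoc, one_le_div (by positivity)]
      exact HL2 N hN
    have e2 : g * (2 * h + 1) ≤ 3 ^ k * (2 + C2) * N * r ^ (3 * B + 1) := by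
      calc g * (2 * h + 1) ≤ g * (2 * h + C2 * h) := by gcongr
        _ = _ := by
          rw [hg, hh, mul_pow, hk]
          field_simp
          ring
    rw [e1]
    linarith
  rw [hdiff] at hfinal
  exact hfinal

end PageProof

namespace PageProof
open Complex Filter Topology MeasureTheory
open ArithmeticFunction.vonMangoldt (residueClass)

lemma abel_ident (f w : ℕ → ℝ) (m : ℕ) : ∑ i ∈ range (m + 1), f i * w i =
    w m * ∑ i ∈ range (m + 1), f i + ∑ i ∈ range m, (w i - w (i + 1)) * ∑ j ∈ range (i + 1), f j := by
  induction m with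
  | zero => simp [mul_comm]
  | succ m ih =>
    rw [sum_range_succ, ih, sum_range_succ (fun i => f i) (m + 1),
      sum_range_succ (fun i => (w i - w (i + 1)) * ∑ j ∈ range (i + 1), f j) m]
    ring

lemma abel_bound {f w : ℕ → ℝ} {D : ℝ} (m : ℕ) (hw : Antitone w) (hw0 : ∀ i, 0 ≤ w i)
    (hD : ∀ i ≤ m, |∑ j ∈ range i, f j| ≤ D) : |∑ i ∈ range m, f i * w i| ≤ D * w 0 := by
  have hD0 : 0 ≤ D := (abs_nonneg _).trans (hD 0 (Nat.zero_le _))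
  cases m with
  | zero => simp only [range_zero, sum_empty, abs_zero]; exact mul_nonneg hD0 (hw0 0)
  | succ m =>
    rw [abel_ident]
    have h2 : |∑ i ∈ range m, (w i - w (i + 1)) * ∑ j ∈ range (i + 1), f j| ≤
        ∑ i ∈ range m, (w i - w (i + 1)) * D := by
      refine (abs_sum_le_sum_abs _ _).trans (sum_le_sum fun i hi => ?_)
      have hnn : 0 ≤ w i - w (i + 1) := sub_nonneg.mpr (hw (Nat.le_succ i))
      rw [abs_mul, abs_of_nonneg hnn]
      have := mem_range.mp hi
      exact mul_le_mul_of_nonneg_left (hD (i + 1) (by omega)) hnn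
    have h1 : |w m * ∑ i ∈ range (m + 1), f i| ≤ w m * D := by
      rw [abs_mul, abs_of_nonneg (hw0 m)]
      exact mul_le_mul_of_nonneg_left (hD (m + 1) le_rfl) (hw0 m)
    refine (abs_add_le _ _).trans ((add_le_add h1 h2).trans (le_of_eq ?_))
    rw [← sum_mul, sum_range_sub']; ring

lemma log_half {N n : ℕ} (hN : 3 ≤ N) (hn : Nat.sqrt N + 1 ≤ n) : Real.log N / 2 ≤ Real.log n := by
  have h : N < n * n := Nat.sqrt_lt.mp (by omega)
  have hn0 : 0 < n := by omega
  have h2 : (N : ℝ) ≤ (n : ℝ) ^ 2 := by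
    have : (N : ℝ) ≤ ((n * n : ℕ) : ℝ) := by exact_mod_cast h.le
    push_cast at this; nlinarith
  have := Real.log_le_log (by positivity) h2
  rw [Real.log_pow] at this
  push_cast at this; linarith

lemma big_part {c : ℝ} (hc : 1 ≤ c) (B : ℕ) : ∃ C : ℝ, 1 ≤ C ∧ ∀ (N q : ℕ) [NeZero q]
    (a : ZMod q), 3 ≤ N → (q : ℝ) < Real.log N ^ c → IsUnit a →
    |∑ n ∈ Ico (Nat.sqrt N + 1) (N + 1), af a n / Real.log n| ≤ C * (N / Real.log N ^ (B + 1)) := by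
  obtain ⟨C, hC, H⟩ := main_bound hc B
  refine ⟨2 * C * 2 ^ (4 * B + 2), ?_, fun N q _ a hN hq ha => ?_⟩
  · have : (1 : ℝ) ≤ 2 ^ (4 * B + 2) := one_le_pow₀ (by norm_num)
    nlinarith
  have hr := one_le_log hN
  set r := Real.log N with hr'
  have hr0 : 0 < r := by linarith
  set s := Nat.sqrt N with hs
  have hsN : s ≤ N := Nat.sqrt_le_self N
  have hs1 : 1 ≤ s := by rw [hs, Nat.le_sqrt]; omega
  set k := 4 * B + 1 with hk
  set u : ℕ → ℝ := fun n => af a n * Real.log n ^ k with hu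
  set E := C * N * r ^ (3 * B + 1) with hE
  have hP : ∀ m : ℕ, m ≤ N → |∑ n ∈ Icc 1 m, u n| ≤ E := by
    intro m hm
    have := H N q a hN hq ha m (by
      have : (m : ℝ) ≤ N := by exact_mod_cast hm
      have h0 : (0 : ℝ) ≤ N := by positivity
      linarith)
    have e : ∑ n ∈ Icc 1 (4 * N), af a n * Real.log n ^ k * tp 0 m n = ∑ n ∈ Icc 1 m, u n := by
      unfold tp
      simp only [pow_zero, mul_ite, mul_zero, mul_one, Nat.cast_le]
      rw [← sum_filter]
      apply Finset.sum_congr _ (fun _ _ => rfl)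
      ext n
      rw [mem_filter, mem_Icc, mem_Icc]
      omega
    rw [e] at this
    exact this
  have hlogpos : ∀ i, 0 < Real.log ((s + 1 + i : ℕ) : ℝ) := fun i =>
    Real.log_pos (by exact_mod_cast (by omega : 1 < s + 1 + i))
  have key := abel_bound (f := fun i => u (s + 1 + i)) (w := fun i => 1 / Real.log ((s + 1 + i : ℕ) : ℝ) ^ (k + 1))
    (D := 2 * E) (N - s) (by
      intro i j hij
      have h1 := hlogpos i
      have h2 : Real.log ((s + 1 + i : ℕ) : ℝ) ≤ Real.log ((s + 1 + j : ℕ) : ℝ) :=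
        Real.log_le_log (by positivity) (by exact_mod_cast (by omega : s + 1 + i ≤ s + 1 + j))
      exact one_div_le_one_div_of_le (pow_pos h1 _) (pow_le_pow_left₀ h1.le h2 _)) (by
      intro i
      have := hlogpos i
      positivity) (by
      intro i hi
      have e : ∑ j ∈ range i, u (s + 1 + j) = ∑ n ∈ Icc 1 (s + i), u n - ∑ n ∈ Icc 1 s, u n := by
        have := Finset.sum_Ico_eq_sum_range u (s + 1) (s + i + 1)
        rw [show s + i + 1 - (s + 1) = i by omega] at this
        rw [← this]
        have e1 : ∀ m, Icc 1 m = Ico 1 (m + 1) := by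
          intro m; ext n; rw [mem_Icc, mem_Ico]; omega
        rw [e1, e1, Finset.sum_Ico_eq_sub _ (by omega), Finset.sum_Ico_eq_sub _ (by omega),
          Finset.sum_Ico_eq_sub _ (by omega)]
        ring
      rw [e]
      have h1 := hP (s + i) (by omega)
      have h2 := hP s hsN
      refine (abs_sub _ _).trans ?_
      linarith)
  have e2 : ∑ n ∈ Ico (s + 1) (N + 1), af a n / Real.log n =
      ∑ i ∈ range (N - s), u (s + 1 + i) * (1 / Real.log ((s + 1 + i : ℕ) : ℝ) ^ (k + 1)) := by
    rw [Finset.sum_Ico_eq_sum_range, show N + 1 - (s + 1) = N - s by omega]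
    apply Finset.sum_congr rfl
    intro i _
    have := (hlogpos i).ne'
    rw [hu]
    simp only
    clear_value k
    rw [pow_succ, mul_assoc, div_eq_mul_inv]
    congr 1
    rw [mul_one_div, div_mul_cancel_left₀ (pow_ne_zero _ this)]
  rw [e2]
  refine key.trans ?_
  have h3 : r / 2 ≤ Real.log ((s + 1 + 0 : ℕ) : ℝ) := log_half hN (by omega)
  calc 2 * E * (1 / Real.log ((s + 1 + 0 : ℕ) : ℝ) ^ (k + 1)) ≤ 2 * E * (1 / (r / 2) ^ (k + 1)) := by
        have : 0 ≤ E := by positivity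
        gcongr
    _ = _ := by
      rw [hE, div_pow, show k + 1 = (3 * B + 1) + (B + 1) by omega,
        pow_add r (3 * B + 1) (B + 1)]
      field_simp

lemma af_abs_le {q : ℕ} [NeZero q] (a : ZMod q) {n : ℕ} (hn : 2 ≤ n) : |af a n / Real.log n| ≤ 3 := by
  have r0 := ArithmeticFunction.vonMangoldt.residueClass_nonneg a n
  have r1 := ArithmeticFunction.vonMangoldt.residueClass_le a n
  have r2 := ArithmeticFunction.vonMangoldt_le_log (n := n)
  have r4 := inv_totient_le (q := q)
  have r5 : 0 ≤ (q.totient : ℝ)⁻¹ := by positivity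
  have h2 : Real.log 2 ≤ Real.log n := Real.log_le_log (by norm_num) (by exact_mod_cast hn)
  have h3 := Real.log_two_gt_d9
  have hp : 0 < Real.log n := by linarith
  rw [abs_div, abs_of_pos hp, div_le_iff₀ hp]
  unfold af
  rw [abs_le]; constructor <;> linarith

lemma small_part {q : ℕ} [NeZero q] (a : ZMod q) (N : ℕ) :
    |∑ n ∈ Ico 2 (Nat.sqrt N + 1), af a n / Real.log n| ≤ 3 * Real.sqrt N := by
  have h1 : |∑ n ∈ Ico 2 (Nat.sqrt N + 1), af a n / Real.log n| ≤ ∑ n ∈ Ico 2 (Nat.sqrt N + 1), (3 : ℝ) :=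
    (abs_sum_le_sum_abs _ _).trans (sum_le_sum fun n hn => af_abs_le a (mem_Ico.mp hn).1)
  refine h1.trans ?_
  rw [sum_const, Nat.card_Ico, nsmul_eq_mul, mul_comm]
  gcongr
  refine le_trans ?_ (Real.nat_sqrt_le_real_sqrt (a := N))
  exact_mod_cast (by omega : Nat.sqrt N + 1 - 2 ≤ Nat.sqrt N)

lemma li_part {N : ℕ} (hN : 3 ≤ N) :
    |∑ n ∈ Ico 2 (N + 1), 1 / Real.log n - ∫ t in (2 : ℝ)..(N : ℝ), 1 / Real.log t| ≤ 2 := by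
  have hanti : AntitoneOn (fun t : ℝ => 1 / Real.log t) (Set.Icc ((2 : ℕ) : ℝ) (N : ℝ)) := by
    intro x hx y hy hxy
    have hx2 : (2 : ℝ) ≤ x := by exact_mod_cast hx.1
    exact one_div_le_one_div_of_le (Real.log_pos (by linarith)) (Real.log_le_log (by linarith) hxy)
  have h1 := hanti.integral_le_sum_Ico (by omega)
  have h2 := hanti.sum_le_integral_Ico (by omega)
  have e1 : ∑ n ∈ Ico 2 (N + 1), 1 / Real.log n = ∑ n ∈ Ico 2 N, 1 / Real.log n + 1 / Real.log N :=
    Finset.sum_Ico_succ_top (by omega) _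
  have e2 : ∑ n ∈ Ico 2 (N + 1), 1 / Real.log n = 1 / Real.log 2 + ∑ n ∈ Ico 2 N, 1 / Real.log ((n + 1 : ℕ) : ℝ) := by
    rw [Finset.sum_eq_sum_Ico_succ_bot (by omega), Finset.sum_Ico_add' (fun n : ℕ => 1 / Real.log (n : ℝ))]
    norm_num
  have h3 : 1 / Real.log 2 ≤ 2 := by
    have := Real.log_two_gt_d9
    rw [div_le_iff₀ (by linarith)]; linarith
  have h4 : 0 ≤ 1 / Real.log N := by have := one_le_log hN; positivity
  simp only [Nat.cast_ofNat] at h1 h2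
  rw [abs_le]
  constructor
  · rw [e1]; linarith
  · rw [e2]; linarith

lemma prime_part {N q l : ℕ} [NeZero q] (hN : 3 ≤ N) :
    |∑ n ∈ Ico 2 (N + 1), residueClass (l : ZMod q) n / Real.log n - (primesPiMod N q l : ℝ)|
      ≤ 4 * Real.sqrt N * Real.log N := by
  set f : ℕ → ℝ := fun n => residueClass (l : ZMod q) n / Real.log n with hf
  have e1 : ∑ n ∈ (Ico 2 (N + 1)).filter Nat.Prime, f n = (primesPiMod N q l : ℝ) := by
    have : ∀ n ∈ (Ico 2 (N + 1)).filter Nat.Prime, f n = if n % q = l % q then 1 else 0 := by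
      intro n hn
      have hp := (mem_filter.mp hn).2
      have hlog : Real.log n ≠ 0 := (Real.log_pos (by exact_mod_cast hp.one_lt)).ne'
      simp only [hf, residueClass, Set.indicator_apply, Set.mem_ofPred_eq,
        ZMod.natCast_eq_natCast_iff']
      split_ifs
      · rw [ArithmeticFunction.vonMangoldt_apply_prime hp, div_self hlog]
      · simp
    rw [sum_congr rfl this, ← sum_filter, sum_const, nsmul_eq_mul, mul_one, primesPiMod]
    congr 2
    ext n
    simp only [mem_filter, mem_Ico, mem_range]
    constructor
    · rintro ⟨⟨⟨_, h1⟩, h2⟩, h3⟩; exact ⟨h1, h2, h3⟩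
    · rintro ⟨h1, h2, h3⟩; exact ⟨⟨⟨h2.two_le, h1⟩, h2⟩, h3⟩
  have hnn : ∀ n ∈ Ico 2 (N + 1), 0 ≤ f n := fun n _ =>
    div_nonneg (ArithmeticFunction.vonMangoldt.residueClass_nonneg _ n) (Real.log_natCast_nonneg n)
  have e2 : ∑ n ∈ Ico 2 (N + 1), f n - (primesPiMod N q l : ℝ)
      = ∑ n ∈ (Ico 2 (N + 1)).filter (fun n => ¬ n.Prime), f n := by
    rw [← e1, ← sum_filter_add_sum_filter_not (Ico 2 (N + 1)) Nat.Prime]; ring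
  have hN1 : (1 : ℝ) ≤ N := by exact_mod_cast (by omega : 1 ≤ N)
  rw [e2, abs_of_nonneg (sum_nonneg fun n hn => hnn n (mem_filter.mp hn).1)]
  calc ∑ n ∈ (Ico 2 (N + 1)).filter (fun n => ¬ n.Prime), f n
      ≤ ∑ n ∈ (Ico 2 (N + 1)).filter (fun n => ¬ n.Prime), 2 * ArithmeticFunction.vonMangoldt n := by
        apply sum_le_sum
        intro n hn
        have hn2 := (mem_Ico.mp (mem_filter.mp hn).1).1
        have r1 := ArithmeticFunction.vonMangoldt.residueClass_le (l : ZMod q) n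
        have r0 : 0 ≤ ArithmeticFunction.vonMangoldt n := ArithmeticFunction.vonMangoldt_nonneg
        have h2 : Real.log 2 ≤ Real.log n := Real.log_le_log (by norm_num) (by exact_mod_cast hn2)
        have h3 := Real.log_two_gt_d9
        rw [hf]
        simp only
        rw [div_le_iff₀ (by linarith)]
        nlinarith
    _ ≤ ∑ n ∈ (Ioc 0 ⌊(N : ℝ)⌋₊).filter (fun n => ¬ n.Prime), 2 * ArithmeticFunction.vonMangoldt n := by
        apply sum_le_sum_of_subset_of_nonneg
        · intro n hn
          rw [mem_filter, mem_Ico] at hn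
          rw [mem_filter, mem_Ioc, Nat.floor_natCast]
          exact ⟨by omega, hn.2⟩
        · intro n _ _
          have r0 : 0 ≤ ArithmeticFunction.vonMangoldt n := ArithmeticFunction.vonMangoldt_nonneg
          linarith
    _ = 2 * (Chebyshev.psi N - Chebyshev.theta N) := by
        rw [Chebyshev.psi_sub_theta_eq_sum_not_prime, mul_sum]
    _ ≤ 2 * (2 * Real.sqrt N * Real.log N) := by
        gcongr
        exact Chebyshev.psi_sub_theta_le hN1
    _ = _ := by ring

lemma siegel_walfisz {c : ℝ} (hc : 1 ≤ c) : ∃ A : ℝ, 0 < A ∧ ∀ N q l : ℕ, 3 ≤ N → 0 < q →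
    (q : ℝ) < Real.log N ^ c → Nat.gcd q l = 1 →
    |(primesPiMod N q l : ℝ) - (1 / (Nat.totient q : ℝ)) * ∫ t in (2 : ℝ)..(N : ℝ), 1 / Real.log t| ≤
      A * N * Real.log N ^ (-c) / (Nat.totient q * Real.log N) := by
  set B := ⌈2 * c⌉₊ with hB
  obtain ⟨C, hC, H⟩ := big_part hc B
  obtain ⟨C2, hC2, H2⟩ := log_pow_le (2 * (B + 2))
  refine ⟨C + 9 * Real.sqrt C2, by positivity, fun N q l hN hq0 hq hgcd => ?_⟩
  have : NeZero q := ⟨hq0.ne'⟩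
  have ha : IsUnit (l : ZMod q) := (ZMod.isUnit_iff_coprime l q).mpr (Nat.Coprime.symm hgcd)
  have hr := one_le_log hN
  have hbig := H N q l hN hq ha
  have hsmall := small_part (l : ZMod q) N
  have hli := li_part hN
  have hpr := prime_part (q := q) (l := l) hN
  have hs1 : 1 ≤ Nat.sqrt N := by rw [Nat.le_sqrt]; omega
  have hsplit : ∑ n ∈ Ico 2 (N + 1), af (l : ZMod q) n / Real.log n
      = ∑ n ∈ Ico 2 (Nat.sqrt N + 1), af (l : ZMod q) n / Real.log n
        + ∑ n ∈ Ico (Nat.sqrt N + 1) (N + 1), af (l : ZMod q) n / Real.log n :=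
    (Finset.sum_Ico_consecutive _ (by omega) (by have := Nat.sqrt_le_self N; omega)).symm
  have haf : ∑ n ∈ Ico 2 (N + 1), af (l : ZMod q) n / Real.log n
      = ∑ n ∈ Ico 2 (N + 1), residueClass (l : ZMod q) n / Real.log n
        - (q.totient : ℝ)⁻¹ * ∑ n ∈ Ico 2 (N + 1), 1 / Real.log n := by
    rw [mul_sum, ← sum_sub_distrib]
    apply Finset.sum_congr rfl
    intro n _
    unfold af; ring
  have hφ1 : (1 : ℝ) ≤ q.totient := by exact_mod_cast Nat.totient_pos.mpr hq0
  have hφq : (q.totient : ℝ) ≤ q := by exact_mod_cast Nat.totient_le q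
  have hinv := inv_totient_le (q := q)
  have hinv0 : 0 ≤ (q.totient : ℝ)⁻¹ := by positivity
  set r := Real.log N with hr'
  have hr0 : 0 < r := by linarith
  have hNp : (1 : ℝ) ≤ N := by exact_mod_cast (by omega : 1 ≤ N)
  set T := (N : ℝ) / r ^ (B + 1) with hT
  have hsq1 : 1 ≤ Real.sqrt N := Real.one_le_sqrt.mpr hNp
  have hsr : Real.sqrt N * r ≤ Real.sqrt C2 * T := by
    have h := H2 N hN
    rw [mul_comm 2, pow_mul] at h
    have h' : r ^ (B + 2) ≤ Real.sqrt C2 * Real.sqrt N := by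
      rw [← Real.sqrt_mul hC2.le]
      exact Real.le_sqrt_of_sq_le h
    rw [hT, ← mul_div_assoc, le_div_iff₀ (by positivity)]
    calc Real.sqrt N * r * r ^ (B + 1) = Real.sqrt N * r ^ (B + 2) := by ring
      _ ≤ Real.sqrt N * (Real.sqrt C2 * Real.sqrt N) := by gcongr
      _ = Real.sqrt C2 * (Real.sqrt N * Real.sqrt N) := by ring
      _ = _ := by rw [Real.mul_self_sqrt (by linarith)]
  have hli' : |(q.totient : ℝ)⁻¹ * (∑ n ∈ Ico 2 (N + 1), 1 / Real.log n
      - ∫ t in (2 : ℝ)..(N : ℝ), 1 / Real.log t)| ≤ 2 := by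
    rw [abs_mul, abs_of_nonneg hinv0]
    calc _ ≤ 1 * (2 : ℝ) := by gcongr
      _ = 2 := by ring
  have htot : |(primesPiMod N q l : ℝ) - (1 / (Nat.totient q : ℝ)) * ∫ t in (2 : ℝ)..(N : ℝ), 1 / Real.log t|
      ≤ (C + 9 * Real.sqrt C2) * T := by
    have b1 := abs_le.mp hbig
    have b2 := abs_le.mp hsmall
    have b3 := abs_le.mp hli'
    have b4 := abs_le.mp hpr
    have b5 : Real.sqrt N ≤ Real.sqrt N * r := le_mul_of_one_le_right (by linarith) hr
    rw [hsplit] at haf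
    rw [mul_sub] at b3
    rw [one_div (q.totient : ℝ), abs_le]
    constructor <;> linarith
  refine htot.trans ?_
  have hTle : T ≤ N * r ^ (-c) / (q.totient * r) := by
    have h1 : r ^ (2 * c) ≤ r ^ B := by
      rw [← Real.rpow_natCast]
      exact Real.rpow_le_rpow_of_exponent_le hr (Nat.le_ceil _)
    have h2 : (q.totient : ℝ) ≤ r ^ c := by linarith
    rw [hT, Real.rpow_neg hr0.le, div_le_div_iff₀ (by positivity) (by positivity), pow_succ]
    have h3 : r ^ (2 * c) = r ^ c * r ^ c := by rw [two_mul, Real.rpow_add hr0]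
    have hrc : 0 < r ^ c := by positivity
    calc (N : ℝ) * (q.totient * r) ≤ N * (r ^ c * r) := by gcongr
      _ = N * (r ^ c)⁻¹ * (r ^ (2 * c) * r) := by rw [h3]; field_simp
      _ ≤ _ := by gcongr
  calc (C + 9 * Real.sqrt C2) * T ≤ (C + 9 * Real.sqrt C2) * (N * r ^ (-c) / (q.totient * r)) := by gcongr
    _ = _ := by ring

end PageProof

theorem page_theorem :
    ∀ ε₀ : ℝ, 0 < ε₀ → ε₀ < 1 → ∀ c : ℝ, 2 ≤ c →
      ∃ A : ℝ, 0 < A ∧ ∀ N : ℕ, 3 ≤ N →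
        ∃ q₀ : ℕ, 0 < q₀ ∧ Real.log N ^ ((2 : ℝ) - ε₀) ≤ (q₀ : ℝ) ∧
          ∀ q l : ℕ, 0 < q → (q : ℝ) < Real.log N ^ c → 0 < l → l < q →
            Nat.gcd q l = 1 → ¬ q₀ ∣ q →
            |(primesPiMod N q l : ℝ) -
                (1 / (Nat.totient q : ℝ)) * ∫ t in (2 : ℝ)..(N : ℝ), 1 / Real.log t| ≤
              A * N * Real.log N ^ (-c) / (Nat.totient q * Real.log N) := by
  intro ε₀ _ _ c hc
  obtain ⟨A, hA, H⟩ := PageProof.siegel_walfisz (c := c) (by linarith)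
  refine ⟨A, hA, fun N hN => ?_⟩
  refine ⟨⌈Real.log N ^ ((2 : ℝ) - ε₀)⌉₊ + 1, Nat.succ_pos _, ?_, ?_⟩
  · push_cast
    linarith [Nat.le_ceil (Real.log N ^ ((2 : ℝ) - ε₀))]
  · intro q l hq hqr _ _ hgcd _
    exact H N q l hN hq hqr hgcd
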